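/- arXiv:1603.04462 — 3 statements merged into one kernel-verified Lean document; each statement's English description precedes it below -/
import Mathlib

section
/- For every γ > 0 there exists n₀ such that the following holds: every 3-uniform hypergraph H on n > n₀ vertices with n even and minimum vertex degree δ₁(H) > (7/16 + γ)·C(n,2) contains a loose Hamilton cycle. -/
open Finset

/-- `H` (a `3`-uniform hypergraph on a vertex type `V` with `n` vertices) contains a loose
Hamilton cycle: there is a cyclic ordering `f : ZMod n → V` of the vertices such that the
`n/2` triples of consecutive vertices `{f (2j), f (2j+1), f (2j+2)}` are all edges of `H`. -/
def HasLooseHamCycle {V : Type} [DecidableEq V] (H : Finset (Finset V)) (n : ℕ) : Prop :=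
  ∃ f : ZMod n → V, Function.Bijective f ∧
    ∀ j : ℕ, j < n / 2 →
      ({f ((2 * j : ℕ) : ZMod n), f ((2 * j + 1 : ℕ) : ZMod n),
        f ((2 * j + 2 : ℕ) : ZMod n)} : Finset V) ∈ H

/-!
The proof is by absorption, and all paths are loose.

*Absorption.* If `7 / 16` of the pairs of vertices form an edge with `u`, then more than `5 / 8` of
the vertices `x` lie with `u` in linearly many edges. Hence any `u` and `v` share a quarter of all
vertices as such `x`, and many paths of two edges join `u` to `v`. So one can reserve a small set
`R` through which any two vertices can be connected, even when many of its vertices are forbidden.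
Cauchy–Schwarz applied to walks in links provides, for every pair outside a few exceptional
vertices, a positive proportion of all `8`-tuples that absorb the pair. Joining a few disjoint
tuples, and the exceptional vertices, gives a short path `P` that can swallow any small even set `U`
of vertices without changing its ends.

*Covering.* The rest is covered, up to a small proportion, by vertex-disjoint copies of
`K_{2s,s,s}`, in which a path misses only one vertex. Such a tiling comes from repeated improvement:
in a tiling by huge copies, let the clusters be their parts together with blocks of the uncovered
set. A triple of clusters is dense often enough for the reduced hypergraph to keep the degree bound
`7 / 16`, which by linear programming duality gives a fractional tiling by copies of `K_{2,1,1}`.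
Every cluster is given up partially and uniformly, so that a fixed proportion of the uncovered set
becomes covered.

The paths are linked through `R` to each other and to `P` into a cycle, and `P` absorbs the vertices
left over. Their number is even, because `n` is and a loose cycle has an even number of vertices.
-/

universe u

noncomputable section

open scoped Classical Function

/-! ### Loose paths -/

/-- A `3`-uniform hypergraph on `V`, as a symmetric ternary relation whose related triples have
distinct entries. Distinctness of two entries suffices, by symmetry. -/
structure ThreeGraph (V : Type*) where
  Adj : V → V → V → Prop
  swap_left : ∀ {a b c}, Adj a b c → Adj b a c
  swap_right : ∀ {a b c}, Adj a b c → Adj a c b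
  ne₁₂ : ∀ {a b c}, Adj a b c → a ≠ b

namespace ThreeGraph

variable {V : Type*} {G : ThreeGraph V} {a b c m p q u v w x : V} {S T : Finset V}

theorem Adj.rotate (h : G.Adj a b c) : G.Adj b c a :=
  G.swap_right (G.swap_left h)

theorem Adj.reverse (h : G.Adj a b c) : G.Adj c b a :=
  G.swap_left h.rotate

theorem Adj.ne₁₃ (h : G.Adj a b c) : a ≠ c :=
  G.ne₁₂ (G.swap_right h)

theorem Adj.ne₂₃ (h : G.Adj a b c) : b ≠ c :=
  G.ne₁₂ h.rotate

variable (G) in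
/-- `G.IsLoosePath u v S`: some loose path of `G` with end vertices `u` and `v` has vertex set `S`.
A single vertex is a loose path, and a path is extended at its first vertex by two new vertices. -/
inductive IsLoosePath : V → V → Finset V → Prop
  | nil (u : V) : IsLoosePath u u {u}
  | cons {u m v w : V} {S : Finset V} :
      G.Adj u m v → u ∉ S → m ∉ S → IsLoosePath v w S → IsLoosePath u w (insert u (insert m S))

namespace IsLoosePath

theorem left_mem (h : G.IsLoosePath u v S) : u ∈ S := by
  cases h <;> simp

theorem right_mem (h : G.IsLoosePath u v S) : v ∈ S := by
  induction h <;> simp [*]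

theorem of_adj (h : G.Adj u m v) : G.IsLoosePath u v {u, m, v} :=
  cons h (by simp [h.ne₁₃]) (by simp [h.ne₂₃]) (nil v)

theorem trans (hS : G.IsLoosePath u v S) (hT : G.IsLoosePath v w T)
    (hST : ∀ x ∈ S, x ∈ T → x = v) : G.IsLoosePath u w (S ∪ T) := by
  induction hS with
  | nil u => rwa [singleton_union, insert_eq_of_mem hT.left_mem]
  | @cons u m v' w' S e hu hm hp ih =>
    rw [insert_union, insert_union]
    refine cons e ?_ ?_ (ih hT fun x hx => hST x (by simp [hx]))
    · exact notMem_union.2 ⟨hu, fun h => hu (hST u (by simp) h ▸ hp.right_mem)⟩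
    · exact notMem_union.2 ⟨hm, fun h => hm (hST m (by simp) h ▸ hp.right_mem)⟩

theorem join (hS : G.IsLoosePath u v S) (hT : G.IsLoosePath p q T) (hST : Disjoint S T)
    (hvx : G.Adj v a x) (hxp : G.Adj x b p) (hab : a ≠ b)
    (hnew : Disjoint {a, x, b} (S ∪ T)) : G.IsLoosePath u q ({a, x, b} ∪ (S ∪ T)) := by
  simp only [disjoint_insert_left, disjoint_singleton_left, notMem_union] at hnew
  obtain ⟨⟨haS, haT⟩, ⟨hxS, hxT⟩, hbS, hbT⟩ := hnew
  have hvT : v ∉ T := disjoint_left.1 hST hS.right_mem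
  have hvb : v ≠ b := fun h => hbS (h ▸ hS.right_mem)
  have connector : G.IsLoosePath v q (insert v (insert a (insert x (insert b T)))) :=
    cons hvx (by simp [hvx.ne₁₃, hvb, hvT]) (by simp [hvx.ne₂₃, hab, haT]) (cons hxp hxT hbT hT)
  convert hS.trans connector fun y hyS hy => ?_ using 1
  · ext y
    have := hS.right_mem
    simp only [mem_union, mem_insert, mem_singleton]
    grind
  · have := disjoint_left.1 hST hyS
    simp only [mem_insert] at hy
    grind

theorem exists_vertex_sequence (h : G.IsLoosePath u v S) :
    ∃ (k : ℕ) (l : ℕ → V), l 0 = u ∧ l (2 * k) = v ∧ #S = 2 * k + 1 ∧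
      S = (range (2 * k + 1)).image l ∧
      ∀ j < k, G.Adj (l (2 * j)) (l (2 * j + 1)) (l (2 * j + 2)) := by
  induction h with
  | nil u => exact ⟨0, fun _ => u, by simp⟩
  | @cons u m v w S e hu hm hp ih =>
    obtain ⟨k, l, hl0, hlk, hcard, hS, hl⟩ := ih
    let l' : ℕ → V := fun
      | 0 => u
      | 1 => m
      | i + 2 => l i
    refine ⟨k + 1, l', rfl, hlk, ?_, ?_, ?_⟩
    · rw [card_insert_of_notMem (by simp [G.ne₁₂ e, hu]), card_insert_of_notMem hm, hcard]
      ring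
    · rw [show 2 * (k + 1) + 1 = 2 * k + 1 + 1 + 1 by ring, range_eq_Ico,
        ← insert_Ico_add_one_left_eq_Ico (by lia), ← insert_Ico_add_one_left_eq_Ico (by lia),
        image_insert, image_insert, hS]
      congr 2
      rw [show Ico (0 + 1 + 1) (2 * k + 1 + 1 + 1) = (range (2 * k + 1)).image (· + 2) by
        rw [range_eq_Ico, image_add_right_Ico], image_image]
      rfl
    · rintro (_ | j) hj
      · subst hl0
        exact e
      · exact hl j (by lia)

theorem odd_card (h : G.IsLoosePath u v S) : Odd #S :=
  let ⟨k, _, _, _, hk, _⟩ := h.exists_vertex_sequence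
  ⟨k, hk⟩

end IsLoosePath

variable (G) in
/-- The relational form of `HasLooseHamCycle`, for the number of vertices of `G`. -/
def HasLooseHamiltonCycle [Fintype V] : Prop :=
  ∃ f : ZMod (Fintype.card V) → V, Function.Bijective f ∧ ∀ j < Fintype.card V / 2,
    G.Adj (f ((2 * j : ℕ) : ZMod _)) (f ((2 * j + 1 : ℕ) : ZMod _)) (f ((2 * j + 2 : ℕ) : ZMod _))

theorem IsLoosePath.hasLooseHamiltonCycle [Fintype V] (h : G.IsLoosePath u v S) (hm : m ∉ S)
    (hmS : insert m S = univ) (e : G.Adj v m u) : G.HasLooseHamiltonCycle := by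
  obtain ⟨k, l, rfl, rfl, hcard, hS, hl⟩ := h.exists_vertex_sequence
  have hn : Fintype.card V = 2 * k + 2 := by
    rw [← card_univ, ← hmS, card_insert_of_notMem hm, hcard]
  rw [HasLooseHamiltonCycle, hn]
  have hval (i : ℕ) (hi : i < 2 * k + 2) : (i : ZMod (2 * k + 2)).val = i := ZMod.val_cast_of_lt hi
  refine ⟨fun i => if i.val = 2 * k + 1 then m else l i.val, ?_, fun j hj => ?_⟩
  · refine (Fintype.bijective_iff_surjective_and_card _).2 ⟨fun y => ?_, by rw [hn, ZMod.card]⟩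
    have hy : y ∈ insert m S := hmS ▸ mem_univ y
    simp only [hS, mem_insert, mem_image, mem_range] at hy
    obtain rfl | ⟨i, hi, rfl⟩ := hy
    · exact ⟨((2 * k + 1 : ℕ) : ZMod _), by dsimp only; rw [hval _ (by lia), if_pos rfl]⟩
    · exact ⟨(i : ZMod _), by dsimp only; rw [hval i (by lia), if_neg (by lia)]⟩
  · simp only [hval (2 * j) (by lia), hval (2 * j + 1) (by lia)]
    obtain hjk | rfl : j < k ∨ j = k := by lia
    · rw [hval (2 * j + 2) (by lia), if_neg (by lia), if_neg (by lia), if_neg (by lia)]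
      exact hl j hjk
    · rw [ZMod.natCast_self, ZMod.val_zero, if_neg (by lia), if_pos rfl, if_neg (by lia)]
      exact e

variable (G) in
/-- The set `W` robustly connects `G`: however `M` vertices are forbidden, any `u` and `v` are
joined by two edges `uax` and `xbv` whose vertices `a`, `x`, `b` lie in `W` and are not
forbidden. -/
def RobustlyConnects (W : Finset V) (M : ℕ) : Prop :=
  ∀ (u v : V) (F : Finset V), #F ≤ M → ∃ a x b, ({a, x, b} : Finset V) ⊆ W ∧
    Disjoint {a, x, b} F ∧ a ≠ b ∧ G.Adj u a x ∧ G.Adj x b v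

/- The connecting vertices `C` are chosen from the end vertices of the paths alone, before the
vertex sets `S i` of the paths are known. The absorbing path needs this: its segments can be
replaced by segments with the same ends. -/
theorem RobustlyConnects.exists_chain {σ : Type*} {W : Finset V} {M : ℕ}
    (hW : G.RobustlyConnects W M) (u v : σ → V) {J : Finset σ} (hJ : J.Nonempty)
    (hM : 3 * #J ≤ M) :
    ∃ (C : Finset V) (p q : V), C ⊆ W ∧ #C ≤ 3 * #J ∧ ∀ S : σ → Finset V,
      (∀ i ∈ J, G.IsLoosePath (u i) (v i) (S i)) → (J : Set σ).PairwiseDisjoint S →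
      (∀ i ∈ J, Disjoint (S i) C) → G.IsLoosePath p q (C ∪ J.biUnion S) := by
  induction hJ using Finset.Nonempty.cons_induction with
  | singleton i => exact ⟨∅, u i, v i, by simp, by simp, fun S h _ _ => by simpa using h i⟩
  | cons i J hi _ ih =>
    rw [card_cons] at hM
    obtain ⟨C, p, q, hCW, hCcard, hC⟩ := ih (by lia)
    obtain ⟨a, x, b, hN, hNC, hab, hvx, hxp⟩ := hW (v i) p C (by lia)
    refine ⟨{a, x, b} ∪ C, u i, q, union_subset hN hCW, ?_, fun S hS hdisj hSC => ?_⟩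
    · have := card_union_le {a, x, b} C
      have := card_le_three (a := a) (b := x) (c := b)
      rw [card_cons]
      lia
    simp only [disjoint_union_right, forall_mem_cons] at hSC
    rw [coe_cons, Set.pairwiseDisjoint_insert] at hdisj
    have tail : G.IsLoosePath p q (C ∪ J.biUnion S) :=
      hC S (fun j hj => hS j (mem_cons_of_mem hj)) hdisj.1 fun j hj => (hSC.2 j hj).2
    have hi_tail : Disjoint (S i) (C ∪ J.biUnion S) := by
      rw [disjoint_union_right, disjoint_biUnion_right]
      exact ⟨hSC.1.2, fun j hj => hdisj.2 j hj fun h => hi (h ▸ hj)⟩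
    have hN_new : Disjoint {a, x, b} (S i ∪ (C ∪ J.biUnion S)) := by
      simp only [disjoint_union_right, disjoint_biUnion_right]
      exact ⟨hSC.1.1.symm, hNC, fun j hj => (hSC.2 j hj).1.symm⟩
    have := (hS i (mem_cons_self i J)).join tail hi_tail hvx hxp hab hN_new
    rwa [cons_eq_insert, biUnion_insert, union_assoc, union_left_comm C]

end ThreeGraph

/-! ### Selecting disjoint tuples -/

section DisjointTuples

variable {ι V κ : Type*} [Fintype ι] [Fintype V]

theorem card_filter_apply_mem_mul_card_le (j : ι) (f : (ι → V) → Finset V)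
    (hf : ∀ t v, f (Function.update t j v) = f t) {y : ℕ} (hy : ∀ t, #(f t) ≤ y) :
    #{t | t j ∈ f t} * Fintype.card V ≤ y * Fintype.card V ^ Fintype.card ι := by
  have swap := card_le_card_of_injOn (s := ({t | t j ∈ f t} : Finset (ι → V)) ×ˢ (univ : Finset V))
    (t := (univ : Finset (ι → V)).sigma f) (fun p => ⟨Function.update p.1 j p.2, p.1 j⟩)
    (fun p hp => by simpa [hf] using hp) (by
      rintro ⟨t, v⟩ - ⟨t', v'⟩ - h
      simp only [Sigma.mk.injEq, heq_eq_eq] at h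
      have hv : v = v' := by simpa using congrFun h.1 j
      have ht : t = t' :=
        calc t = Function.update (Function.update t j v) j (t j) := by simp
          _ = Function.update (Function.update t' j v') j (t' j) := by rw [h.1, h.2]
          _ = t' := by simp
      rw [ht, hv])
  rw [card_product, card_univ, card_sigma] at swap
  calc _ ≤ ∑ t : ι → V, #(f t) := swap
    _ ≤ ∑ _t : ι → V, y := sum_le_sum fun t _ => hy t
    _ = _ := by simp [mul_comm]

theorem card_not_injective_or_meets_mul_card_le (Y : Finset V) :
    #{t : ι → V | ¬ (Function.Injective t ∧ ∀ j, t j ∉ Y)} * Fintype.card V ≤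
      Fintype.card ι * (Fintype.card ι + #Y) * Fintype.card V ^ Fintype.card ι := by
  let others (j : ι) (t : ι → V) : Finset V := (univ.erase j).image t ∪ Y
  have hothers (j : ι) (t : ι → V) (v : V) : others j (Function.update t j v) = others j t := by
    refine congrArg (· ∪ Y) (image_congr fun i hi => Function.update_of_ne ?_ _ _)
    simpa using hi
  have hcard (j : ι) (t : ι → V) : #(others j t) ≤ Fintype.card ι + #Y :=
    (card_union_le _ _).trans (Nat.add_le_add_right (card_image_le.trans (card_erase_le)) _)
  have cover : ({t | ¬ (Function.Injective t ∧ ∀ j, t j ∉ Y)} : Finset (ι → V)) ⊆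
      univ.biUnion fun j => {t | t j ∈ others j t} := by
    intro t ht
    simp only [mem_filter_univ, mem_biUnion, mem_univ, true_and, others, mem_union, mem_image,
      mem_erase, and_true] at ht ⊢
    by_contra! h
    exact ht ⟨fun i j hij => by_contra fun hne => (h j).1 i hne hij, fun j => (h j).2⟩
  calc _ ≤ (∑ j, #{t | t j ∈ others j t}) * Fintype.card V :=
        Nat.mul_le_mul_right _ ((card_le_card cover).trans card_biUnion_le)
    _ ≤ ∑ _j : ι, (Fintype.card ι + #Y) * Fintype.card V ^ Fintype.card ι := by
        rw [sum_mul]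
        exact sum_le_sum fun j _ =>
          card_filter_apply_mem_mul_card_le j (others j) (hothers j) (hcard j)
    _ = _ := by rw [sum_const, card_univ, smul_eq_mul, mul_assoc]

theorem exists_mem_sum_halved_le {α : Type*} [DecidableEq α] {A : Finset α} (hA : A.Nonempty)
    {I : Finset κ} {good : κ → Finset α} {c : ℝ} {w : κ → ℝ} (hw : ∀ i ∈ I, 0 ≤ w i)
    (hgood : ∀ i ∈ I, c * #A ≤ #{t ∈ A | t ∈ good i}) :
    ∃ t ∈ A, ∑ i ∈ I, w i * (if t ∈ good i then (1 / 2 : ℝ) else 1) ≤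
      (1 - c / 2) * ∑ i ∈ I, w i := by
  apply exists_le_of_sum_le hA
  rw [sum_comm, sum_const, nsmul_eq_mul, ← mul_assoc, mul_sum]
  refine sum_le_sum fun i hi => ?_
  rw [← mul_sum, mul_comm]
  refine mul_le_mul_of_nonneg_right ?_ (hw i hi)
  have halved (t : α) : (if t ∈ good i then (1 / 2 : ℝ) else 1) =
      1 - (1 / 2) * (if t ∈ good i then (1 : ℝ) else 0) := by split_ifs <;> norm_num
  simp only [halved]
  rw [sum_sub_distrib, ← mul_sum, sum_boole, sum_const, nsmul_eq_mul, mul_one]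
  linarith [hgood i hi]

theorem exists_sum_halved_le_of_mostly {α : Type*} [Fintype α] [DecidableEq α] [Nonempty α]
    {p : α → Prop} [DecidablePred p] {I : Finset κ} {good : κ → Finset α} {c : ℝ}
    (hc : 0 ≤ c) (hc1 : c ≤ 1)
    (hp : #{t | ¬ p t} ≤ c / 2 * Fintype.card α)
    (hgood : ∀ i ∈ I, c * Fintype.card α ≤ #(good i)) {w : κ → ℝ} (hw : ∀ i ∈ I, 0 ≤ w i) :
    ∃ t, p t ∧ ∑ i ∈ I, w i * (if t ∈ good i then (1 / 2 : ℝ) else 1) ≤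
      (1 - c / 4) * ∑ i ∈ I, w i := by
  have hcard : (0 : ℝ) < Fintype.card α := Nat.cast_pos.2 Fintype.card_pos
  have hsum : (#{t | p t} + #{t | ¬ p t} : ℝ) = Fintype.card α :=
    mod_cast card_filter_add_card_filter_not (s := univ) p
  have hne : ({t | p t} : Finset α).Nonempty := by
    have : (0 : ℝ) < #{t | p t} := by nlinarith
    exact card_pos.1 (mod_cast this)
  have hmost (i : κ) (hi : i ∈ I) :
      c / 2 * #{t | p t} ≤ #{t ∈ ({t | p t} : Finset α) | t ∈ good i} := by
    have split : #(good i) ≤ #{t ∈ ({t | p t} : Finset α) | t ∈ good i} + #{t | ¬ p t} := by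
      refine (card_le_card fun t ht => ?_).trans (card_union_le _ _)
      by_cases h : p t <;> simp [h, ht]
    have split' : (#(good i) : ℝ) ≤
        #{t ∈ ({t | p t} : Finset α) | t ∈ good i} + #{t | ¬ p t} := mod_cast split
    have : c / 2 * #{t | p t} ≤ c / 2 * Fintype.card α := by
      gcongr
      exact card_le_univ _
    linarith [hgood i hi]
  obtain ⟨t, ht, hle⟩ := exists_mem_sum_halved_le hne hw hmost
  exact ⟨t, (mem_filter_univ t).1 ht, hle.trans_eq (by ring)⟩

theorem exists_injective_tuple_sum_halved_le [Nonempty ι] {c : ℝ} (hc : 0 < c) (hc1 : c ≤ 1)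
    {I : Finset κ} {good : κ → Finset (ι → V)}
    (hgood : ∀ i ∈ I, c * (Fintype.card V : ℝ) ^ Fintype.card ι ≤ #(good i)) {Y : Finset V}
    (hY : 2 * (Fintype.card ι * (Fintype.card ι + #Y) : ℝ) ≤ c * Fintype.card V)
    {w : κ → ℝ} (hw : ∀ i ∈ I, 0 ≤ w i) :
    ∃ t : ι → V, (Function.Injective t ∧ ∀ j, t j ∉ Y) ∧
      ∑ i ∈ I, w i * (if t ∈ good i then (1 / 2 : ℝ) else 1) ≤ (1 - c / 4) * ∑ i ∈ I, w i := by
  have : (0 : ℝ) < Fintype.card ι := Nat.cast_pos.2 Fintype.card_pos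
  have hV : (0 : ℝ) < Fintype.card V := pos_of_mul_pos_right (hY.trans_lt' (by positivity)) hc.le
  have : Nonempty V := Fintype.card_pos_iff.1 (mod_cast hV)
  have hcard : (Fintype.card (ι → V) : ℝ) = (Fintype.card V : ℝ) ^ Fintype.card ι := by
    rw [Fintype.card_fun, Nat.cast_pow]
  refine exists_sum_halved_le_of_mostly hc.le hc1 ?_ (fun i hi => hcard ▸ hgood i hi) hw
  have count : (#{t : ι → V | ¬ (Function.Injective t ∧ ∀ j, t j ∉ Y)} * Fintype.card V : ℝ) ≤
      Fintype.card ι * (Fintype.card ι + #Y) * (Fintype.card V : ℝ) ^ Fintype.card ι :=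
    mod_cast card_not_injective_or_meets_mul_card_le (ι := ι) Y
  rw [hcard]
  refine le_of_mul_le_mul_right (count.trans ?_) hV
  linarith [mul_le_mul_of_nonneg_right hY
    (by positivity : (0 : ℝ) ≤ (Fintype.card V : ℝ) ^ Fintype.card ι)]

/- Each tuple is chosen so as to decrease the potential `∑ i, 2 ^ (-#{t ∈ F | t ∈ good i})` by a
constant factor; this replaces a random choice of `F`. -/
theorem exists_disjoint_tuples_potential_le [Nonempty ι] {c : ℝ} (hc : 0 < c) (hc1 : c ≤ 1)
    {I : Finset κ} {good : κ → Finset (ι → V)}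
    (hgood : ∀ i ∈ I, c * (Fintype.card V : ℝ) ^ Fintype.card ι ≤ #(good i)) {X : Finset V} (k : ℕ)
    (hk : 2 * (Fintype.card ι * (Fintype.card ι + #X + k * Fintype.card ι) : ℝ) ≤
      c * Fintype.card V) :
    ∃ F : Finset (ι → V), #F ≤ k ∧ (∀ t ∈ F, Function.Injective t ∧ ∀ j, t j ∉ X) ∧
      (F : Set (ι → V)).PairwiseDisjoint (fun t => univ.image t) ∧
      ∑ i ∈ I, (1 / 2 : ℝ) ^ #{t ∈ F | t ∈ good i} ≤ (1 - c / 4) ^ k * #I := by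
  induction k with
  | zero => exact ⟨∅, by simp⟩
  | succ k ih =>
    push_cast at hk
    have : (0 : ℝ) ≤ Fintype.card ι := Nat.cast_nonneg _
    obtain ⟨F, hFk, hFX, hdisj, hpot⟩ := ih (by nlinarith)
    set Y := X ∪ F.biUnion fun t => univ.image t
    have hY : (#Y : ℝ) ≤ #X + k * Fintype.card ι := by
      have : #Y ≤ #X + #F * Fintype.card ι :=
        (card_union_le _ _).trans (Nat.add_le_add_left
          (card_biUnion_le_card_mul _ _ _ fun t _ => card_image_le) _)
      exact mod_cast this.trans (Nat.add_le_add_left (Nat.mul_le_mul_right _ hFk) _)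
    obtain ⟨t, ⟨hinj, htY⟩, ht⟩ := exists_injective_tuple_sum_halved_le hc hc1 hgood (Y := Y)
      (by nlinarith) (w := fun i => (1 / 2 : ℝ) ^ #{t ∈ F | t ∈ good i}) fun i _ => by positivity
    simp only [Y, mem_union, not_or, mem_biUnion, not_exists, not_and] at htY
    have htF : t ∉ F := fun h =>
      (htY (Classical.arbitrary ι)).2 t h (mem_image_of_mem t (mem_univ _))
    refine ⟨insert t F, (card_insert_le _ _).trans (by lia), ?_, ?_, ?_⟩
    · exact (forall_mem_insert ..).2 ⟨⟨hinj, fun j => (htY j).1⟩, hFX⟩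
    · rw [coe_insert, Set.pairwiseDisjoint_insert]
      refine ⟨hdisj, fun t' ht' _ => disjoint_left.2 fun y hy => ?_⟩
      obtain ⟨j, -, rfl⟩ := mem_image.1 hy
      exact (htY j).2 t' ht'
    · calc _ = ∑ i ∈ I, (1 / 2 : ℝ) ^ #{t ∈ F | t ∈ good i} *
            (if t ∈ good i then (1 / 2 : ℝ) else 1) := by
            refine sum_congr rfl fun i _ => ?_
            rw [filter_insert]
            split_ifs with h
            · rw [card_insert_of_notMem fun h => htF (mem_filter.1 h).1, pow_succ]
            · rw [mul_one]
        _ ≤ (1 - c / 4) * ((1 - c / 4) ^ k * #I) :=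
            ht.trans (mul_le_mul_of_nonneg_left hpot (by linarith))
        _ = _ := by ring

theorem eventually_one_add_two_mul_log_le {δ : ℝ} (hδ : 0 < δ) :
    ∀ᶠ n : ℕ in Filter.atTop, 1 + 2 * Real.log n ≤ δ * n := by
  have hlog : (fun x : ℝ => 1 + 2 * Real.log x) =o[Filter.atTop] (id : ℝ → ℝ) :=
    (Asymptotics.isLittleO_const_id_atTop 1).add (Real.isLittleO_log_id_atTop.const_mul_left 2)
  filter_upwards [tendsto_natCast_atTop_atTop.eventually (hlog.bound hδ)] with n hn
  simpa using (le_abs_self _).trans hn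

theorem le_of_half_pow_le {c β : ℝ} (hc : 0 ≤ c) (hc1 : c ≤ 1) {n f : ℕ} (hn : 0 < n)
    (hf : (1 / 2 : ℝ) ^ f ≤ (1 - c / 4) ^ ⌊β * n⌋₊ * (n : ℝ) ^ 2)
    (hlog : 1 + 2 * Real.log n ≤ c * β / 8 * n) : c * β / 8 * n ≤ f := by
  have half : Real.exp (-f) ≤ (1 / 2 : ℝ) ^ f := by
    have : Real.exp (-1) ≤ 1 / 2 := by linarith [Real.exp_neg_one_lt_half]
    simpa [← Real.exp_nat_mul] using pow_le_pow_left₀ (Real.exp_pos _).le this f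
  have decay : (1 - c / 4) ^ ⌊β * n⌋₊ ≤ Real.exp (-(c / 4) * (β * n - 1)) := by
    calc (1 - c / 4) ^ ⌊β * n⌋₊ ≤ Real.exp (-(c / 4)) ^ ⌊β * n⌋₊ :=
          pow_le_pow_left₀ (by linarith) (Real.one_sub_le_exp_neg _) _
      _ = Real.exp (-(c / 4) * ⌊β * n⌋₊) := by rw [← Real.exp_nat_mul, mul_comm]
      _ ≤ _ := Real.exp_le_exp.2 (by nlinarith [Nat.lt_floor_add_one (β * n)])
  have square : (n : ℝ) ^ 2 = Real.exp (2 * Real.log n) := by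
    rw [mul_comm, Real.exp_mul, Real.exp_log (by exact_mod_cast hn)]
    norm_cast
  have : Real.exp (-f) ≤ Real.exp (-(c / 4) * (β * n - 1) + 2 * Real.log n) := by
    rw [Real.exp_add, ← square]
    exact half.trans (hf.trans (mul_le_mul_of_nonneg_right decay (by positivity)))
  linarith [Real.exp_le_exp.1 this]

end DisjointTuples

theorem exists_disjoint_tuples {ι : Type*} [Fintype ι] [Nonempty ι] {c β : ℝ} (hc : 0 < c)
    (hc1 : c ≤ 1) (hβ : 0 < β) (hβc : 8 * (Fintype.card ι : ℝ) ^ 2 * β ≤ c) :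
    ∃ n₀ : ℕ, ∀ {V κ : Type*} [Fintype V] {I : Finset κ} {good : κ → Finset (ι → V)}
      {X : Finset V}, n₀ ≤ Fintype.card V → #I ≤ Fintype.card V ^ 2 →
      (∀ i ∈ I, c * (Fintype.card V : ℝ) ^ Fintype.card ι ≤ #(good i)) →
      8 * Fintype.card ι * (#X : ℝ) ≤ c * Fintype.card V →
      ∃ F : Finset (ι → V), (#F : ℝ) ≤ β * Fintype.card V ∧
        (∀ t ∈ F, Function.Injective t ∧ (∀ j, t j ∉ X) ∧ ∃ i ∈ I, t ∈ good i) ∧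
        (F : Set (ι → V)).PairwiseDisjoint (fun t => univ.image t) ∧
        ∀ i ∈ I, c * β / 8 * Fintype.card V ≤ #{t ∈ F | t ∈ good i} := by
  set m := Fintype.card ι
  obtain ⟨n₀, hn₀⟩ := Filter.eventually_atTop.1 <|
    (eventually_one_add_two_mul_log_le (by positivity : 0 < c * β / 8)).and <|
      (tendsto_natCast_atTop_atTop (R := ℝ)).eventually_gt_atTop (8 * (m : ℝ) ^ 2 / c)
  refine ⟨n₀, fun {V κ} _ I good X hn hI hgood hX => ?_⟩
  set n := Fintype.card V
  obtain ⟨hlog, hmn⟩ := hn₀ n hn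
  rw [div_lt_iff₀ hc] at hmn
  have hn_pos : 0 < n := by
    by_contra! h
    simp only [Nat.le_zero.1 h, CharP.cast_eq_zero, zero_mul] at hmn
    linarith [sq_nonneg (m : ℝ)]
  have hfloor : (⌊β * n⌋₊ : ℝ) ≤ β * n := Nat.floor_le (by positivity)
  have hroom : 2 * (m * (m + #X + ⌊β * n⌋₊ * m) : ℝ) ≤ c * n := by
    have : 0 < c * n := by positivity
    linarith [mul_le_mul_of_nonneg_left hfloor (sq_nonneg (m : ℝ)),
      mul_le_mul_of_nonneg_right hβc (Nat.cast_nonneg n)]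
  obtain ⟨F, hF, hFX, hdisj, hpot⟩ :=
    exists_disjoint_tuples_potential_le hc hc1 hgood (X := X) ⌊β * n⌋₊ hroom
  refine ⟨{t ∈ F | ∃ i ∈ I, t ∈ good i}, ?_, fun t ht => ?_, ?_, fun i hi => ?_⟩
  · exact le_trans (mod_cast (card_filter_le _ _).trans hF) hfloor
  · rw [mem_filter] at ht
    exact ⟨(hFX t ht.1).1, (hFX t ht.1).2, ht.2⟩
  · exact hdisj.subset (coe_subset.2 (filter_subset _ _))
  · have hgood_i : {t ∈ {t ∈ F | ∃ i ∈ I, t ∈ good i} | t ∈ good i} = {t ∈ F | t ∈ good i} := by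
      rw [filter_filter]
      exact filter_congr fun t _ => ⟨And.right, fun h => ⟨⟨i, hi, h⟩, h⟩⟩
    rw [hgood_i]
    refine le_of_half_pow_le hc.le hc1 hn_pos ?_ hlog
    calc _ ≤ ∑ i ∈ I, (1 / 2 : ℝ) ^ #{t ∈ F | t ∈ good i} :=
          single_le_sum (f := fun i => (1 / 2 : ℝ) ^ #{t ∈ F | t ∈ good i})
            (fun i _ => by positivity) hi
      _ ≤ (1 - c / 4) ^ ⌊β * n⌋₊ * (n : ℝ) ^ 2 :=
          hpot.trans (mul_le_mul_of_nonneg_left (mod_cast hI) (pow_nonneg (by linarith) _))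

/-! ### Short connections -/

section Counting

variable {α β : Type*} [Fintype α] [Fintype β]

theorem card_filter_prod (R : α → β → Prop) [∀ a, DecidablePred (R a)] :
    #{p : α × β | R p.1 p.2} = ∑ a, #{b | R a b} := by
  simp only [card_filter, Fintype.sum_prod_type]

theorem card_filter_prod_le_sq_add {R : α → α → Prop} (hR : ∀ a b, R a b → R b a) (S : Finset α) :
    #{p : α × α | R p.1 p.2} ≤ #S ^ 2 + 2 * #{p : α × α | R p.1 p.2 ∧ p.1 ∉ S} := by
  set outside : Finset (α × α) := {p | R p.1 p.2 ∧ p.1 ∉ S}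
  have cover : ({p | R p.1 p.2} : Finset (α × α)) ⊆
      S ×ˢ S ∪ (outside ∪ outside.image Prod.swap) := by
    rintro ⟨a, b⟩ h
    have hab : R a b := (mem_filter_univ (a, b)).1 h
    by_cases ha : a ∈ S <;> by_cases hb : b ∈ S <;> simp [outside, hab, hR a b hab, ha, hb]
  calc _ ≤ #(S ×ˢ S) + (#outside + #outside) :=
        (card_le_card cover).trans <| (card_union_le _ _).trans <| Nat.add_le_add_left
          ((card_union_le _ _).trans (Nat.add_le_add_left card_image_le _)) _
    _ = _ := by rw [card_product]; ring

theorem five_eighths_le_card {R : α → α → Prop} (hR : ∀ a b, R a b → R b a)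
    (hdense : (7 / 16 : ℝ) * Fintype.card α ^ 2 ≤ #{p : α × α | R p.1 p.2}) {S : Finset α}
    (hS : (#{p : α × α | R p.1 p.2 ∧ p.1 ∉ S} : ℝ) ≤ (Fintype.card α : ℝ) ^ 2 / 64) :
    (5 / 8 : ℝ) * Fintype.card α ≤ #S := by
  have count : (#{p : α × α | R p.1 p.2} : ℝ) ≤
      (#S : ℝ) ^ 2 + 2 * #{p : α × α | R p.1 p.2 ∧ p.1 ∉ S} :=
    mod_cast card_filter_prod_le_sq_add hR S
  exact le_of_sq_le_sq (by linarith [sq_nonneg (Fintype.card α : ℝ)]) (Nat.cast_nonneg _)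

theorem quarter_le_card_inter {S T : Finset α} (hS : (5 / 8 : ℝ) * Fintype.card α ≤ #S)
    (hT : (5 / 8 : ℝ) * Fintype.card α ≤ #T) : (Fintype.card α : ℝ) / 4 ≤ #(S ∩ T) := by
  have inclusion_exclusion : (#(S ∪ T) + #(S ∩ T) : ℝ) = #S + #T :=
    mod_cast card_union_add_card_inter S T
  have : (#(S ∪ T) : ℝ) ≤ Fintype.card α := mod_cast card_le_univ _
  linarith

/- Cauchy–Schwarz twice: once for the degrees `∑ x, f x u`, once for the codegrees
`∑ u, f x u * f u v`. -/
theorem sum_pow_four_le_card_pow_four_mul {f : α → α → ℝ} (hf : ∀ a b, f a b = f b a) :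
    (∑ x, ∑ y, f x y) ^ 4 ≤ (Fintype.card α : ℝ) ^ 4 *
      ∑ x, ∑ y, ∑ u, ∑ v, f x y * f y u * (f x v * f v u) := by
  set cycles := ∑ x, ∑ y, ∑ u, ∑ v, f x y * f y u * (f x v * f v u)
  have codegree_sum : ∑ p : α × α, ∑ u, f p.1 u * f u p.2 = ∑ u, (∑ x, f x u) ^ 2 := by
    rw [sum_comm]
    refine sum_congr rfl fun u _ => ?_
    rw [Fintype.sum_prod_type, sq, sum_mul_sum]
    simp only [hf u]
  have codegree_sq_sum : ∑ p : α × α, (∑ u, f p.1 u * f u p.2) ^ 2 = cycles := by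
    rw [Fintype.sum_prod_type]
    simp only [sq, sum_mul_sum]
    exact sum_congr rfl fun x _ => sum_comm
  have degree_bound := sq_sum_le_card_mul_sum_sq (s := univ) (f := fun u => ∑ x, f x u)
  have codegree_bound := sq_sum_le_card_mul_sum_sq (s := (univ : Finset (α × α)))
    (f := fun p => ∑ u, f p.1 u * f u p.2)
  rw [codegree_sum, codegree_sq_sum, card_univ, Fintype.card_prod, Nat.cast_mul] at codegree_bound
  rw [sum_comm, card_univ] at degree_bound
  set n := (Fintype.card α : ℝ)
  calc (∑ x, ∑ y, f x y) ^ 4 = ((∑ x, ∑ y, f x y) ^ 2) ^ 2 := by ring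
    _ ≤ (n * ∑ u, (∑ x, f x u) ^ 2) ^ 2 := by gcongr
    _ = n ^ 2 * (∑ u, (∑ x, f x u) ^ 2) ^ 2 := by ring
    _ ≤ n ^ 2 * (n * n * cycles) := by gcongr
    _ = _ := by ring

end Counting

namespace ThreeGraph

variable {V : Type*} [Fintype V] (G : ThreeGraph V)

/-- The link of `v`: the ordered pairs that form an edge with `v`. Each edge at `v` is counted
twice. -/
def link (v : V) : Finset (V × V) := {p | G.Adj v p.1 p.2}

/-- Every vertex of `G` lies in at least `d * n ^ 2 / 2` edges, where `n` is the number of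
vertices. -/
def MinDegree (d : ℝ) : Prop := ∀ v, d * Fintype.card V ^ 2 ≤ #(G.link v)

/-- The vertices forming an edge with `u` and `v`. -/
def pairNeighbors (u v : V) : Finset V := {a | G.Adj u v a}

/-- The vertices `x` for which the pair `ux` lies in many edges, namely at least `n / 64`. -/
def richNeighbors (u : V) : Finset V :=
  {x | (Fintype.card V : ℝ) / 64 ≤ #(G.pairNeighbors u x)}

variable {G}

theorem MinDegree.mono {d d' : ℝ} (hG : G.MinDegree d) (hd : d' ≤ d) : G.MinDegree d' :=
  fun v => le_trans (by gcongr) (hG v)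

theorem mem_richNeighbors {u x : V} :
    x ∈ G.richNeighbors u ↔ (Fintype.card V : ℝ) / 64 ≤ #(G.pairNeighbors u x) :=
  mem_filter_univ x

theorem MinDegree.five_eighths_le_card_richNeighbors (hG : G.MinDegree (7 / 16)) (u : V) :
    (5 / 8 : ℝ) * Fintype.card V ≤ #(G.richNeighbors u) := by
  refine five_eighths_le_card (R := G.Adj u) (fun _ _ => G.swap_right) (hG u) ?_
  rw [card_filter_prod fun x a => G.Adj u x a ∧ x ∉ G.richNeighbors u]
  push_cast
  calc _ ≤ ∑ _x : V, (Fintype.card V : ℝ) / 64 := sum_le_sum fun x _ => ?_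
    _ = _ := by rw [sum_const, card_univ, nsmul_eq_mul]; ring
  by_cases hx : x ∈ G.richNeighbors u
  · simpa [hx] using by positivity
  · simpa [hx, pairNeighbors] using (not_le.1 (mem_richNeighbors.not.1 hx)).le

theorem MinDegree.quarter_le_card_richNeighbors_inter (hG : G.MinDegree (7 / 16)) (u v : V) :
    (Fintype.card V : ℝ) / 4 ≤ #(G.richNeighbors u ∩ G.richNeighbors v) :=
  quarter_le_card_inter (hG.five_eighths_le_card_richNeighbors u)
    (hG.five_eighths_le_card_richNeighbors v)

variable (G) in
/-- The connectors of `u` and `v`: triples `(a, x, b)` such that `uax` and `xbv` are edges. -/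
def connectors (u v : V) : Finset (Fin 3 → V) := {t | G.Adj u (t 0) (t 1) ∧ G.Adj (t 1) (t 2) v}

theorem sum_card_mul_card_le_card_connectors (u v : V) (S : Finset V) :
    ∑ x ∈ S, #(G.pairNeighbors u x) * #(G.pairNeighbors v x) ≤ #(G.connectors u v) := by
  simp only [← card_product]
  rw [← card_sigma]
  refine card_le_card_of_injOn (fun s => ![s.2.1, s.1, s.2.2]) (fun s hs => ?_) ?_
  · simp only [coe_sigma, Set.mem_sigma_iff, mem_coe, mem_product, pairNeighbors,
      mem_filter_univ] at hs
    simpa [connectors] using ⟨G.swap_right hs.2.1, hs.2.2.rotate⟩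
  · rintro ⟨x, a, b⟩ - ⟨x', a', b'⟩ - h
    obtain ⟨rfl, rfl, rfl⟩ : a = a' ∧ x = x' ∧ b = b' := by simpa using h
    rfl

theorem MinDegree.le_card_connectors (hG : G.MinDegree (7 / 16)) (u v : V) :
    (1 / 16384 : ℝ) * Fintype.card V ^ 3 ≤ #(G.connectors u v) := by
  set S := G.richNeighbors u ∩ G.richNeighbors v
  set n := (Fintype.card V : ℝ)
  calc (1 / 16384 : ℝ) * n ^ 3 = n / 4 * (n / 64 * (n / 64)) := by ring
    _ ≤ #S * (n / 64 * (n / 64)) := by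
        gcongr
        exact hG.quarter_le_card_richNeighbors_inter u v
    _ = ∑ _x ∈ S, n / 64 * (n / 64) := by rw [sum_const, nsmul_eq_mul]
    _ ≤ ∑ x ∈ S, (#(G.pairNeighbors u x) * #(G.pairNeighbors v x) : ℝ) := by
        refine sum_le_sum fun x hx => ?_
        rw [mem_inter, mem_richNeighbors, mem_richNeighbors] at hx
        exact mul_le_mul hx.1 hx.2 (by positivity) (by positivity)
    _ ≤ _ := mod_cast sum_card_mul_card_le_card_connectors u v S

theorem MinDegree.robustlyConnects (hG : G.MinDegree (7 / 16)) {X : Finset V} {M : ℕ}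
    (hM : 64 * (#X + M + 1 : ℝ) < Fintype.card V) : G.RobustlyConnects (univ \ X) M := by
  intro u v F hF
  set n := (Fintype.card V : ℝ)
  have hXF : (#(X ∪ F) + 1 : ℝ) < n / 64 := by
    have : (#(X ∪ F) : ℝ) ≤ #X + M :=
      mod_cast (card_union_le _ _).trans (Nat.add_le_add_left hF _)
    linarith
  have exists_new (S Y : Finset V) (hY : (#Y : ℝ) < n / 64) (hS : n / 64 ≤ #S) :
      ∃ z ∈ S, z ∉ Y := exists_mem_notMem_of_card_lt_card (mod_cast hY.trans_le hS)
  obtain ⟨x, hx, hxXF⟩ := exists_new _ (X ∪ F) (by linarith)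
    ((by linarith [(Nat.cast_nonneg _ : 0 ≤ n)] : n / 64 ≤ n / 4).trans
      (hG.quarter_le_card_richNeighbors_inter u v))
  rw [mem_inter, mem_richNeighbors, mem_richNeighbors] at hx
  obtain ⟨a, ha, haXF⟩ := exists_new _ (X ∪ F) (by linarith) hx.1
  obtain ⟨b, hb, hbXF⟩ := exists_new _ (insert a (X ∪ F))
    (lt_of_le_of_lt (mod_cast card_insert_le _ _) hXF) hx.2
  simp only [mem_insert, mem_union, not_or] at hxXF haXF hbXF
  rw [pairNeighbors, mem_filter_univ] at ha hb
  refine ⟨a, x, b, ?_, ?_, Ne.symm hbXF.1, G.swap_right ha, hb.rotate⟩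
  · simp [insert_subset_iff, hxXF, haXF, hbXF]
  · simp [hxXF, haXF, hbXF]

end ThreeGraph

/-! ### Absorbers -/

namespace ThreeGraph

variable {V : Type*} [Fintype V] (G : ThreeGraph V)

/-- The triples `(t, u, v)` such that `x`, `u`, `v`, `y` is a walk in the link of `t`. -/
def linkWalks (x y : V) : Finset (V × V × V) :=
  {q | G.Adj x q.2.1 q.1 ∧ G.Adj q.2.1 q.2.2 q.1 ∧ G.Adj q.2.2 y q.1}

/-- The pair `xy` is `η`-thin if few links contain walks of length three from `x` to `y`. -/
def IsThin (η : ℝ) (x y : V) : Prop := #(G.linkWalks x y) < η ^ 4 * Fintype.card V ^ 3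

variable {G} {η : ℝ}

theorem card_linkWalks_le_comm (x y : V) : #(G.linkWalks x y) ≤ #(G.linkWalks y x) := by
  refine card_le_card_of_injOn (fun q => (q.1, q.2.2, q.2.1)) (fun q hq => ?_) ?_
  · simp only [linkWalks, coe_filter_univ, Set.mem_ofPred_eq] at hq ⊢
    exact ⟨G.swap_left hq.2.2, G.swap_left hq.2.1, G.swap_left hq.1⟩
  · rintro ⟨t, u, v⟩ - ⟨t', u', v'⟩ - h
    obtain ⟨rfl, rfl, rfl⟩ : t = t' ∧ v = v' ∧ u = u' := by simpa using h
    rfl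

theorem card_linkWalks_comm (x y : V) : #(G.linkWalks x y) = #(G.linkWalks y x) :=
  (card_linkWalks_le_comm x y).antisymm (card_linkWalks_le_comm y x)

theorem isThin_comm {x y : V} : G.IsThin η x y ↔ G.IsThin η y x := by
  rw [IsThin, IsThin, card_linkWalks_comm]

variable (G η) in
/-- The indicator that `xy` is an `η`-thin pair in the link of `t`. -/
def thinIndicator (t x y : V) : ℝ := if G.Adj x y t ∧ G.IsThin η x y then 1 else 0

theorem thinIndicator_comm (t x y : V) :
    G.thinIndicator η t x y = G.thinIndicator η t y x := by
  simp only [thinIndicator, isThin_comm (x := x)]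
  exact if_congr (and_congr_left' ⟨G.swap_left, G.swap_left⟩) rfl rfl

theorem sum_thinIndicator_cycles_le (x y : V) :
    ∑ t, ∑ u, ∑ v, G.thinIndicator η t x y * G.thinIndicator η t y u *
      (G.thinIndicator η t x v * G.thinIndicator η t v u) ≤ η ^ 4 * Fintype.card V ^ 3 := by
  by_cases hxy : G.IsThin η x y
  · calc _ ≤ ∑ t, ∑ u, ∑ v, if (t, u, v) ∈ G.linkWalks y x then (1 : ℝ) else 0 := by
          refine sum_le_sum fun t _ => sum_le_sum fun u _ => sum_le_sum fun v _ => ?_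
          have hv : G.Adj x v t ↔ G.Adj v x t := ⟨G.swap_left, G.swap_left⟩
          have hu : G.Adj v u t ↔ G.Adj u v t := ⟨G.swap_left, G.swap_left⟩
          simp only [thinIndicator, linkWalks, mem_filter_univ, hv, hu]
          split_ifs <;> simp_all
      _ = #(G.linkWalks x y) := by
          rw [card_linkWalks_comm x y, ← filter_univ_mem (G.linkWalks y x), card_filter]
          simp only [filter_univ_mem, Fintype.sum_prod_type, Nat.cast_sum, Nat.cast_ite,
            Nat.cast_one, Nat.cast_zero]
      _ ≤ _ := hxy.le
  · simp only [thinIndicator, hxy, and_false, if_false, zero_mul, sum_const_zero]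
    positivity

theorem sum_thinIndicator_le (hη : 0 ≤ η) :
    ∑ t, ∑ x, ∑ y, G.thinIndicator η t x y ≤ η * Fintype.card V ^ 3 := by
  rcases isEmpty_or_nonempty V with _ | _
  · simp
  set n := (Fintype.card V : ℝ)
  have hn : 0 < n := Nat.cast_pos.2 Fintype.card_pos
  let pairs (t : V) : ℝ := ∑ x, ∑ y, G.thinIndicator η t x y
  let cycles (t x y : V) : ℝ := ∑ u, ∑ v, G.thinIndicator η t x y * G.thinIndicator η t y u *
    (G.thinIndicator η t x v * G.thinIndicator η t v u)
  have pairs_nonneg (t : V) : 0 ≤ pairs t := sum_nonneg fun x _ => sum_nonneg fun y _ => by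
    unfold thinIndicator; positivity
  refine le_of_pow_le_pow_left₀ four_ne_zero (by positivity) ?_
  calc (∑ t, pairs t) ^ 4 ≤ n ^ 3 * ∑ t, pairs t ^ 4 := by
        rw [← div_le_iff₀' (pow_pos hn 3)]
        exact pow_sum_div_card_le_sum_pow (s := univ) (fun t _ => pairs_nonneg t) 3
    _ ≤ n ^ 3 * ∑ t, n ^ 4 * ∑ x, ∑ y, cycles t x y := by
        gcongr with t
        exact sum_pow_four_le_card_pow_four_mul (thinIndicator_comm t)
    _ = n ^ 7 * ∑ x, ∑ y, ∑ t, cycles t x y := by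
        rw [← mul_sum, sum_comm]
        simp only [sum_comm (s := univ) (t := univ) (f := fun t y => cycles t _ y)]
        ring
    _ ≤ n ^ 7 * ∑ _x : V, ∑ _y : V, η ^ 4 * n ^ 3 := by
        gcongr with x _ y
        exact sum_thinIndicator_cycles_le x y
    _ = (η * n ^ 3) ^ 4 := by
        simp only [sum_const, card_univ, nsmul_eq_mul]
        ring

theorem sum_card_thin_link_pairs_le (hη : 0 ≤ η) :
    ∑ x, (#{p ∈ G.link x | G.IsThin η x p.1} : ℝ) ≤ η * Fintype.card V ^ 3 := by
  refine (sum_thinIndicator_le (G := G) hη).trans_eq' ?_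
  rw [sum_comm]
  refine sum_congr rfl fun x _ => ?_
  rw [sum_comm, link, filter_filter, card_filter]
  simp only [thinIndicator, Fintype.sum_prod_type, Nat.cast_sum, Nat.cast_ite, Nat.cast_one,
    Nat.cast_zero]

variable (G) in
/-- Pairs of a walk `x`, `u`, `v`, `w` in the link of a vertex `t` and an edge `uvb`, encoded as
`((u, v), (t, b))`. -/
def fannedWalks (x w : V) : Finset ((V × V) × V × V) :=
  {q | (G.Adj x q.1.1 q.2.1 ∧ G.Adj q.1.1 q.1.2 q.2.1 ∧ G.Adj q.1.2 w q.2.1) ∧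
    G.Adj q.1.1 q.1.2 q.2.2}

theorem card_linkWalks_sq_le (x w : V) :
    (#(G.linkWalks x w) : ℝ) ^ 2 ≤ (Fintype.card V : ℝ) ^ 2 * #(G.fannedWalks x w) := by
  let walks (p : V × V) : Finset V := {t | G.Adj x p.1 t ∧ G.Adj p.1 p.2 t ∧ G.Adj p.2 w t}
  have card_walks : #(G.linkWalks x w) = ∑ p, #(walks p) := by
    simp only [linkWalks, walks, card_filter]
    rw [Fintype.sum_prod_type, sum_comm]
  have card_fanned : #(G.fannedWalks x w) = ∑ p, #(walks p) * #(G.pairNeighbors p.1 p.2) := by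
    rw [fannedWalks, card_filter_prod (fun p q : V × V => (G.Adj x p.1 q.1 ∧ G.Adj p.1 p.2 q.1 ∧
      G.Adj p.2 w q.1) ∧ G.Adj p.1 p.2 q.2)]
    refine sum_congr rfl fun p _ => ?_
    simp only [walks, pairNeighbors, ← card_product, ← filter_product, univ_product_univ]
  have walks_le (p : V × V) : #(walks p) ≤ #(G.pairNeighbors p.1 p.2) :=
    card_le_card (monotone_filter_right _ fun _ _ h => h.2.1)
  have cauchy_schwarz := sq_sum_le_card_mul_sum_sq (s := univ) (f := fun p => #(walks p))
  rw [← card_walks, card_univ, Fintype.card_prod, ← sq] at cauchy_schwarz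
  refine mod_cast cauchy_schwarz.trans (Nat.mul_le_mul_left _ ?_)
  rw [card_fanned]
  exact sum_le_sum fun p _ => (sq _).trans_le (Nat.mul_le_mul_left _ (walks_le p))

theorem le_card_fannedWalks {x w : V} (h : ¬ G.IsThin η x w) :
    η ^ 8 * (Fintype.card V : ℝ) ^ 4 ≤ #(G.fannedWalks x w) := by
  have hV : (0 : ℝ) < Fintype.card V := Nat.cast_pos.2 (Fintype.card_pos_iff.2 ⟨x⟩)
  refine le_of_mul_le_mul_left ?_ (pow_pos hV 2)
  calc _ = (η ^ 4 * (Fintype.card V : ℝ) ^ 3) ^ 2 := by ring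
    _ ≤ (#(G.linkWalks x w) : ℝ) ^ 2 := pow_le_pow_left₀ (by positivity) (not_lt.1 h) 2
    _ ≤ _ := card_linkWalks_sq_le x w

variable (G) in
/-- The tuple `t` absorbs the pair `xy`. With `t = (a, w, v, u, b, p, q, r)`, the edges `awv`,
`vub` and `prq` form two loose paths, from `a` to `b` and from `p` to `r`. The vertices `x` and
`y` are absorbed into these paths by replacing the edges by `axu`, `uvb` and `pwq`, `qyr`. -/
def IsAbsorber (x y : V) (t : Fin 8 → V) : Prop :=
  G.Adj x (t 3) (t 0) ∧ G.Adj (t 3) (t 2) (t 0) ∧ G.Adj (t 2) (t 1) (t 0) ∧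
    G.Adj (t 3) (t 2) (t 4) ∧
    G.Adj (t 1) (t 5) (t 6) ∧ G.Adj (t 5) (t 7) (t 6) ∧ G.Adj (t 7) y (t 6)

theorem sum_card_walks_le_card_absorbers (x y : V) (S : Finset V) :
    ∑ w ∈ S, #(G.fannedWalks x w) * #(G.linkWalks w y) ≤ #{t | G.IsAbsorber x y t} := by
  simp only [← card_product]
  rw [← card_sigma]
  refine card_le_card_of_injOn (fun s => ![s.2.1.2.1, s.1, s.2.1.1.2, s.2.1.1.1, s.2.1.2.2,
    s.2.2.2.1, s.2.2.1, s.2.2.2.2]) (fun s hs => ?_) ?_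
  · simp only [coe_sigma, Set.mem_sigma_iff, mem_coe, mem_product, fannedWalks, linkWalks,
      mem_filter_univ] at hs
    obtain ⟨-, ⟨⟨hxu, huv, hvw⟩, huvb⟩, hwp, hpr, hry⟩ := hs
    exact (mem_filter_univ _).2 ⟨hxu, huv, hvw, huvb, hwp, hpr, hry⟩
  · rintro ⟨w, ⟨⟨u, v⟩, a, b⟩, q, p, r⟩ - ⟨w', ⟨⟨u', v'⟩, a', b'⟩, q', p', r'⟩ - h
    simp only [Matrix.vecCons_inj] at h
    obtain ⟨rfl, rfl, rfl, rfl, rfl, rfl, rfl, rfl, -⟩ := h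
    rfl

variable (G η) in
/-- The vertices `x` whose link has more than `n ^ 2 / 64` pairs `(u, v)` with `xu` thin. -/
def exceptionalVertices : Finset V :=
  {x | (Fintype.card V : ℝ) ^ 2 / 64 < #{p ∈ G.link x | G.IsThin η x p.1}}

theorem card_exceptionalVertices_le (hη : 0 ≤ η) :
    (#(G.exceptionalVertices η) : ℝ) ≤ 64 * η * Fintype.card V := by
  rcases isEmpty_or_nonempty V with _ | _
  · simp [eq_empty_of_isEmpty]
  set n := (Fintype.card V : ℝ)
  have : 0 < n := Nat.cast_pos.2 Fintype.card_pos
  refine le_of_mul_le_mul_right ?_ (by positivity : 0 < n ^ 2 / 64)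
  calc #(G.exceptionalVertices η) * (n ^ 2 / 64)
      = ∑ _x ∈ G.exceptionalVertices η, n ^ 2 / 64 := by rw [sum_const, nsmul_eq_mul]
    _ ≤ ∑ x ∈ G.exceptionalVertices η, (#{p ∈ G.link x | G.IsThin η x p.1} : ℝ) :=
        sum_le_sum fun x hx => ((mem_filter_univ x).1 hx).le
    _ ≤ ∑ x, (#{p ∈ G.link x | G.IsThin η x p.1} : ℝ) :=
        sum_le_univ_sum_of_nonneg fun x => Nat.cast_nonneg _
    _ ≤ η * n ^ 3 := sum_card_thin_link_pairs_le hη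
    _ = _ := by ring

theorem MinDegree.five_eighths_le_card_not_isThin (hG : G.MinDegree (7 / 16)) {x : V}
    (hx : x ∉ G.exceptionalVertices η) :
    (5 / 8 : ℝ) * Fintype.card V ≤ #{w | ¬ G.IsThin η x w} := by
  refine five_eighths_le_card (R := G.Adj x) (fun _ _ => G.swap_right) (hG x) ?_
  simpa [exceptionalVertices, link, filter_filter] using hx

theorem MinDegree.le_card_absorbers (hG : G.MinDegree (7 / 16)) {x y : V}
    (hx : x ∉ G.exceptionalVertices η) (hy : y ∉ G.exceptionalVertices η) :
    η ^ 12 / 4 * (Fintype.card V : ℝ) ^ 8 ≤ #{t | G.IsAbsorber x y t} := by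
  set n := (Fintype.card V : ℝ)
  set S := ({w | ¬ G.IsThin η x w} : Finset V) ∩ ({w | ¬ G.IsThin η y w} : Finset V)
  calc η ^ 12 / 4 * n ^ 8 = n / 4 * (η ^ 8 * n ^ 4 * (η ^ 4 * n ^ 3)) := by ring
    _ ≤ #S * (η ^ 8 * n ^ 4 * (η ^ 4 * n ^ 3)) := by
        gcongr
        exact quarter_le_card_inter (hG.five_eighths_le_card_not_isThin hx)
          (hG.five_eighths_le_card_not_isThin hy)
    _ = ∑ _w ∈ S, η ^ 8 * n ^ 4 * (η ^ 4 * n ^ 3) := by rw [sum_const, nsmul_eq_mul]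
    _ ≤ ∑ w ∈ S, (#(G.fannedWalks x w) * #(G.linkWalks w y) : ℝ) := by
        refine sum_le_sum fun w hw => ?_
        rw [mem_inter, mem_filter_univ, mem_filter_univ, isThin_comm (x := y)] at hw
        exact mul_le_mul (le_card_fannedWalks hw.1) (not_lt.1 hw.2) (by positivity)
          (by positivity)
    _ ≤ _ := mod_cast sum_card_walks_le_card_absorbers x y S

end ThreeGraph

/-! ### The absorbing path and the reservoir -/

theorem exists_disjoint_of_card_lt {τ V : Type*} {F : Finset τ} {B : τ → Finset V} {Y : Finset V}
    (hB : (F : Set τ).PairwiseDisjoint B) (hY : #Y < #F) : ∃ t ∈ F, Disjoint (B t) Y := by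
  by_contra! h
  simp only [not_disjoint_iff] at h
  choose z hzB hzY using fun t : F => h t t.2
  refine hY.not_ge ?_
  rw [← card_attach]
  refine card_le_card_of_injOn z (fun t _ => hzY t) fun s _ t _ hst => ?_
  exact Subtype.ext (hB.elim_finset s.2 t.2 _ (hzB s) (hst ▸ hzB t))

theorem exists_pair_assignment {V τ : Type*} {r : V → V → τ → Prop} {U : Finset V} {F : Finset τ}
    (hU : Even #U) (hr : ∀ x ∈ U, ∀ y ∈ U, #U ≤ 2 * #{t ∈ F | r x y t}) :
    ∃ A : τ → Finset V, F.biUnion A = U ∧ (F : Set τ).PairwiseDisjoint A ∧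
      ∀ t ∈ F, A t = ∅ ∨ ∃ x y, x ≠ y ∧ A t = {x, y} ∧ r x y t := by
  obtain ⟨k, hk⟩ := hU
  have e : Fin k × Bool ≃ U := Fintype.equivOfCardEq (by simp [hk, mul_two])
  obtain ⟨f, hf, hfr⟩ := (all_card_le_biUnion_card_iff_exists_injective
      fun i => {t ∈ F | r (e (i, false)) (e (i, true)) t}).1 fun s => by
    obtain rfl | ⟨i, hi⟩ := s.eq_empty_or_nonempty
    · simp
    calc #s ≤ k := card_finset_fin_le s
      _ ≤ #{t ∈ F | r (e (i, false)) (e (i, true)) t} := by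
          have := hr _ (e (i, false)).2 _ (e (i, true)).2
          lia
      _ ≤ _ := card_le_card (subset_biUnion_of_mem
          (fun i => {t ∈ F | r (e (i, false)) (e (i, true)) t}) hi)
  simp only [mem_filter] at hfr
  have he : Function.Injective fun p => (e p : V) := Subtype.val_injective.comp e.injective
  refine ⟨fun t => ({p | f p.1 = t} : Finset (Fin k × Bool)).image fun p => (e p : V), ?_, ?_, ?_⟩
  · ext z
    simp only [mem_biUnion, mem_image, mem_filter_univ]
    refine ⟨fun ⟨_, _, p, _, hp⟩ => hp ▸ (e p).2, fun hz => ?_⟩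
    exact ⟨_, (hfr (e.symm ⟨z, hz⟩).1).1, _, rfl, by simp⟩
  · refine fun s _ t _ hst => (disjoint_image he).2 (disjoint_filter.2 ?_)
    rintro p - rfl
    exact hst
  · intro t _
    by_cases ht : ∃ i, f i = t
    · obtain ⟨i, rfl⟩ := ht
      refine .inr ⟨e (i, false), e (i, true), he.ne (by simp), ?_, (hfr i).2⟩
      simp only [hf.eq_iff]
      rw [show ({p | p.1 = i} : Finset (Fin k × Bool)) = {(i, false), (i, true)} by
        ext ⟨j, b⟩; cases b <;> simp, image_insert, image_singleton]
    · push Not at ht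
      exact .inl (by simp [ht])

namespace ThreeGraph

variable {V : Type*} {G : ThreeGraph V}

theorem RobustlyConnects.exists_chain_union {σ : Type*} {W Z : Finset V} {M : ℕ}
    (hW : G.RobustlyConnects W M) (hWZ : Disjoint W Z) (u v : σ → V) {J : Finset σ}
    (hJ : J.Nonempty) (hM : 3 * (#J + #Z) ≤ M) :
    ∃ (C : Finset V) (p q : V), C ⊆ W ∧ #C ≤ 3 * (#J + #Z) ∧ ∀ S : σ → Finset V,
      (∀ i ∈ J, G.IsLoosePath (u i) (v i) (S i)) → (J : Set σ).PairwiseDisjoint S →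
      (∀ i ∈ J, Disjoint (S i) (C ∪ Z)) → G.IsLoosePath p q (C ∪ Z ∪ J.biUnion S) := by
  obtain ⟨C, p, q, hCW, hC, hchain⟩ := hW.exists_chain (Sum.elim u id) (Sum.elim v id)
    (J := J.disjSum Z) (hJ.elim fun i hi => ⟨_, inl_mem_disjSum.2 hi⟩) (by rwa [card_disjSum])
  rw [card_disjSum] at hC
  refine ⟨C, p, q, hCW, hC, fun S hS hdisj hSCZ => ?_⟩
  simp only [disjoint_union_right] at hSCZ
  convert hchain (Sum.elim S singleton) ?_ ?_ ?_ using 1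
  · ext z
    simp only [mem_union, mem_biUnion, Sum.exists, inl_mem_disjSum, inr_mem_disjSum, Sum.elim_inl,
      Sum.elim_inr, mem_singleton, exists_eq_right']
    grind
  · rintro (i | z) hi
    · exact hS i (inl_mem_disjSum.1 hi)
    · exact IsLoosePath.nil z
  · have hSZ {i z} (hi : i ∈ J) (hz : z ∈ Z) : Disjoint (S i) {z} :=
      (hSCZ i hi).2.mono_right (singleton_subset_iff.2 hz)
    rintro (i | y) hi (j | z) hj hij <;>
      simp only [mem_coe, inl_mem_disjSum, inr_mem_disjSum] at hi hj
    · exact hdisj hi hj (ne_of_apply_ne _ hij)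
    · exact hSZ hi hj
    · exact (hSZ hj hi).symm
    · exact disjoint_singleton.2 (ne_of_apply_ne _ hij)
  · rintro (i | z) hi
    · exact (hSCZ i (inl_mem_disjSum.1 hi)).1
    · exact disjoint_singleton_left.2 fun hz =>
        disjoint_left.1 hWZ (hCW hz) (inr_mem_disjSum.1 hi)

variable {t : Fin 8 → V} {x y : V}

variable (G) in
/-- Two disjoint loose paths, with the end vertices of the two paths of an absorber `t`, cover the
vertices of `t` together with `A`. -/
def Absorbs (t : Fin 8 → V) (A : Finset V) : Prop :=
  ∃ S : Bool → Finset V, (∀ b, G.IsLoosePath (t (cond b 5 0)) (t (cond b 7 4)) (S b)) ∧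
    Disjoint (S false) (S true) ∧ S false ∪ S true = univ.image t ∪ A

theorem IsAbsorber.absorbs_empty (h : G.IsAbsorber x y t) (ht : t.Injective) :
    G.Absorbs t ∅ := by
  obtain ⟨-, -, hvwa, huvb, -, hprq, -⟩ := h
  refine ⟨Bool.rec (image t {0, 1, 2, 3, 4}) (image t {5, 6, 7}), ?_, ?_, ?_⟩
  · rintro (_ | _) <;> simp only [image_insert, image_singleton]
    · refine .cons hvwa.reverse ?_ ?_ (.of_adj (G.swap_left huvb)) <;> simp [ht.eq_iff]
    · exact .of_adj (G.swap_right hprq)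
  · exact (disjoint_image ht).2 (by decide)
  · rw [union_empty, ← image_union]
    congr 1

theorem IsAbsorber.absorbs_pair (h : G.IsAbsorber x y t) (ht : t.Injective) (hxy : x ≠ y)
    (hA : Disjoint {x, y} (univ.image t)) : G.Absorbs t {x, y} := by
  obtain ⟨hxua, -, -, huvb, hwpq, -, hryq⟩ := h
  simp only [disjoint_insert_left, disjoint_singleton_left, mem_image, mem_univ, true_and,
    not_exists, ne_comm (b := x), ne_comm (b := y)] at hA
  obtain ⟨hx, hy⟩ := hA
  have first_path : G.IsLoosePath (t 0) (t 4) {t 0, x, t 3, t 2, t 4} :=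
    .cons hxua.rotate.rotate (by simp [ht.eq_iff]) (by simp [hx]) (.of_adj huvb)
  have second_path : G.IsLoosePath (t 5) (t 7) {t 5, t 1, t 6, y, t 7} :=
    .cons (G.swap_left hwpq) (by simp [ht.eq_iff, (hy _).symm]) (by simp [ht.eq_iff, (hy _).symm])
      (.of_adj hryq.reverse)
  refine ⟨Bool.rec (insert x (image t {0, 2, 3, 4})) (insert y (image t {1, 5, 6, 7})),
    ?_, ?_, ?_⟩
  · rintro (_ | _)
    · change G.IsLoosePath (t 0) (t 4) (insert x (image t {0, 2, 3, 4}))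
      convert first_path using 1
      simp only [image_insert, image_singleton]
      grind
    · change G.IsLoosePath (t 5) (t 7) (insert y (image t {1, 5, 6, 7}))
      convert second_path using 1
      simp only [image_insert, image_singleton]
      grind
  · simp only [disjoint_insert_left, disjoint_insert_right, disjoint_image ht]
    simp [hx, hy, hxy.symm]
  · have covers : ({0, 2, 3, 4} ∪ {1, 5, 6, 7} : Finset (Fin 8)) = univ := by decide
    rw [insert_union, union_insert, ← image_union, covers, union_comm, insert_union,
      singleton_union]

variable [Fintype V]

theorem RobustlyConnects.exists_absorbing_chain {F : Finset (Fin 8 → V)} {X : Finset V} {M : ℕ}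
    (hF : F.Nonempty) (hW : G.RobustlyConnects (univ \ (F.biUnion (univ.image ·) ∪ X)) M)
    (hM : 3 * (2 * #F + #X) ≤ M) :
    ∃ (C : Finset V) (p q : V), #C ≤ 3 * (2 * #F + #X) ∧ ∀ A : (Fin 8 → V) → Finset V,
      (∀ t ∈ F, G.Absorbs t (A t)) →
      (F : Set (Fin 8 → V)).PairwiseDisjoint (fun t => univ.image t ∪ A t) →
      (∀ t ∈ F, Disjoint (A t) (C ∪ (F.biUnion (univ.image ·) ∪ X))) →
      G.IsLoosePath p q (C ∪ (F.biUnion (univ.image ·) ∪ X) ∪ F.biUnion A) := by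
  set Y := F.biUnion (univ.image ·) with hY
  have hWZ : Disjoint (univ \ (Y ∪ X)) (X \ Y) :=
    disjoint_sdiff_self_left.mono_right (sdiff_subset.trans subset_union_right)
  have hZ : #(X \ Y) ≤ #X := card_le_card sdiff_subset
  have hJ : #(F ×ˢ (univ : Finset Bool)) = 2 * #F := by simp [mul_comm]
  obtain ⟨C, p, q, hCW, hC, hchain⟩ := hW.exists_chain_union hWZ
    (fun i : (Fin 8 → V) × Bool => i.1 (cond i.2 5 0)) (fun i => i.1 (cond i.2 7 4))
    (hF.product univ_nonempty) (by lia)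
  refine ⟨C, p, q, by lia, fun A hA hdisj hAnew => ?_⟩
  choose! S hS hSdisj hSunion using hA
  have hS_subset (t : Fin 8 → V) (ht : t ∈ F) (b : Bool) : S t b ⊆ univ.image t ∪ A t := by
    rw [← hSunion t ht]
    cases b
    exacts [subset_union_left, subset_union_right]
  have himage (t : Fin 8 → V) (ht : t ∈ F) : univ.image t ⊆ Y :=
    subset_biUnion_of_mem (univ.image ·) ht
  have hCY : Disjoint Y C := (disjoint_sdiff.mono_left subset_union_left).mono_right hCW
  convert hchain (fun i => S i.1 i.2) ?_ ?_ ?_ using 1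
  · have : (F ×ˢ univ).biUnion (fun i => S i.1 i.2) = Y ∪ F.biUnion A := by
      rw [hY, ← biUnion_union, product_biUnion]
      refine biUnion_congr rfl fun t ht => ?_
      rw [← hSunion t ht]
      ext z
      simp [or_comm]
    rw [this]
    grind
  · exact fun i hi => hS i.1 (mem_product.1 hi).1 i.2
  · rintro ⟨s, b⟩ hs ⟨t, c⟩ ht hne
    rw [mem_coe, mem_product] at hs ht
    obtain rfl | hst := eq_or_ne s t
    · have := hSdisj s hs.1
      cases b <;> cases c <;> first | exact this | exact this.symm | exact absurd rfl hne
    · exact (hdisj hs.1 ht.1 hst).mono (hS_subset s hs.1 b) (hS_subset t ht.1 c)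
  · rintro ⟨t, b⟩ ht
    rw [mem_product] at ht
    refine Disjoint.mono_left (hS_subset t ht.1 b) ?_
    have := hAnew t ht.1
    simp only [disjoint_union_left, disjoint_union_right] at this ⊢
    exact ⟨⟨hCY.mono_left (himage t ht.1), this.1⟩,
      disjoint_sdiff.mono_left (himage t ht.1), this.2.2.mono_right sdiff_subset⟩

variable (G) in
/-- `P` is the vertex set of an absorbing path from `p` to `q`: every even set of at most `B`
vertices outside `P` can be absorbed. -/
def IsAbsorbingPath (p q : V) (P : Finset V) (B : ℝ) : Prop :=
  ∀ U : Finset V, Disjoint U P → Even #U → #U ≤ B → G.IsLoosePath p q (P ∪ U)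

theorem RobustlyConnects.exists_isAbsorbingPath {F : Finset (Fin 8 → V)} {X : Finset V} {M : ℕ}
    {B : ℝ} (hF : F.Nonempty) (hinj : ∀ t ∈ F, t.Injective)
    (habs : ∀ t ∈ F, ∃ x y, G.IsAbsorber x y t)
    (hdisj : (F : Set (Fin 8 → V)).PairwiseDisjoint (univ.image ·))
    (hB : ∀ x ∉ X, ∀ y ∉ X, B ≤ 2 * #{t ∈ F | G.IsAbsorber x y t})
    (hW : G.RobustlyConnects (univ \ (F.biUnion (univ.image ·) ∪ X)) M)
    (hM : 3 * (2 * #F + #X) ≤ M) :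
    ∃ p q P, #P ≤ 14 * #F + 4 * #X ∧ G.IsAbsorbingPath p q P B := by
  obtain ⟨C, p, q, hC, hchain⟩ := hW.exists_absorbing_chain hF hM
  set Y := F.biUnion (univ.image ·)
  refine ⟨p, q, C ∪ (Y ∪ X), ?_, fun U hUP hU hUB => ?_⟩
  · have hYcard : #Y ≤ #F * 8 := card_biUnion_le_card_mul _ _ _ fun t _ =>
      card_image_le.trans_eq (card_fin 8)
    have := card_union_le C (Y ∪ X)
    have := card_union_le Y X
    lia
  · have hUY : Disjoint U Y := hUP.mono_right (subset_union_left.trans subset_union_right)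
    have hUX : Disjoint U X := hUP.mono_right (subset_union_right.trans subset_union_right)
    obtain ⟨A, hAU, hAdisj, hA⟩ := exists_pair_assignment (r := G.IsAbsorber) (F := F) hU
      fun x hx y hy => mod_cast hUB.trans
        (hB x (disjoint_left.1 hUX hx) y (disjoint_left.1 hUX hy))
    have hAsub (t : Fin 8 → V) (ht : t ∈ F) : A t ⊆ U := hAU ▸ subset_biUnion_of_mem A ht
    have hAimage (s : Fin 8 → V) (hs : s ∈ F) (t : Fin 8 → V) (ht : t ∈ F) :
        Disjoint (A s) (univ.image t) :=
      hUY.mono (hAsub s hs) (subset_biUnion_of_mem (univ.image ·) ht)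
    rw [← hAU]
    refine hchain A (fun t ht => ?_) (fun s hs t ht hst => ?_) fun t ht =>
      hUP.mono_left (hAsub t ht)
    · obtain hAt | ⟨x, y, hxy, hAt, hxyt⟩ := hA t ht
      · obtain ⟨x, y, hxyt⟩ := habs t ht
        exact hAt ▸ hxyt.absorbs_empty (hinj t ht)
      · exact hAt ▸ hxyt.absorbs_pair (hinj t ht) hxy (hAt ▸ hAimage t ht t ht)
    · rw [Function.onFun, disjoint_union_left, disjoint_union_right, disjoint_union_right]
      exact ⟨⟨hdisj hs ht hst, (hAimage t ht s hs).symm⟩, hAimage s hs t ht, hAdisj hs ht hst⟩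

theorem MinDegree.exists_absorbers {η : ℝ} (hη : 0 < η) (hη1 : η ≤ 1) :
    ∃ a : ℝ, 0 < a ∧ ∃ n₀ : ℕ, ∀ {V : Type*} [Fintype V] {G : ThreeGraph V},
      G.MinDegree (7 / 16) → n₀ ≤ Fintype.card V → ∃ F : Finset (Fin 8 → V),
        #F ≤ η * Fintype.card V ∧ (∀ t ∈ F, t.Injective ∧ ∃ x y, G.IsAbsorber x y t) ∧
        (F : Set (Fin 8 → V)).PairwiseDisjoint (univ.image ·) ∧
        ∀ x ∉ G.exceptionalVertices η, ∀ y ∉ G.exceptionalVertices η,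
          a * Fintype.card V ≤ #{t ∈ F | G.IsAbsorber x y t} := by
  have hη12 : η ^ 12 ≤ η := pow_le_of_le_one hη.le hη1 (by norm_num)
  obtain ⟨n₀, hselect⟩ := exists_disjoint_tuples (ι := Fin 8) (c := η ^ 12 / 4)
    (β := η ^ 12 / 2048) (by positivity) (by linarith) (by positivity)
    (by rw [Fintype.card_fin]; push_cast; linarith)
  refine ⟨η ^ 12 / 4 * (η ^ 12 / 2048) / 8, by positivity, n₀, fun {V} _ G hG hn => ?_⟩
  set X := G.exceptionalVertices η
  obtain ⟨F, hFcard, hF, hFdisj, hFabs⟩ := hselect (I := Xᶜ ×ˢ Xᶜ) (X := ∅)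
    (good := fun i => {t | G.IsAbsorber i.1 i.2 t}) hn
    (by rw [card_product, ← sq]; exact Nat.pow_le_pow_left (card_le_univ _) 2)
    (fun i hi => by
      rw [mem_product, mem_compl, mem_compl] at hi
      simpa using hG.le_card_absorbers hi.1 hi.2)
    (by rw [card_empty, Nat.cast_zero, mul_zero]; positivity)
  simp only [mem_filter_univ, mem_product, mem_compl, Prod.exists] at hF hFabs
  exact ⟨F, hFcard.trans (by gcongr; linarith),
    fun t ht => ⟨(hF t ht).1, let ⟨x, y, _, hxy⟩ := (hF t ht).2.2; ⟨x, y, hxy⟩⟩, hFdisj,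
    fun x hx y hy => hFabs (x, y) ⟨hx, hy⟩⟩

theorem MinDegree.exists_isAbsorbingPath {α : ℝ} (hα : 0 < α) :
    ∃ a : ℝ, 0 < a ∧ ∃ n₀ : ℕ, ∀ {V : Type*} [Fintype V] {G : ThreeGraph V},
      G.MinDegree (7 / 16) → n₀ ≤ Fintype.card V → ∃ p q P,
        #P ≤ α * Fintype.card V ∧ G.IsAbsorbingPath p q P (a * Fintype.card V) := by
  obtain ⟨η, hη, hη1, hηα⟩ : ∃ η : ℝ, 0 < η ∧ η ≤ 1 / 34560 ∧ η ≤ α / 270 :=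
    ⟨min (1 / 34560) (α / 270), by positivity, min_le_left _ _, min_le_right _ _⟩
  obtain ⟨a, ha, n₀, habsorbers⟩ := MinDegree.exists_absorbers hη (by linarith)
  refine ⟨2 * a, by positivity, max n₀ 129, fun {V} _ G hG hn => ?_⟩
  obtain ⟨F, hFcard, hF, hFdisj, hFabs⟩ := habsorbers hG ((le_max_left _ _).trans hn)
  have hX := G.card_exceptionalVertices_le hη.le
  have hn129 : (129 : ℝ) ≤ Fintype.card V := mod_cast (le_max_right _ _).trans hn
  set n := (Fintype.card V : ℝ)
  set X := G.exceptionalVertices η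
  have hηn : η * n ≤ 1 / 34560 * n := by gcongr
  have hηαn : η * n ≤ α / 270 * n := by gcongr
  have hFne : F.Nonempty := by
    obtain ⟨x, hx⟩ : ∃ x, x ∉ X := by
      by_contra! h
      have : (#X : ℝ) = n := by rw [eq_univ_of_forall h, card_univ]
      linarith
    have : (0 : ℝ) < #{t ∈ F | G.IsAbsorber x x t} :=
      lt_of_lt_of_le (by positivity) (hFabs x hx x hx)
    exact (card_pos.1 (mod_cast this)).mono (filter_subset _ _)
  have hYX : #(F.biUnion (univ.image ·) ∪ X) ≤ 8 * #F + #X := by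
    have : #(F.biUnion (univ.image ·)) ≤ #F * 8 := card_biUnion_le_card_mul _ _ _ fun t _ =>
      card_image_le.trans_eq (card_fin 8)
    have := card_union_le (F.biUnion (univ.image ·)) X
    lia
  have hYX' : (#(F.biUnion (univ.image ·) ∪ X) : ℝ) ≤ 8 * #F + #X := mod_cast hYX
  obtain ⟨p, q, P, hP, hPabs⟩ := RobustlyConnects.exists_isAbsorbingPath hFne
    (fun t ht => (hF t ht).1) (fun t ht => (hF t ht).2) hFdisj
    (fun x hx y hy => (mul_assoc _ _ _).trans_le
      (mul_le_mul_of_nonneg_left (hFabs x hx y hy) zero_le_two))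
    (hG.robustlyConnects (M := 3 * (2 * #F + #X)) (by push_cast; linarith)) le_rfl
  have hP' : (#P : ℝ) ≤ 14 * #F + 4 * #X := mod_cast hP
  exact ⟨p, q, P, by linarith, hPabs⟩

theorem MinDegree.exists_robustlyConnects {ρ : ℝ} (hρ : 0 < ρ) :
    ∃ κ : ℝ, 0 < κ ∧ ∃ n₀ : ℕ, ∀ {V : Type*} [Fintype V] {G : ThreeGraph V},
      G.MinDegree (7 / 16) → n₀ ≤ Fintype.card V → ∀ X : Finset V,
      10 ^ 6 * (#X : ℝ) ≤ Fintype.card V → ∃ (R : Finset V) (M : ℕ), Disjoint R X ∧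
        #R ≤ ρ * Fintype.card V ∧ κ * Fintype.card V ≤ M ∧ G.RobustlyConnects R M := by
  obtain ⟨β, hβ, hβρ, hβ1⟩ : ∃ β : ℝ, 0 < β ∧ β ≤ ρ / 3 ∧ β ≤ 1 / 16384 / 72 :=
    ⟨min (ρ / 3) (1 / 16384 / 72), by positivity, min_le_left _ _, min_le_right _ _⟩
  obtain ⟨n₁, hselect⟩ := exists_disjoint_tuples (ι := Fin 3) (c := 1 / 16384) (by norm_num)
    (by norm_num) hβ (by rw [Fintype.card_fin]; push_cast; linarith)
  set κ : ℝ := 1 / 16384 * β / 16 with hκ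
  have hκ0 : 0 < κ := by positivity
  obtain ⟨n₂, hn₂⟩ := exists_nat_gt (1 / κ)
  refine ⟨κ, hκ0, max n₁ n₂, fun {V} _ G hG hn X hX => ?_⟩
  have hn₂' : (n₂ : ℝ) ≤ Fintype.card V := mod_cast (le_max_right _ _).trans hn
  set n := (Fintype.card V : ℝ)
  obtain ⟨F, hFcard, hF, hFdisj, hFconn⟩ := hselect (I := univ) (X := X)
    (good := fun i : V × V => G.connectors i.1 i.2) ((le_max_left _ _).trans hn)
    (by rw [card_univ, Fintype.card_prod, sq])
    (fun i _ => by simpa using hG.le_card_connectors i.1 i.2)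
    (by rw [Fintype.card_fin]; push_cast; linarith)
  have hR : (#(F.biUnion (univ.image ·)) : ℝ) ≤ #F * 3 :=
    mod_cast card_biUnion_le_card_mul _ _ _ fun t _ => card_image_le.trans_eq (card_fin 3)
  have hκn : 1 < κ * n := by
    rw [← div_lt_iff₀' hκ0]
    exact hn₂.trans_le hn₂'
  have hceil : (⌈κ * n⌉₊ : ℝ) < κ * n + 1 := Nat.ceil_lt_add_one (by positivity)
  refine ⟨F.biUnion (univ.image ·), ⌈κ * n⌉₊, ?_, ?_, Nat.le_ceil _, fun u v Y hY => ?_⟩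
  · refine (disjoint_biUnion_left _ _ _).2 fun t ht => disjoint_left.2 fun z hz => ?_
    obtain ⟨j, -, rfl⟩ := mem_image.1 hz
    exact (hF t ht).2.1 j
  · have : β * n ≤ ρ / 3 * n := by gcongr
    linarith
  · have hYR : (#Y : ℝ) ≤ ⌈κ * n⌉₊ := mod_cast hY
    have hYF : (#Y : ℝ) < #{t ∈ F | t ∈ G.connectors u v} := by
      calc (#Y : ℝ) < 2 * (κ * n) := by linarith
        _ = 1 / 16384 * β / 8 * n := by rw [hκ]; ring
        _ ≤ _ := hFconn (u, v) (mem_univ _)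
    obtain ⟨t, ht, htY⟩ := exists_disjoint_of_card_lt (B := (univ.image ·))
      (hFdisj.subset (filter_subset _ _)) (mod_cast hYF)
    rw [mem_filter, connectors, mem_filter_univ] at ht
    have himage : ({t 0, t 1, t 2} : Finset V) = univ.image t := by
      rw [show (univ : Finset (Fin 3)) = {0, 1, 2} by decide]
      simp only [image_insert, image_singleton]
    exact ⟨t 0, t 1, t 2, himage ▸ subset_biUnion_of_mem (univ.image ·) ht.1, himage ▸ htY,
      (hF t ht.1).1.ne (by decide), ht.2⟩

end ThreeGraph

/-! ### Complete tripartite subhypergraphs of dense hypergraphs -/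

theorem le_card_rich {α β : Type*} {A : Finset α} {B : Finset β} {r : α → β → Prop} {d : ℝ}
    (hd : 0 ≤ d) (hB : B.Nonempty) (h : d * #A * #B ≤ #{p ∈ A ×ˢ B | r p.1 p.2}) :
    d / 2 * #A ≤ #{a ∈ A | d / 2 * #B ≤ #{b ∈ B | r a b}} := by
  have hBpos : (0 : ℝ) < #B := mod_cast hB.card_pos
  refine le_of_mul_le_mul_right ?_ hBpos
  have hsum : (#{p ∈ A ×ˢ B | r p.1 p.2} : ℝ) = ∑ a ∈ A, (#{b ∈ B | r a b} : ℝ) := by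
    simp only [card_filter, sum_product, Nat.cast_sum]
  have hdeg (a : α) : (#{b ∈ B | r a b} : ℝ) ≤
      (if d / 2 * #B ≤ #{b ∈ B | r a b} then (#B : ℝ) else 0) + d / 2 * #B := by
    have : (#{b ∈ B | r a b} : ℝ) ≤ #B := mod_cast card_filter_le _ _
    have : 0 ≤ d / 2 * #B := by positivity
    split_ifs <;> linarith
  have := hsum.le.trans (sum_le_sum fun a _ => hdeg a)
  rw [sum_add_distrib, ← sum_filter, sum_const, sum_const, nsmul_eq_mul, nsmul_eq_mul] at this
  linarith

theorem exists_common_neighbors_of_le_degree {α β : Type*} {A : Finset α} {B : Finset β}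
    {r : α → β → Prop} {d : ℝ} {s : ℕ} (hA : A.Nonempty) (hsA : s ≤ #A)
    (hs : 2 * s ≤ d * #A) (h : ∀ a ∈ A, d * #B ≤ #{b ∈ B | r a b}) :
    ∃ A' ⊆ A, #A' = s ∧ d / 2 / 2 ^ #A * #B ≤ #{b ∈ B | ∀ a ∈ A', r a b} := by
  have hApos : (0 : ℝ) < #A := mod_cast hA.card_pos
  set Q := {b ∈ B | s ≤ #{a ∈ A | r a b}} with hQ
  have hdeg (b : β) : (#{a ∈ A | r a b} : ℝ) ≤
      (if s ≤ #{a ∈ A | r a b} then (#A : ℝ) else 0) + s := by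
    split_ifs with hb
    · exact le_add_of_le_of_nonneg (mod_cast card_filter_le _ _) (Nat.cast_nonneg s)
    · rw [zero_add]
      exact mod_cast (not_le.1 hb).le
  have hQcard : d / 2 * #B ≤ #Q := by
    refine le_of_mul_le_mul_left ?_ hApos
    have : d * #A * #B ≤ #A * #Q + s * #B := calc
      d * #A * #B = ∑ _ ∈ A, d * (#B : ℝ) := by rw [sum_const, nsmul_eq_mul]; ring
      _ ≤ ∑ a ∈ A, (#{b ∈ B | r a b} : ℝ) := sum_le_sum h
      _ = ∑ b ∈ B, (#{a ∈ A | r a b} : ℝ) :=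
        mod_cast sum_card_bipartiteAbove_eq_sum_card_bipartiteBelow r
      _ ≤ ∑ b ∈ B, ((if s ≤ #{a ∈ A | r a b} then (#A : ℝ) else 0) + s) :=
        sum_le_sum fun b _ => hdeg b
      _ = #A * #Q + s * #B := by
        rw [sum_add_distrib, ← sum_filter, sum_const, sum_const, nsmul_eq_mul, nsmul_eq_mul]
        ring
    have : 2 * s * (#B : ℝ) ≤ d * #A * #B := by gcongr
    linarith
  have hchoose (b : β) (hb : b ∈ Q) : ∃ A' ∈ A.powersetCard s, ∀ a ∈ A', r a b := by
    obtain ⟨A', hA', hcard⟩ := exists_subset_card_eq (mem_filter.1 hb).2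
    exact ⟨A', mem_powersetCard.2 ⟨hA'.trans (filter_subset _ _), hcard⟩,
      fun a ha => (mem_filter.1 (hA' ha)).2⟩
  choose! f hf hfr using hchoose
  obtain ⟨A', hA', hfiber⟩ := exists_le_card_fiber_of_nsmul_le_card_of_maps_to hf
    (powersetCard_nonempty.2 hsA) (b := (#Q : ℝ) / 2 ^ #A) <| by
      rw [nsmul_eq_mul, card_powersetCard, mul_div_assoc', div_le_iff₀ (by positivity), mul_comm]
      gcongr
      exact mod_cast Nat.choose_le_two_pow _ _
  rw [mem_powersetCard] at hA'
  refine ⟨A', hA'.1, hA'.2, ?_⟩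
  calc d / 2 / 2 ^ #A * #B = d / 2 * #B / 2 ^ #A := by ring
    _ ≤ #Q / 2 ^ #A := by gcongr
    _ ≤ _ := hfiber
    _ ≤ _ := Nat.cast_le.2 <| card_le_card fun b hb => by
      rw [mem_filter] at hb ⊢
      exact ⟨(mem_filter.1 hb.1).1, hb.2 ▸ hfr b hb.1⟩

theorem exists_common_neighbors {d : ℝ} (hd : 0 < d) (s : ℕ) :
    ∃ (N : ℕ) (d' : ℝ), 0 < d' ∧ ∀ {α β : Type*} {A : Finset α} {B : Finset β} {r : α → β → Prop},
      N ≤ #A → B.Nonempty → d * #A * #B ≤ #{p ∈ A ×ˢ B | r p.1 p.2} →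
        ∃ A' ⊆ A, #A' = s ∧ d' * #B ≤ #{b ∈ B | ∀ a ∈ A', r a b} := by
  obtain ⟨k, hk⟩ := exists_nat_ge (2 * s / (d / 2))
  obtain ⟨N, hN⟩ := exists_nat_ge ((k + s + 1 : ℕ) / (d / 2))
  rw [div_le_iff₀' (by positivity)] at hk hN
  refine ⟨N, d / 2 / 2 / 2 ^ (k + s + 1), by positivity, fun {α β A B r} hA hB h => ?_⟩
  obtain ⟨J, hJ, hJcard⟩ := exists_subset_card_eq (s := {a ∈ A | d / 2 * #B ≤ #{b ∈ B | r a b}})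
    (n := k + s + 1) <| Nat.cast_le.1 <| hN.trans <| by
      refine le_trans ?_ (le_card_rich hd.le hB h)
      gcongr
  obtain ⟨A', hA', hA's, hcommon⟩ := exists_common_neighbors_of_le_degree (A := J) (B := B)
    (r := r) (s := s) (card_pos.1 (by lia)) (by lia)
    (hk.trans (by rw [hJcard]; gcongr; lia)) fun a ha => (mem_filter.1 (hJ ha)).2
  exact ⟨A', hA'.trans (hJ.trans (filter_subset _ _)), hA's, hJcard ▸ hcommon⟩

theorem exists_complete_tripartite {d : ℝ} (hd : 0 < d) (s₁ s₂ s₃ : ℕ) :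
    ∃ t₀ : ℕ, ∀ {α β γ : Type*} {r : α → β → γ → Prop} {A : Finset α} {B : Finset β}
      {C : Finset γ} {t : ℕ}, t₀ ≤ t → #A ≤ t → #B ≤ t → #C ≤ t →
      d * t ^ 3 ≤ #{p ∈ A ×ˢ B ×ˢ C | r p.1 p.2.1 p.2.2} → ∃ A' ⊆ A, ∃ B' ⊆ B, ∃ C' ⊆ C,
        #A' = s₁ ∧ #B' = s₂ ∧ #C' = s₃ ∧ ∀ a ∈ A', ∀ b ∈ B', ∀ c ∈ C', r a b c := by
  obtain ⟨N₁, d₁, hd₁, hcommon₁⟩ := exists_common_neighbors hd s₁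
  obtain ⟨N₂, d₂, hd₂, hcommon₂⟩ := exists_common_neighbors hd₁ s₂
  obtain ⟨t₀, ht₀⟩ := exists_nat_ge ((N₁ + N₂ + s₃ / d₂ + 1) / d)
  rw [div_le_iff₀' hd] at ht₀
  refine ⟨t₀ + 1, fun {α β γ r A B C t} ht hA hB hC h => ?_⟩
  have htpos : (0 : ℝ) < t := mod_cast (by lia : 0 < t)
  have hABC : d * t ^ 3 ≤ #A * (#B * #C) := h.trans <| by
    rw [← Nat.cast_mul, ← Nat.cast_mul, ← card_product, ← card_product]
    exact mod_cast card_filter_le _ _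
  have hdt : N₁ + N₂ + s₃ / d₂ + 1 ≤ d * t := ht₀.trans (by gcongr; lia)
  have hs₃ : 0 ≤ s₃ / d₂ := by positivity
  have large (k : ℕ) (hk : d * (t : ℝ) ^ 3 ≤ k * (t * t)) : d * t ≤ k :=
    le_of_mul_le_mul_right (by linarith) (by positivity : (0 : ℝ) < t * t)
  have hA' : d * t ≤ #A := large _ (hABC.trans (by gcongr))
  have hB' : d * t ≤ #B := large _ (hABC.trans (by rw [mul_left_comm]; gcongr))
  have hC' : d * t ≤ #C := large _ (hABC.trans (by rw [← mul_assoc, mul_comm]; gcongr))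
  have hBne : B.Nonempty := card_pos.1 (Nat.cast_pos.1 (hB'.trans_lt' (by positivity)))
  have hCne : C.Nonempty := card_pos.1 (Nat.cast_pos.1 (hC'.trans_lt' (by positivity)))
  obtain ⟨A', hA'A, hA'card, hcard₁⟩ := hcommon₁ (A := A) (B := B ×ˢ C)
    (r := fun a p => r a p.1 p.2) ((Nat.cast_le (α := ℝ)).1 (by linarith)) (hBne.product hCne)
    (h.trans' (by
      rw [card_product, Nat.cast_mul, mul_assoc]
      gcongr
      calc (#A : ℝ) * (#B * #C) ≤ t * (t * t) := by gcongr
        _ = t ^ 3 := by ring))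
  rw [card_product, Nat.cast_mul, ← mul_assoc] at hcard₁
  obtain ⟨B', hB'B, hB'card, hcard₂⟩ := hcommon₂ (A := B) (B := C)
    (r := fun b c => ∀ a ∈ A', r a b c) ((Nat.cast_le (α := ℝ)).1 (by linarith)) hCne
    (by convert hcard₁)
  have hs₃C : (s₃ : ℝ) ≤ d₂ * #C := by
    rw [← div_le_iff₀' hd₂]
    linarith
  obtain ⟨C', hC'C, hC'card⟩ := exists_subset_card_eq (Nat.cast_le.1 (hs₃C.trans hcard₂))
  simp only [subset_iff, mem_filter] at hC'C
  exact ⟨A', hA'A, B', hB'B, C', fun c hc => (hC'C hc).1, hA'card, hB'card, hC'card,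
    fun a ha b hb c hc => (hC'C hc).2 b hb a ha⟩

/-! ### Fractional tilings -/

open MeasureTheory in
theorem measureReal_unitInterval_lt_le {c : ℝ} (hc : 0 ≤ c) :
    volume.real {τ : unitInterval | (τ : ℝ) < c} ≤ c := by
  refine ENNReal.toReal_le_of_le_ofReal hc ?_
  rw [unitInterval.volume_apply, ← sub_zero c, ← Real.volume_Ico]
  refine measure_mono ?_
  rintro - ⟨τ, hτ, rfl⟩
  exact ⟨τ.2.1, by simpa using hτ⟩

open MeasureTheory in
-- For `τ` uniform in `[0, 1]`, also `1 - τ` is uniform, so both counts have mean at most `∑ z`.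
theorem exists_threshold {κ : Type*} [Fintype κ] {z : κ → ℝ} (hz : ∀ i, 0 ≤ z i) :
    ∃ τ ≤ (1 / 2 : ℝ), (#{i | τ < z i} + #{i | 1 - τ < z i} : ℝ) ≤ 2 * ∑ i, z i := by
  let s (i : κ) : Set unitInterval := {τ | (τ : ℝ) < z i}
  let t (i : κ) : Set unitInterval := unitInterval.symm ⁻¹' s i
  have hs (i) : MeasurableSet (s i) := measurableSet_lt measurable_subtype_coe measurable_const
  have ht (i) : MeasurableSet (t i) := unitInterval.measurable_symm (hs i)
  have hint {A : Set unitInterval} (hA : MeasurableSet A) :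
      Integrable (A.indicator (1 : unitInterval → ℝ)) := (integrable_const 1).indicator hA
  have hst (i) :
      Integrable fun τ => (s i).indicator 1 τ + (t i).indicator (1 : unitInterval → ℝ) τ :=
    (hint (hs i)).add (hint (ht i))
  have hmean : ∫ τ, ∑ i, ((s i).indicator 1 τ + (t i).indicator 1 τ : ℝ) ≤ 2 * ∑ i, z i := by
    rw [integral_finsetSum _ fun i _ => hst i, mul_sum]
    refine sum_le_sum fun i _ => ?_
    rw [integral_add (hint (hs i)) (hint (ht i)), integral_indicator_one (hs i),
      integral_indicator_one (ht i),
      unitInterval.measurePreserving_symm.measureReal_preimage (hs i).nullMeasurableSet]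
    linarith [measureReal_unitInterval_lt_le (hz i)]
  obtain ⟨τ, hτ⟩ := exists_le_integral (integrable_finsetSum univ fun i _ => hst i)
  have hcount : (#{i | (τ : ℝ) < z i} + #{i | 1 - (τ : ℝ) < z i} : ℝ) ≤ 2 * ∑ i, z i := by
    refine le_trans (le_of_eq ?_) (hτ.trans hmean)
    simp [sum_add_distrib, Set.indicator_apply, s, t]
  obtain h | h := le_total (τ : ℝ) (1 / 2)
  · exact ⟨τ, h, hcount⟩
  · exact ⟨1 - τ, by linarith, by rwa [sub_sub_cancel, add_comm]⟩

theorem card_one_lt_add_le {κ : Type*} [Fintype κ] {z : κ → ℝ} (hz : ∀ i, 0 ≤ z i)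
    (hsum : ∑ i, z i ≤ Fintype.card κ / 4) :
    (#{p : κ × κ | 1 < z p.1 + z p.2} : ℝ) ≤ 7 / 16 * (Fintype.card κ : ℝ) ^ 2 := by
  obtain ⟨τ, hτ, hcount⟩ := exists_threshold hz
  let A : Finset κ := {i | 1 - τ < z i}
  let B : Finset κ := ({i | τ < z i} : Finset κ) \ A
  have hAB : (#B + #A : ℝ) = #{i | τ < z i} := mod_cast card_sdiff_add_card_eq_card
    (monotone_filter_right univ fun i _ (hi : 1 - τ < z i) => show τ < z i by linarith)
  have hsub : ({p | 1 < z p.1 + z p.2} : Finset (κ × κ)) ⊆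
      A ×ˢ univ ∪ (Aᶜ ×ˢ A ∪ B ×ˢ B) := by
    intro p hp
    simp only [A, B, mem_union, mem_product, mem_compl, mem_sdiff, mem_univ,
      mem_filter_univ] at hp ⊢
    grind
  have hcard : (#{p : κ × κ | 1 < z p.1 + z p.2} : ℝ) ≤
      #A * Fintype.card κ + ((Fintype.card κ - #A) * #A + #B * #B) := by
    rw [← Nat.cast_sub (card_le_univ A), ← card_compl, ← card_univ]
    refine mod_cast (card_le_card hsub).trans <| (card_union_le _ _).trans ?_
    simpa only [card_product] using Nat.add_le_add_left (card_union_le (Aᶜ ×ˢ A) (B ×ˢ B)) _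
  have hy : (2 * #A + #B : ℝ) ≤ Fintype.card κ / 2 := by linarith
  refine hcard.trans ?_
  generalize (Fintype.card κ : ℝ) = K at hy ⊢
  have : (#B : ℝ) ^ 2 ≤ (K / 2 - 2 * #A) ^ 2 := by gcongr; linarith
  have : (#A : ℝ) ^ 2 ≤ (K / 4) ^ 2 := by gcongr; linarith
  linarith

/-- The number of parts hosted by the cluster `x` when the `l`-th part of a tile is placed on the
cluster `q l`. -/
def hostLoad {κ : Type*} (q : Fin 4 → κ) (x : κ) : ℕ := #{l | q l = x}

theorem sum_hostLoad_mul {κ : Type*} [Fintype κ] (q : Fin 4 → κ) (y : κ → ℝ) :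
    ∑ x, hostLoad q x * y x = ∑ l, y (q l) := by
  rw [← sum_fiberwise univ q]
  refine sum_congr rfl fun x _ => ?_
  rw [sum_congr rfl fun l hl => congrArg y (mem_filter.1 hl).2, sum_const, nsmul_eq_mul, hostLoad]

section FractionalTiling

variable {κ : Type u} [Fintype κ] [Nonempty κ] {D : κ → κ → κ → Prop}

-- A good choice of `q 0 = q 1` is a vertex `i` minimising `y`.
theorem exists_sum_hostLoad_mul_le
    (hD : ∀ i, 7 / 16 * (Fintype.card κ : ℝ) ^ 2 < #{p : κ × κ | D i p.1 p.2}) (y : κ → ℝ) :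
    ∃ q : Fin 4 → κ, (q 0 = q 1 ∧ D (q 0) (q 2) (q 3)) ∧
      ∑ x, hostLoad q x * y x ≤ 4 / Fintype.card κ * ∑ x, y x := by
  obtain ⟨i, hi⟩ := Finite.exists_min y
  have hK : (0 : ℝ) < Fintype.card κ := mod_cast Fintype.card_pos
  set K := (Fintype.card κ : ℝ)
  have hz (x) : 0 ≤ y x - y i := sub_nonneg.2 (hi x)
  have hsum : ∑ x, (y x - y i) = ∑ x, y x - K * y i := by simp [K]
  have hmean : 4 / K * ∑ x, y x = 4 * y i + 4 / K * ∑ x, (y x - y i) := by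
    rw [hsum]
    field_simp
    ring
  suffices ∃ p : κ × κ, D i p.1 p.2 ∧
      (y p.1 - y i) + (y p.2 - y i) ≤ 4 / K * ∑ x, (y x - y i) by
    obtain ⟨p, hp, hle⟩ := this
    refine ⟨![i, i, p.1, p.2], ⟨rfl, hp⟩, ?_⟩
    rw [sum_hostLoad_mul, hmean, Fin.sum_univ_four]
    change y i + y i + y p.1 + y p.2 ≤ _
    linarith
  by_contra! hlt
  obtain hσ | hσ := (sum_nonneg fun x _ => hz x).eq_or_lt
  · obtain ⟨p, hp⟩ : ({p : κ × κ | D i p.1 p.2} : Finset _).Nonempty := by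
      rw [← card_pos, ← Nat.cast_pos (α := ℝ)]
      exact (by positivity : 0 ≤ 7 / 16 * K ^ 2).trans_lt (hD i)
    have hzero (x) : y x - y i = 0 :=
      (sum_eq_zero_iff_of_nonneg fun x _ => hz x).1 hσ.symm x (mem_univ x)
    rw [mem_filter_univ] at hp
    simpa [hzero] using hlt p hp
  · set σ : ℝ := ∑ x, (y x - y i)
    have hscaled : ∑ x, K / (4 * σ) * (y x - y i) ≤ K / 4 := by
      rw [← mul_sum]
      change K / (4 * σ) * σ ≤ K / 4
      field_simp
      rfl
    have hcard := card_one_lt_add_le (fun x => mul_nonneg (by positivity) (hz x)) hscaled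
    refine (hD i).not_ge (le_trans (mod_cast card_le_card fun p hp => ?_) hcard)
    rw [mem_filter_univ] at hp ⊢
    calc 1 = K / (4 * σ) * (4 / K * σ) := by field_simp
      _ < K / (4 * σ) * ((y p.1 - y i) + (y p.2 - y i)) := by gcongr; exact hlt p hp
      _ = _ := mul_add _ _ _

theorem const_mem_convexHull_hostLoad
    (hD : ∀ i, 7 / 16 * (Fintype.card κ : ℝ) ^ 2 < #{p : κ × κ | D i p.1 p.2}) :
    (fun _ => 4 / Fintype.card κ : κ → ℝ) ∈
      convexHull ℝ ((fun q x => (hostLoad q x : ℝ)) ''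
        {q : Fin 4 → κ | q 0 = q 1 ∧ D (q 0) (q 2) (q 3)}) := by
  by_contra hmem
  obtain ⟨f, c, hc, hf⟩ := geometric_hahn_banach_point_closed (convex_convexHull ℝ _)
    (((Set.toFinite _).image _).isClosed_convexHull ℝ) hmem
  have hfv (v : κ → ℝ) : f v = ∑ x, v x * f (Pi.single x 1) := by
    conv_lhs => rw [pi_eq_sum_univ' v]
    simp [map_sum, map_smul]
  obtain ⟨q, hq, hle⟩ := exists_sum_hostLoad_mul_le hD fun x => f (Pi.single x 1)
  have hlt := hc.trans (hf _ (subset_convexHull ℝ _ ⟨q, hq, rfl⟩))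
  rw [hfv, hfv, ← mul_sum] at hlt
  exact hlt.not_ge hle

theorem exists_fractional_tiling
    (hD : ∀ i, 7 / 16 * (Fintype.card κ : ℝ) ^ 2 < #{p : κ × κ | D i p.1 p.2}) :
    ∃ (ι : Type u) (_ : Fintype ι) (q : ι → Fin 4 → κ) (w : ι → ℝ),
      Fintype.card ι ≤ Fintype.card κ + 1 ∧ (∀ i, 0 ≤ w i) ∧ ∑ i, w i = 1 ∧
      (∀ i, q i 0 = q i 1 ∧ D (q i 0) (q i 2) (q i 3)) ∧
      ∀ x, ∑ i, w i * hostLoad (q i) x = 4 / Fintype.card κ := by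
  obtain ⟨ι, hι, z, w, hz, hindep, hw, hw₁, hwz⟩ :=
    eq_pos_convex_span_of_mem_convexHull (const_mem_convexHull_hostLoad hD)
  choose q hqD hqz using fun i => hz ⟨i, rfl⟩
  refine ⟨ι, hι, q, w, ?_, fun i => (hw i).le, hw₁, hqD, fun x => ?_⟩
  · refine hindep.card_le_finrank_succ.trans (Nat.add_le_add_right ?_ 1)
    exact (Submodule.finrank_le _).trans_eq (Module.finrank_fintype_fun_eq_card ℝ)
  · have := congrFun hwz x
    simp only [Finset.sum_apply, Pi.smul_apply, smul_eq_mul, ← hqz] at this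
    exact this

end FractionalTiling

/-! ### Almost perfect tilings by bits -/

theorem exists_disjoint_subsets {V : Type*} {A : Finset V} {q s : ℕ} (h : q * s ≤ #A) :
    ∃ P : Fin q → Finset V, Pairwise (Disjoint on P) ∧ (∀ i, #(P i) = s) ∧ ∀ i, P i ⊆ A := by
  obtain ⟨e⟩ := Function.Embedding.nonempty_of_card_le
    (show Fintype.card (Fin q × Fin s) ≤ Fintype.card A by simpa using h)
  let f (p : Fin q × Fin s) : V := e p
  have hf : f.Injective := Subtype.val_injective.comp e.injective
  refine ⟨fun i => univ.image fun j => f (i, j), fun i j hij => ?_, fun i => ?_, fun i => ?_⟩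
  · refine disjoint_left.2 fun x hx hy => ?_
    obtain ⟨a, -, rfl⟩ := mem_image.1 hx
    obtain ⟨b, -, hb⟩ := mem_image.1 hy
    exact hij (congrArg Prod.fst (hf hb)).symm
  · exact (card_image_of_injective univ (hf.comp (Prod.mk_right_injective i))).trans (card_fin s)
  · exact image_subset_iff.2 fun j _ => (e (i, j)).2

theorem card_biUnion_of_pairwise_disjoint {V σ : Type*} [Fintype σ] {B : σ → Finset V} {t : ℕ}
    (hB : Pairwise (Disjoint on B)) (hBt : ∀ x, #(B x) = t) :
    #(univ.biUnion B) = Fintype.card σ * t := by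
  rw [card_biUnion fun x _ y _ hxy => hB hxy]
  simp [hBt]

theorem card_mul_le_of_pairwise_disjoint {V σ : Type*} [Fintype V] [Fintype σ]
    {B : σ → Finset V} {t : ℕ} (hB : Pairwise (Disjoint on B)) (hBt : ∀ x, #(B x) = t) :
    Fintype.card σ * t ≤ Fintype.card V :=
  card_biUnion_of_pairwise_disjoint hB hBt ▸ card_le_univ _

theorem exists_disjoint_completion {V σ : Type*} [Fintype V] [Fintype σ] {B : σ → Finset V} {t : ℕ}
    (ht : 0 < t) (hB : Pairwise (Disjoint on B)) (hBt : ∀ x, #(B x) = t) :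
    ∃ (m : ℕ) (P : Fin m → Finset V), Pairwise (Disjoint on Sum.elim B P) ∧
      (∀ i, #(P i) = t) ∧ Fintype.card V < (Fintype.card σ + m + 1) * t := by
  let R := (univ.biUnion B)ᶜ
  obtain ⟨P, hP, hPt, hPR⟩ := exists_disjoint_subsets (Nat.div_mul_le_self #R t)
  have hBP (x i) : Disjoint (B x) (P i) :=
    disjoint_compl_right.mono (subset_biUnion_of_mem B (mem_univ x)) (hPR i)
  refine ⟨_, P, ?_, hPt, ?_⟩
  · rintro (x | i) (y | j) hxy
    · exact hB (ne_of_apply_ne Sum.inl hxy)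
    · exact hBP x j
    · exact (hBP y i).symm
    · exact hP (ne_of_apply_ne Sum.inr hxy)
  · have hR : #R + Fintype.card σ * t = Fintype.card V :=
      card_biUnion_of_pairwise_disjoint hB hBt ▸ card_compl_add_card _
    have := Nat.lt_div_mul_add ht (a := #R)
    linarith

theorem exists_pairwise_of_forall_finset_exists {τ β : Type*} [Finite τ] [Nonempty β]
    {P : τ → β → Prop} {r : β → β → Prop} [Std.Symm r]
    (h : ∀ (J : Finset τ), ∀ k ∉ J, ∀ f : τ → β, (∀ j ∈ J, P j (f j)) →
      ∃ b, P k b ∧ ∀ j ∈ J, r b (f j)) :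
    ∃ f : τ → β, (∀ j, P j (f j)) ∧ Pairwise (r on f) := by
  have := Fintype.ofFinite τ
  suffices ∀ J : Finset τ, ∃ f : τ → β, (∀ j ∈ J, P j (f j)) ∧ (J : Set τ).Pairwise (r on f) by
    simpa [Set.pairwise_univ] using this univ
  intro J
  induction J using Finset.induction_on with
  | empty => exact ⟨fun _ => Classical.arbitrary β, by simp⟩
  | insert k J hk ih =>
    obtain ⟨f, hf, hJ⟩ := ih
    obtain ⟨b, hb, hbJ⟩ := h J k hk f hf
    have hupd (j) (hj : j ∈ J) : Function.update f k b j = f j :=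
      Function.update_of_ne (ne_of_mem_of_not_mem hj hk) b f
    refine ⟨Function.update f k b, ?_, ?_⟩
    · simp +contextual [hupd, hf, hb]
    · rw [coe_insert, Set.pairwise_insert_of_symm]
      refine ⟨fun i hi j hj hij => ?_, fun j hj _ => ?_⟩
      · simpa only [Function.onFun, hupd i hi, hupd j hj] using hJ hi hj hij
      · simpa only [Function.onFun, hupd j hj, Function.update_self] using hbJ j hj

-- Round down the weights of an optimal fractional tiling, which has at most `card κ + 1` terms.
theorem exists_integral_tiling {κ : Type u} [Fintype κ] [Nonempty κ] {D : κ → κ → κ → Prop}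
    (hD : ∀ i, 7 / 16 * (Fintype.card κ : ℝ) ^ 2 < #{p : κ × κ | D i p.1 p.2}) {L : ℝ}
    (hL : 0 ≤ L) :
    ∃ (τ : Type u) (_ : Fintype τ) (q : τ → Fin 4 → κ),
      (∀ j, q j 0 = q j 1 ∧ D (q j 0) (q j 2) (q j 3)) ∧
      (∀ x, (∑ j, hostLoad (q j) x : ℝ) ≤ L) ∧
      L * Fintype.card κ / 4 ≤ Fintype.card τ + (Fintype.card κ + 1) := by
  obtain ⟨ι, _, q, w, hι, hw, hw₁, hq, hload⟩ := exists_fractional_tiling hD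
  have hι : (Fintype.card ι : ℝ) ≤ Fintype.card κ + 1 := mod_cast hι
  have hK : (0 : ℝ) < Fintype.card κ := mod_cast Fintype.card_pos
  set K := (Fintype.card κ : ℝ)
  let m (i : ι) : ℕ := ⌊L * K / 4 * w i⌋₊
  refine ⟨Σ i, Fin (m i), inferInstance, fun j => q j.1, fun j => hq j.1, fun x => ?_, ?_⟩
  · rw [Fintype.sum_sigma]
    calc ∑ i, ∑ _ : Fin (m i), (hostLoad (q i) x : ℝ)
        = ∑ i, m i * (hostLoad (q i) x : ℝ) := by simp
      _ ≤ ∑ i, L * K / 4 * w i * hostLoad (q i) x := by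
        gcongr with i
        exact Nat.floor_le (mul_nonneg (by positivity) (hw i))
      _ = L * K / 4 * ∑ i, w i * hostLoad (q i) x := by simp only [mul_sum, mul_assoc]
      _ = L := by
        rw [hload]
        field_simp
  · calc L * K / 4 = ∑ i, L * K / 4 * w i := by rw [← mul_sum, hw₁, mul_one]
      _ ≤ ∑ i, ((m i : ℝ) + 1) := sum_le_sum fun i _ => (Nat.lt_floor_add_one _).le
      _ = Fintype.card (Σ i, Fin (m i)) + Fintype.card ι := by simp [sum_add_distrib]
      _ ≤ _ := by gcongr

theorem card_biUnion_inter_le_hostLoad {V κ τ : Type*} {Cl : κ → Finset V}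
    (hCl : Pairwise (Disjoint on Cl)) {q : τ → Fin 4 → κ} {T : τ → Fin 4 → Finset V}
    {J : Finset τ} {s : ℕ} (hcard : ∀ j ∈ J, ∀ l, #(T j l) = s)
    (hT : ∀ j ∈ J, ∀ l, T j l ⊆ Cl (q j l)) (x : κ) :
    #((J.biUnion fun j => univ.biUnion (T j)) ∩ Cl x) ≤ s * ∑ j ∈ J, hostLoad (q j) x := by
  have hpart (j) (hj : j ∈ J) (l) : #(T j l ∩ Cl x) ≤ if q j l = x then s else 0 := by
    split_ifs with hx
    · exact (card_le_card inter_subset_left).trans (hcard j hj l).le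
    · rw [disjoint_iff_inter_eq_empty.1 (Disjoint.mono_left (hT j hj l) (hCl hx)), card_empty]
  rw [biUnion_inter, mul_sum]
  refine card_biUnion_le.trans (sum_le_sum fun j hj => ?_)
  rw [biUnion_inter]
  refine card_biUnion_le.trans ((sum_le_sum fun l _ => hpart j hj l).trans_eq ?_)
  rw [← sum_filter, sum_const, hostLoad, smul_eq_mul, mul_comm]

namespace ThreeGraph

variable {V : Type u} {G : ThreeGraph V}

/-- The ordered triples of `A × B × C` that are edges. -/
def edgesBetween (G : ThreeGraph V) (A B C : Finset V) : Finset (V × V × V) :=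
  {p ∈ A ×ˢ B ×ˢ C | G.Adj p.1 p.2.1 p.2.2}

theorem card_edgesBetween_le (A B C : Finset V) :
    #(G.edgesBetween A B C) ≤ #A * (#B * #C) := by
  simpa only [edgesBetween, card_product] using card_filter_le (A ×ˢ B ×ˢ C) _

theorem card_edgesBetween_le_sdiff (A B C Z : Finset V) :
    #(G.edgesBetween A B C) ≤ #(G.edgesBetween (A \ Z) (B \ Z) (C \ Z)) +
      (#(Z ∩ A) * (#B * #C) + (#A * (#(Z ∩ B) * #C) + #A * (#B * #(Z ∩ C)))) := by
  have hsub : G.edgesBetween A B C ⊆ G.edgesBetween (A \ Z) (B \ Z) (C \ Z) ∪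
      ((Z ∩ A) ×ˢ B ×ˢ C ∪ (A ×ˢ (Z ∩ B) ×ˢ C ∪ A ×ˢ B ×ˢ (Z ∩ C))) := by
    intro p
    simp only [edgesBetween, mem_union, mem_filter, mem_product, mem_sdiff, mem_inter]
    tauto
  simpa only [card_product] using (card_le_card hsub).trans <| (card_union_le _ _).trans <|
    Nat.add_le_add_left ((card_union_le _ _).trans (Nat.add_le_add_left (card_union_le _ _) _)) _

/-- `T` is an `s`-bit, a copy of the complete tripartite `3`-graph `K_{2s,s,s}`. Its large part is
split into the halves `T 0` and `T 1`, so that all four sets `T l` have size `s`. -/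
structure IsBit (G : ThreeGraph V) (s : ℕ) (T : Fin 4 → Finset V) : Prop where
  card_eq : ∀ l, #(T l) = s
  disjoint : Pairwise (Disjoint on T)
  adj : ∀ a ∈ T 0 ∪ T 1, ∀ b ∈ T 2, ∀ c ∈ T 3, G.Adj a b c

theorem exists_isBit_of_complete {A B C : Finset V} {s : ℕ} (hs : 0 < s) (hA : #A = 2 * s)
    (hB : #B = s) (hC : #C = s) (h : ∀ a ∈ A, ∀ b ∈ B, ∀ c ∈ C, G.Adj a b c) :
    ∃ T, G.IsBit s T ∧ T 0 ⊆ A ∧ T 1 ⊆ A ∧ T 2 = B ∧ T 3 = C := by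
  obtain ⟨a, ha⟩ : A.Nonempty := card_pos.1 (by lia)
  obtain ⟨b, hb⟩ : B.Nonempty := card_pos.1 (by lia)
  obtain ⟨c, hc⟩ : C.Nonempty := card_pos.1 (by lia)
  have hAB : Disjoint A B := disjoint_left.2 fun x hx hy => G.ne₁₂ (h x hx x hy c hc) rfl
  have hAC : Disjoint A C := disjoint_left.2 fun x hx hy => (h x hx b hb x hy).ne₁₃ rfl
  have hBC : Disjoint B C := disjoint_left.2 fun x hx hy => (h a ha x hx x hy).ne₂₃ rfl
  obtain ⟨P, hP, hPs, hPA⟩ := exists_disjoint_subsets hA.ge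
  have hP₀₁ : Disjoint (P 0) (P 1) := hP (by decide)
  have hPB (i) := hAB.mono_left (hPA i)
  have hPC (i) := hAC.mono_left (hPA i)
  refine ⟨![P 0, P 1, B, C], ⟨fun l => ?_, ?_, fun x hx => h x ?_⟩, hPA 0, hPA 1, rfl, rfl⟩
  · fin_cases l
    exacts [hPs 0, hPs 1, hB, hC]
  · refine (pairwise_disjoint_on _).2 fun l m hlm => ?_
    fin_cases l <;> fin_cases m <;>
      first | exact absurd hlm (by decide) | assumption | exact hPB _ | exact hPC _
  · exact union_subset (hPA 0) (hPA 1) hx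

theorem exists_isBit_sdiff {d : ℝ} (hd : 0 < d) {s : ℕ} (hs : 0 < s) :
    ∃ t₀ : ℕ, ∀ {V : Type u} {G : ThreeGraph V} {A : Fin 4 → Finset V} {Z : Finset V} {t : ℕ},
      t₀ ≤ t → A 0 = A 1 → (∀ l, #(A l) = t) → (∀ l, (#(Z ∩ A l) : ℝ) ≤ d / 6 * t) →
      d * t ^ 3 ≤ #(G.edgesBetween (A 0) (A 2) (A 3)) →
      ∃ T, G.IsBit s T ∧ ∀ l, T l ⊆ A l \ Z := by
  obtain ⟨t₀, ht₀⟩ := exists_complete_tripartite (half_pos hd) (2 * s) s s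
  refine ⟨t₀, fun {V G A Z t} ht hA hcard hZ hdense => ?_⟩
  have hle (l) : #(A l \ Z) ≤ t := (card_le_card sdiff_subset).trans (hcard l).le
  have hdense' : d / 2 * t ^ 3 ≤ #(G.edgesBetween (A 0 \ Z) (A 2 \ Z) (A 3 \ Z)) := by
    have hloss : (#(G.edgesBetween (A 0) (A 2) (A 3)) : ℝ) ≤
        #(G.edgesBetween (A 0 \ Z) (A 2 \ Z) (A 3 \ Z)) +
          (#(Z ∩ A 0) * (t * t) + (t * (#(Z ∩ A 2) * t) + t * (t * #(Z ∩ A 3)))) := by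
      simpa only [hcard, Nat.cast_add, Nat.cast_mul] using
        (Nat.cast_le (α := ℝ)).2 (card_edgesBetween_le_sdiff (G := G) (A 0) (A 2) (A 3) Z)
    have hZt (l) := mul_le_mul_of_nonneg_right (hZ l) (sq_nonneg (t : ℝ))
    linarith [hZt 0, hZt 2, hZt 3]
  obtain ⟨A', hA', B', hB', C', hC', cA, cB, cC, h⟩ :=
    ht₀ ht (hle 0) (hle 2) (hle 3) hdense'
  obtain ⟨T, hT, h₀, h₁, rfl, rfl⟩ := exists_isBit_of_complete hs cA cB cC h
  refine ⟨T, hT, fun l => ?_⟩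
  fin_cases l
  exacts [h₀.trans hA', h₁.trans (hA ▸ hA'), hB', hC']

/-- A family of vertex-disjoint `s`-bits. -/
structure IsBitTiling (G : ThreeGraph V) {ι : Type*} (s : ℕ) (T : ι → Fin 4 → Finset V) :
    Prop where
  isBit : ∀ i, G.IsBit s (T i)
  disjoint : ∀ ⦃i j⦄, i ≠ j → ∀ l m, Disjoint (T i l) (T j m)

theorem IsBitTiling.pairwise_disjoint {ι : Type*} {s : ℕ} {T : ι → Fin 4 → Finset V}
    (hT : G.IsBitTiling s T) : Pairwise (Disjoint on fun p : ι × Fin 4 => T p.1 p.2) := by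
  rintro ⟨i, l⟩ ⟨j, m⟩ hne
  obtain rfl | hij := eq_or_ne i j
  · exact (hT.isBit i).disjoint fun hlm => hne (congrArg _ hlm)
  · exact hT.disjoint hij l m

theorem IsBitTiling.sumElim {ι κ : Type*} {s : ℕ} {T : ι → Fin 4 → Finset V}
    {T' : κ → Fin 4 → Finset V} (hT : G.IsBitTiling s T) (hT' : G.IsBitTiling s T')
    (h : ∀ i j l m, Disjoint (T i l) (T' j m)) : G.IsBitTiling s (Sum.elim T T') where
  isBit := Sum.forall.2 ⟨hT.isBit, hT'.isBit⟩
  disjoint := by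
    rintro (i | i) (j | j) hij l m
    · exact hT.disjoint (ne_of_apply_ne Sum.inl hij) l m
    · exact h i j l m
    · exact (h j i m l).symm
    · exact hT'.disjoint (ne_of_apply_ne Sum.inr hij) l m

theorem IsBit.exists_isBitTiling_sdiff {t : ℕ} {T : Fin 4 → Finset V} (hT : G.IsBit t T)
    {W : Finset V} {q s : ℕ} (hW : ∀ l, q * s ≤ #(T l \ W)) :
    ∃ T' : Fin q → Fin 4 → Finset V, G.IsBitTiling s T' ∧ ∀ i l, T' i l ⊆ T l \ W := by
  choose P hP hPs hPT using fun l => exists_disjoint_subsets (hW l)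
  have hsub (i l) : P l i ⊆ T l := (hPT l i).trans sdiff_subset
  have hlm {l m} (h : l ≠ m) (i j) : Disjoint (P l i) (P m j) :=
    (hT.disjoint h).mono (hsub i l) (hsub j m)
  refine ⟨fun i l => P l i, ⟨fun i => ⟨fun l => hPs l i, fun l m h => hlm h i i, ?_⟩, ?_⟩,
    fun i l => hPT l i⟩
  · exact fun a ha b hb c hc =>
      hT.adj a (union_subset_union (hsub i 0) (hsub i 1) ha) b (hsub i 2 hb) c (hsub i 3 hc)
  · intro i j hij l m
    obtain rfl | h := eq_or_ne l m
    exacts [hP l hij, hlm h i j]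

theorem IsBitTiling.exists_isBitTiling_sdiff {ι : Type*} {t : ℕ} {T : ι → Fin 4 → Finset V}
    (hT : G.IsBitTiling t T) {W : Finset V} {q s : ℕ} (hW : ∀ i l, q * s ≤ #(T i l \ W)) :
    ∃ T' : ι × Fin q → Fin 4 → Finset V, G.IsBitTiling s T' ∧ ∀ p l, Disjoint (T' p l) W := by
  choose T' hT' hsub using fun i => (hT.isBit i).exists_isBitTiling_sdiff (hW i)
  refine ⟨fun p => T' p.1 p.2, ⟨fun p => (hT' p.1).isBit p.2, ?_⟩,
    fun p l => disjoint_sdiff_self_left.mono_left (hsub p.1 p.2 l)⟩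
  rintro ⟨i, a⟩ ⟨j, b⟩ hne l m
  obtain rfl | hij := eq_or_ne i j
  · exact (hT' i).disjoint (fun hab => hne (congrArg _ hab)) l m
  · exact (hT.disjoint hij l m).mono ((hsub i a l).trans sdiff_subset)
      ((hsub j b m).trans sdiff_subset)

-- The bits are chosen greedily: the load bounds what the earlier bits use of each cluster.
theorem exists_isBitTiling_of_hostLoad_le {d : ℝ} (hd : 0 < d) {s : ℕ} (hs : 0 < s) :
    ∃ t₀ : ℕ, ∀ {V : Type u} {G : ThreeGraph V} {κ τ : Type*} [Fintype τ] {Cl : κ → Finset V}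
      {q : τ → Fin 4 → κ} {t : ℕ}, t₀ ≤ t → Pairwise (Disjoint on Cl) → (∀ x, #(Cl x) = t) →
      (∀ j, q j 0 = q j 1 ∧ d * t ^ 3 ≤ #(G.edgesBetween (Cl (q j 0)) (Cl (q j 2)) (Cl (q j 3)))) →
      (∀ x, ((s * ∑ j, hostLoad (q j) x : ℕ) : ℝ) ≤ d / 6 * t) →
      ∃ T : τ → Fin 4 → Finset V, G.IsBitTiling s T ∧ ∀ j l, T j l ⊆ Cl (q j l) := by
  obtain ⟨t₀, ht₀⟩ := exists_isBit_sdiff hd hs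
  refine ⟨t₀, fun {V G κ τ} _ {Cl q t} ht hCl hcard hq hload => ?_⟩
  have : Std.Symm fun B B' : Fin 4 → Finset V => ∀ l m, Disjoint (B l) (B' m) :=
    ⟨fun B B' h l m => (h m l).symm⟩
  obtain ⟨T, hT, hdisj⟩ := exists_pairwise_of_forall_finset_exists
    (P := fun j B => G.IsBit s B ∧ ∀ l, B l ⊆ Cl (q j l))
    (r := fun B B' => ∀ l m, Disjoint (B l) (B' m))
    fun J k _ T hT => by
      let Z := J.biUnion fun j => univ.biUnion (T j)
      have hZ (x) : (#(Z ∩ Cl x) : ℝ) ≤ d / 6 * t := by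
        refine le_trans (mod_cast ?_) (hload x)
        refine (card_biUnion_inter_le_hostLoad hCl (fun j hj => (hT j hj).1.card_eq)
          (fun j hj => (hT j hj).2) x).trans ?_
        gcongr
        exact subset_univ J
      obtain ⟨B, hB, hBsub⟩ := ht₀ (A := fun l => Cl (q k l)) ht (congrArg Cl (hq k).1)
        (fun l => hcard _) (fun l => hZ _) (hq k).2
      refine ⟨B, ⟨hB, fun l => (hBsub l).trans sdiff_subset⟩, fun j hj l m => ?_⟩
      refine disjoint_sdiff_self_left.mono (hBsub l) ?_
      exact (subset_biUnion_of_mem (T j) (mem_univ m)).trans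
        (subset_biUnion_of_mem (fun j => univ.biUnion (T j)) hj)
  exact ⟨T, ⟨fun j => (hT j).1, hdisj⟩, fun j => (hT j).2⟩

theorem IsBitTiling.exists_isBitTiling_disjoint {ι : Type*} {t : ℕ}
    {T : ι → Fin 4 → Finset V} (hT : G.IsBitTiling t T) {W : Finset V} {c : ℝ} (hc : c ≤ 1)
    (hW : ∀ i l, (#(W ∩ T i l) : ℝ) ≤ c * t) {s : ℕ} (hs : 0 < s) :
    ∃ (q : ℕ) (T' : ι × Fin q → Fin 4 → Finset V), G.IsBitTiling s T' ∧
      (∀ p l, Disjoint (T' p l) W) ∧ (1 - c) * t ≤ s * (q + 1) := by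
  have hs' : (0 : ℝ) < s := Nat.cast_pos.2 hs
  have hq := Nat.floor_le (show 0 ≤ (1 - c) * t / s by have := sub_nonneg.2 hc; positivity)
  rw [le_div_iff₀ hs'] at hq
  obtain ⟨T', hT', hdisj⟩ := hT.exists_isBitTiling_sdiff (W := W) (s := s)
    (q := ⌊(1 - c) * t / s⌋₊) fun i l => by
    have hsplit := card_sdiff_add_card_inter (T i l) W
    rw [(hT.isBit i).card_eq, inter_comm] at hsplit
    have hsplit : (#(T i l \ W) : ℝ) + #(W ∩ T i l) = t := mod_cast hsplit
    refine (Nat.cast_le (α := ℝ)).1 ?_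
    push_cast
    linarith [hW i l]
  refine ⟨_, T', hT', hdisj, ?_⟩
  rw [← div_le_iff₀' hs']
  exact (Nat.lt_floor_add_one _).le

variable [Fintype V]

theorem IsBitTiling.card_mul_le {ι : Type*} [Fintype ι] {s : ℕ}
    {T : ι → Fin 4 → Finset V} (hT : G.IsBitTiling s T) :
    Fintype.card ι * 4 * s ≤ Fintype.card V := by
  simpa using card_mul_le_of_pairwise_disjoint hT.pairwise_disjoint
    fun p => (hT.isBit p.1).card_eq p.2

theorem card_edgesBetween_univ (A : Finset V) :
    #(G.edgesBetween A univ univ) = ∑ v ∈ A, #(G.link v) := by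
  simp only [edgesBetween, link, card_filter, sum_product, univ_product_univ]

theorem card_edgesBetween_univ_le {κ : Type*} [Fintype κ] (A : Finset V) (Cl : κ → Finset V) :
    #(G.edgesBetween A univ univ) ≤ ∑ p : κ × κ, #(G.edgesBetween A (Cl p.1) (Cl p.2)) +
      2 * (#A * (#(univ.biUnion Cl)ᶜ * Fintype.card V)) := by
  set Y := univ.biUnion Cl
  have hsub : G.edgesBetween A univ univ ⊆
      (univ.biUnion fun p : κ × κ => G.edgesBetween A (Cl p.1) (Cl p.2)) ∪
        (A ×ˢ Yᶜ ×ˢ univ ∪ A ×ˢ univ ×ˢ Yᶜ) := by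
    intro p
    simp only [Y, edgesBetween, mem_union, mem_filter, mem_product, mem_biUnion, mem_compl,
      mem_univ, true_and, Prod.exists]
    grind
  refine (card_le_card hsub).trans <| (card_union_le _ _).trans <|
    add_le_add card_biUnion_le <| (card_union_le _ _).trans_eq ?_
  simp only [card_product, card_univ]
  ring

theorem MinDegree.lt_card_dense_pairs {κ : Type*} [Fintype κ] [Nonempty κ] {Cl : κ → Finset V}
    {t : ℕ} {d γ : ℝ} (hd : 0 ≤ d) (hγ : 0 < γ) (hdeg : G.MinDegree (d + γ))
    (hCl : Pairwise (Disjoint on Cl)) (hcard : ∀ x, #(Cl x) = t)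
    (hn : Fintype.card V < (Fintype.card κ + 1) * t) (hnt : 4 * t ≤ γ * Fintype.card V) (i : κ) :
    d * (Fintype.card κ : ℝ) ^ 2 <
      #{p : κ × κ | γ / 4 * t ^ 3 ≤ #(G.edgesBetween (Cl i) (Cl p.1) (Cl p.2))} := by
  set Q : Finset (κ × κ) := {p | γ / 4 * t ^ 3 ≤ #(G.edgesBetween (Cl i) (Cl p.1) (Cl p.2))}
  have ht : (0 : ℝ) < t := by
    rw [Nat.cast_pos, Nat.pos_iff_ne_zero]
    rintro rfl
    simp at hn
  have hcover := card_biUnion_of_pairwise_disjoint hCl hcard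
  have hle : (Fintype.card κ * t : ℝ) ≤ Fintype.card V := mod_cast hcover ▸ card_le_univ _
  have hleft : (#(univ.biUnion Cl)ᶜ : ℝ) ≤ t := by
    rw [card_compl, hcover]
    exact mod_cast (by lia : Fintype.card V - Fintype.card κ * t ≤ t)
  have hlower : t * ((d + γ) * Fintype.card V ^ 2) ≤ #(G.edgesBetween (Cl i) univ univ) := by
    rw [card_edgesBetween_univ, ← hcard i, ← nsmul_eq_mul, Nat.cast_sum]
    exact card_nsmul_le_sum _ _ _ fun v _ => hdeg v
  have hupper : (#(G.edgesBetween (Cl i) univ univ) : ℝ) ≤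
      ∑ p : κ × κ, (#(G.edgesBetween (Cl i) (Cl p.1) (Cl p.2)) : ℝ) +
        2 * (t * (t * Fintype.card V)) := by
    refine le_trans (Nat.cast_le.2 (card_edgesBetween_univ_le _ Cl)) ?_
    push_cast [hcard]
    gcongr
  have hpair (p : κ × κ) : (#(G.edgesBetween (Cl i) (Cl p.1) (Cl p.2)) : ℝ) ≤
      γ / 4 * t ^ 3 + if p ∈ Q then (t : ℝ) ^ 3 else 0 := by
    split_ifs with hp
    · have : (#(G.edgesBetween (Cl i) (Cl p.1) (Cl p.2)) : ℝ) ≤ t * (t * t) := by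
        simpa [hcard] using (Nat.cast_le (α := ℝ)).2
          (card_edgesBetween_le (G := G) (Cl i) (Cl p.1) (Cl p.2))
      linarith [(by positivity : 0 ≤ γ / 4 * (t : ℝ) ^ 3)]
    · rw [mem_filter_univ, not_le] at hp
      linarith
  have hsum := sum_le_sum fun p (_ : p ∈ univ) => hpair p
  rw [sum_add_distrib, sum_const, card_univ, Fintype.card_prod, sum_ite_mem, univ_inter,
    sum_const, nsmul_eq_mul, nsmul_eq_mul, Nat.cast_mul] at hsum
  have hK : (0 : ℝ) < Fintype.card κ := mod_cast Fintype.card_pos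
  set n := (Fintype.card V : ℝ)
  set K := (Fintype.card κ : ℝ)
  refine lt_of_mul_lt_mul_right ?_ (pow_nonneg ht.le 3)
  have hsq : t * ((d + γ / 2) * (K * t) ^ 2) ≤ t * ((d + γ / 2) * n ^ 2) := by gcongr
  have hrest := mul_le_mul_of_nonneg_right hnt (by positivity : 0 ≤ t * n)
  have : 0 < γ / 4 * K ^ 2 * t ^ 3 := by positivity
  linarith

theorem exists_isBitTiling_of_dense_pairs {d : ℝ} (hd : 0 < d) {s : ℕ} (hs : 0 < s) :
    ∃ t₀ : ℕ, ∀ {V : Type u} {G : ThreeGraph V} {κ : Type u} [Fintype κ] [Nonempty κ]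
      {Cl : κ → Finset V} {t : ℕ}, t₀ ≤ t → Pairwise (Disjoint on Cl) → (∀ x, #(Cl x) = t) →
      (∀ i, 7 / 16 * (Fintype.card κ : ℝ) ^ 2 <
        #{p : κ × κ | d * t ^ 3 ≤ #(G.edgesBetween (Cl i) (Cl p.1) (Cl p.2))}) →
      ∃ (τ : Type u) (_ : Fintype τ) (T : τ → Fin 4 → Finset V), G.IsBitTiling s T ∧
        (∀ x, (#((univ.biUnion fun j => univ.biUnion (T j)) ∩ Cl x) : ℝ) ≤ d / 6 * t) ∧
        d / 6 * t * Fintype.card κ ≤ 4 * s * (Fintype.card τ + (Fintype.card κ + 1)) := by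
  obtain ⟨t₀, ht₀⟩ := exists_isBitTiling_of_hostLoad_le hd hs
  refine ⟨t₀, fun {V G κ} _ _ {Cl t} ht hCl hcard hdense => ?_⟩
  have hs' : (0 : ℝ) < s := Nat.cast_pos.2 hs
  obtain ⟨τ, _, q, hq, hload, hτ⟩ := exists_integral_tiling
    (D := fun i j l => d * t ^ 3 ≤ #(G.edgesBetween (Cl i) (Cl j) (Cl l)))
    (fun i => by convert hdense i) (by positivity : 0 ≤ d / 6 * t / s)
  have hload (x) : ((s * ∑ j, hostLoad (q j) x : ℕ) : ℝ) ≤ d / 6 * t := by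
    push_cast
    exact (le_div_iff₀' hs').1 (hload x)
  obtain ⟨T, hT, hTCl⟩ := ht₀ ht hCl hcard hq hload
  refine ⟨τ, inferInstance, T, hT, fun x => le_trans (Nat.cast_le.2 ?_) (hload x), ?_⟩
  · exact card_biUnion_inter_le_hostLoad hCl (fun j _ => (hT.isBit j).card_eq)
      (fun j _ => hTCl j) x
  · calc d / 6 * t * Fintype.card κ = 4 * s * (d / 6 * t / s * Fintype.card κ / 4) := by field_simp
      _ ≤ _ := by gcongr

/- The clusters are the parts of the given bits together with blocks covering the rest. A tiling of
the reduced hypergraph uses only a small proportion of every cluster, so that what is left of the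
given bits can be cut into smaller bits. -/
theorem exists_isBitTiling_improving {γ : ℝ} (hγ : 0 < γ) (hγ₁ : γ ≤ 1) {s : ℕ} (hs : 0 < s) :
    ∃ t₀ : ℕ, ∀ {V : Type u} [Fintype V] {G : ThreeGraph V} {ι : Type u} [Fintype ι]
      {T : ι → Fin 4 → Finset V} {t : ℕ}, t₀ ≤ t → 0 < t → 4 * t ≤ γ * Fintype.card V →
      G.MinDegree (7 / 16 + γ) → G.IsBitTiling t T →
      ∃ (τ : Type u) (_ : Fintype τ) (T' : τ → Fin 4 → Finset V), G.IsBitTiling s T' ∧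
        (Fintype.card V - 4 * s * Fintype.card τ : ℝ) ≤
          (1 - γ / 24) * (Fintype.card V - 4 * t * Fintype.card ι) +
            (γ / 24 * t + 5 * s * (Fintype.card V / t) + 4 * s) := by
  obtain ⟨t₀, ht₀⟩ := exists_isBitTiling_of_dense_pairs (by positivity : 0 < γ / 4) hs
  refine ⟨t₀, fun {V} _ {G ι} _ {T t} ht htpos hnt hdeg hT => ?_⟩
  obtain ⟨m, P, hCl, hP, hn⟩ := exists_disjoint_completion htpos hT.pairwise_disjoint
    fun p => (hT.isBit p.1).card_eq p.2
  let Cl := Sum.elim (fun p : ι × Fin 4 => T p.1 p.2) P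
  have hcard : ∀ x, #(Cl x) = t := Sum.forall.2 ⟨fun p => (hT.isBit p.1).card_eq p.2, hP⟩
  rw [← Fintype.card_fin m, ← Fintype.card_sum] at hn
  have : Nonempty ((ι × Fin 4) ⊕ Fin m) := by
    by_contra hempty
    rw [not_nonempty_iff, ← Fintype.card_eq_zero_iff] at hempty
    rw [hempty, zero_add, one_mul, ← Nat.cast_lt (α := ℝ)] at hn
    linarith [mul_le_mul_of_nonneg_right hγ₁ (Nat.cast_nonneg (α := ℝ) (Fintype.card V))]
  obtain ⟨τ, _, T₁, hT₁, hload, hτ⟩ := ht₀ ht hCl hcard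
    (hdeg.lt_card_dense_pairs (by norm_num) hγ hCl hcard hn hnt)
  obtain ⟨q, T₂, hT₂, hdisj, hq⟩ := hT.exists_isBitTiling_disjoint
    (by linarith : γ / 4 / 6 ≤ 1) (fun i l => hload (.inl (i, l))) hs
  refine ⟨τ ⊕ (ι × Fin q), inferInstance, Sum.elim T₁ T₂, hT₁.sumElim hT₂ fun i j l m => ?_, ?_⟩
  · refine ((hdisj j m).mono_right ?_).symm
    exact (subset_biUnion_of_mem (T₁ i) (mem_univ l)).trans
      (subset_biUnion_of_mem (fun j => univ.biUnion (T₁ j)) (mem_univ i))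
  · have hκ : (Fintype.card ((ι × Fin 4) ⊕ Fin m) : ℝ) ≤ Fintype.card V / t := by
      rw [le_div_iff₀ (by positivity)]
      exact mod_cast card_mul_le_of_pairwise_disjoint hCl hcard
    have hι : (Fintype.card ι * 4 : ℝ) ≤ Fintype.card V / t := by
      rw [le_div_iff₀ (by positivity)]
      exact mod_cast hT.card_mul_le
    have hn : (Fintype.card V : ℝ) ≤ (Fintype.card ((ι × Fin 4) ⊕ Fin m) + 1) * t :=
      mod_cast hn.le
    rw [Fintype.card_sum (α := τ), Fintype.card_prod ι (Fin q), Fintype.card_fin]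
    push_cast
    linarith [mul_le_mul_of_nonneg_left hκ (by positivity : 0 ≤ 4 * (s : ℝ)),
      mul_le_mul_of_nonneg_left hι s.cast_nonneg,
      mul_le_mul_of_nonneg_left hn (by positivity : 0 ≤ γ / 24),
      mul_le_mul_of_nonneg_left hq (by positivity : 0 ≤ 4 * (Fintype.card ι : ℝ))]

/-- Every large `3`-graph of relative minimum degree at least `7 / 16 + γ` has, for each bit size
`s`, a tiling by `s`-bits that misses at most a proportion `ε` of the vertices. -/
def HasAlmostTilings (γ ε : ℝ) : Prop :=
  ∀ ⦃s : ℕ⦄, 0 < s → ∃ n₀ : ℕ, ∀ {V : Type u} [Fintype V] {G : ThreeGraph V},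
    G.MinDegree (7 / 16 + γ) → n₀ ≤ Fintype.card V →
    ∃ (ι : Type u) (_ : Fintype ι) (T : ι → Fin 4 → Finset V), G.IsBitTiling s T ∧
      (Fintype.card V - 4 * s * Fintype.card ι : ℝ) ≤ ε * Fintype.card V

theorem HasAlmostTilings.improve {γ ε ξ : ℝ} (hγ : 0 < γ) (hγ₁ : γ ≤ 1) (hξ : 0 < ξ)
    (h : HasAlmostTilings.{u} γ ε) : HasAlmostTilings.{u} γ ((1 - γ / 24) * ε + ξ) := by
  intro s hs
  obtain ⟨t₀, ht₀⟩ := exists_isBitTiling_improving hγ hγ₁ hs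
  obtain ⟨t₁, ht₁⟩ := exists_nat_ge (10 * s / ξ)
  let t := max (max t₀ t₁) 1
  have ht : 0 < t := lt_max_of_lt_right one_pos
  obtain ⟨n₁, hn₁⟩ := h ht
  obtain ⟨n₂, hn₂⟩ := exists_nat_ge (4 * t / γ)
  obtain ⟨n₃, hn₃⟩ := exists_nat_ge ((γ / 24 * t + 4 * s) / (ξ / 2))
  refine ⟨max n₁ (max n₂ n₃), fun {V} _ {G} hdeg hn => ?_⟩
  obtain ⟨hn₁', hn₂', hn₃'⟩ : n₁ ≤ Fintype.card V ∧ n₂ ≤ Fintype.card V ∧ n₃ ≤ Fintype.card V := by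
    simpa using hn
  obtain ⟨ι, _, T, hT, hcover⟩ := hn₁ hdeg hn₁'
  have ht₁ : 10 * s / ξ ≤ t := ht₁.trans (mod_cast (le_max_right t₀ t₁).trans (le_max_left _ 1))
  have hn₂ : 4 * t / γ ≤ Fintype.card V := hn₂.trans (mod_cast hn₂')
  have hn₃ : (γ / 24 * t + 4 * s) / (ξ / 2) ≤ Fintype.card V := hn₃.trans (mod_cast hn₃')
  obtain ⟨τ, _, T', hT', hcover'⟩ := ht₀ ((le_max_left t₀ t₁).trans (le_max_left _ 1)) ht
    ((div_le_iff₀' hγ).1 hn₂) hdeg hT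
  refine ⟨τ, inferInstance, T', hT', hcover'.trans ?_⟩
  rw [div_le_iff₀ (by positivity)] at ht₁ hn₃
  have hround : 5 * s * (Fintype.card V / t : ℝ) ≤ ξ / 2 * Fintype.card V := by
    rw [← mul_div_assoc, div_le_iff₀ (by positivity)]
    linarith [mul_le_mul_of_nonneg_right ht₁ (Nat.cast_nonneg (α := ℝ) (Fintype.card V))]
  linarith [mul_le_mul_of_nonneg_left hcover (by linarith : 0 ≤ 1 - γ / 24)]

theorem hasAlmostTilings {γ ε : ℝ} (hγ : 0 < γ) (hγ₁ : γ ≤ 1) (hε : 0 < ε) :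
    HasAlmostTilings.{u} γ ε := by
  have hiter (j : ℕ) : HasAlmostTilings.{u} γ (ε / 2 + (1 - γ / 24) ^ j) := by
    induction j with
    | zero =>
      refine fun s _ => ⟨0, fun {V} _ {G} _ _ => ⟨PEmpty, inferInstance, PEmpty.elim, ?_, ?_⟩⟩
      · exact ⟨nofun, nofun⟩
      · have : 0 ≤ ε / 2 * (Fintype.card V : ℝ) := by positivity
        simpa [add_mul]
    | succ j ih =>
      convert ih.improve hγ hγ₁ (by positivity : 0 < γ / 24 * (ε / 2)) using 1
      ring
  obtain ⟨j, hj⟩ := exists_pow_lt_of_lt_one (half_pos hε) (by linarith : 1 - γ / 24 < 1)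
  intro s hs
  obtain ⟨n₀, hn₀⟩ := hiter j hs
  refine ⟨n₀, fun {V} _ {G} hdeg hn => ?_⟩
  obtain ⟨ι, _, T, hT, hcover⟩ := hn₀ hdeg hn
  refine ⟨ι, inferInstance, T, hT, hcover.trans ?_⟩
  gcongr
  linarith

end ThreeGraph

/-! ### Almost perfect tilings by loose paths -/

namespace ThreeGraph

variable {V W : Type*} {G : ThreeGraph V}

/-- The pullback of `G` along an injection; for the inclusion of a subset, the hypergraph that `G`
induces on it. -/
def comap (f : W ↪ V) (G : ThreeGraph V) : ThreeGraph W where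
  Adj a b c := G.Adj (f a) (f b) (f c)
  swap_left h := G.swap_left h
  swap_right h := G.swap_right h
  ne₁₂ h := ne_of_apply_ne f (G.ne₁₂ h)

theorem IsLoosePath.map {f : W ↪ V} {u v : W} {S : Finset W}
    (h : (G.comap f).IsLoosePath u v S) : G.IsLoosePath (f u) (f v) (S.map f) := by
  induction h with
  | nil u => exact map_singleton f u ▸ .nil (f u)
  | cons e hu hm _ ih =>
    rw [map_insert, map_insert]
    exact .cons e (by simpa using hu) (by simpa using hm) ih

theorem MinDegree.comap_subtype [Fintype V] {X : Finset V} {d γ : ℝ} (hd : 0 ≤ d)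
    (hdeg : G.MinDegree (d + γ)) (hX : 2 * #X ≤ γ * Fintype.card V) :
    (G.comap (.subtype (· ∉ X))).MinDegree d := by
  intro v
  set f := Function.Embedding.subtype (· ∉ X)
  have hsub : G.link v ⊆ ((G.comap f).link v).image (Prod.map f f) ∪ (X ×ˢ univ ∪ univ ×ˢ X) := by
    rintro ⟨a, b⟩ h
    by_cases ha : a ∈ X
    · simp [ha]
    by_cases hb : b ∈ X
    · simp [hb]
    refine mem_union_left _ (mem_image.2 ⟨(⟨a, ha⟩, ⟨b, hb⟩), ?_, rfl⟩)
    simp only [link, mem_filter_univ] at h ⊢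
    exact h
  have hlink : #(G.link v) ≤ #((G.comap f).link v) +
      (#X * Fintype.card V + Fintype.card V * #X) := by
    refine (card_le_card hsub).trans <| (card_union_le _ _).trans ?_
    refine add_le_add card_image_le <| (card_union_le _ _).trans_eq ?_
    simp only [card_product, card_univ]
  have hlink : (#(G.link v) : ℝ) ≤ #((G.comap f).link v) +
      (#X * Fintype.card V + Fintype.card V * #X) := mod_cast hlink
  have hle : d * (Fintype.card {w // w ∉ X} : ℝ) ^ 2 ≤ d * (Fintype.card V : ℝ) ^ 2 := by
    gcongr
    exact Fintype.card_subtype_le _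
  linarith [hdeg v, mul_le_mul_of_nonneg_right hX (Nat.cast_nonneg (α := ℝ) (Fintype.card V))]

theorem exists_isLoosePath_of_complete {A B C : Finset V} {s : ℕ} (hA : #A = s + 1)
    (hB : #B = s + 1) (hC : #C = 2 * s + 1) (hAB : Disjoint A B) (hAC : Disjoint A C)
    (hBC : Disjoint B C) (h : ∀ a ∈ A, ∀ b ∈ B, ∀ c ∈ C, G.Adj a b c) :
    ∃ u ∈ A, ∃ v, G.IsLoosePath u v (A ∪ B ∪ C) := by
  induction s generalizing A B C with
  | zero =>
    obtain ⟨a, rfl⟩ := card_eq_one.1 hA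
    obtain ⟨b, rfl⟩ := card_eq_one.1 hB
    obtain ⟨c, rfl⟩ := card_eq_one.1 hC
    have e := h a (by simp) b (by simp) c (by simp)
    refine ⟨a, by simp, c, ?_⟩
    simpa only [singleton_union, insert_union] using IsLoosePath.of_adj e
  | succ s ih =>
    obtain ⟨a, A, ha, rfl, hcardA⟩ := card_eq_succ.1 hA
    obtain ⟨b, B, hb, rfl, hcardB⟩ := card_eq_succ.1 hB
    obtain ⟨c, C', hc, rfl, hcardC'⟩ := card_eq_succ.1 hC
    obtain ⟨c', C, hc', rfl, hcardC⟩ := card_eq_succ.1 hcardC'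
    simp only [disjoint_insert_left, disjoint_insert_right, mem_insert, not_or] at hAB hAC hBC hc
    obtain ⟨u, hu, v, hp⟩ := ih hcardA hcardB hcardC hAB.2.2 hAC.2.2.2 hBC.2.2.2
      fun x hx y hy z hz => h x (by simp [hx]) y (by simp [hy]) z (by simp [hz])
    have habc := h a (by simp) b (by simp) c (by simp)
    have hubc' := h u (by simp [hu]) b (by simp) c' (by simp)
    have hp' : G.IsLoosePath b v (insert b (insert c' (A ∪ B ∪ C))) :=
      .cons hubc'.rotate (by grind) (by grind) hp
    refine ⟨a, by simp, v, ?_⟩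
    convert IsLoosePath.cons (G.swap_right habc) (by grind) (by grind) hp' using 1
    grind

theorem IsBit.exists_isLoosePath {s : ℕ} {T : Fin 4 → Finset V} (hT : G.IsBit s T) (hs : 0 < s) :
    ∃ u v S, G.IsLoosePath u v S ∧ S ⊆ univ.biUnion T ∧ #S + 1 = 4 * s := by
  obtain ⟨s, rfl⟩ := Nat.exists_eq_add_one.2 hs
  have hcard : #(T 0 ∪ T 1) = 2 * s + 1 + 1 := by
    rw [card_union_of_disjoint (hT.disjoint (by decide)), hT.card_eq, hT.card_eq]
    ring
  obtain ⟨x, C, -, hxC, hC⟩ := card_eq_succ.1 hcard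
  have hCT : C ⊆ T 0 ∪ T 1 := hxC ▸ subset_insert x C
  have h₂₃ : Disjoint (T 2) (T 3) := hT.disjoint (by decide)
  have h₂C : Disjoint (T 2) C := Disjoint.mono_right hCT <|
    disjoint_union_right.2 ⟨hT.disjoint (by decide), hT.disjoint (by decide)⟩
  have h₃C : Disjoint (T 3) C := Disjoint.mono_right hCT <|
    disjoint_union_right.2 ⟨hT.disjoint (by decide), hT.disjoint (by decide)⟩
  obtain ⟨u, -, v, hp⟩ := exists_isLoosePath_of_complete (hT.card_eq 2) (hT.card_eq 3) hC
    h₂₃ h₂C h₃C fun a ha b hb c hc => (hT.adj c (hCT hc) a ha b hb).rotate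
  have hsub (l) : T l ⊆ univ.biUnion T := subset_biUnion_of_mem T (mem_univ l)
  refine ⟨u, v, _, hp, union_subset (union_subset (hsub 2) (hsub 3))
    (hCT.trans (union_subset (hsub 0) (hsub 1))), ?_⟩
  rw [card_union_of_disjoint (disjoint_union_left.2 ⟨h₂C, h₃C⟩), card_union_of_disjoint h₂₃,
    hT.card_eq, hT.card_eq, hC]
  ring

/- Each bit contributes one path, which misses one of its vertices; for large bits both the number
of paths and the number of missed vertices are small. -/
theorem IsBitTiling.exists_path_tiling [Fintype V] {ι : Type*} [Fintype ι] {s : ℕ}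
    {T : ι → Fin 4 → Finset V} {ε : ℝ} (hT : G.IsBitTiling s T) (hε : 0 < ε) (hs : 1 / ε ≤ s)
    (hcover : (Fintype.card V - 4 * s * Fintype.card ι : ℝ) ≤ ε * Fintype.card V) :
    ∃ (u v : ι → V) (S : ι → Finset V), (∀ i, G.IsLoosePath (u i) (v i) (S i)) ∧
      Pairwise (Disjoint on S) ∧ Fintype.card ι ≤ ε * Fintype.card V ∧
      (Fintype.card V - ∑ i, #(S i) : ℝ) ≤ 2 * ε * Fintype.card V := by
  have hs₀ : 0 < s := Nat.cast_pos.1 ((one_div_pos.2 hε).trans_le hs)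
  choose u v S hp hS hcard using fun i => (hT.isBit i).exists_isLoosePath hs₀
  have hdisj : Pairwise (Disjoint on S) := fun i j hij => Disjoint.mono (hS i) (hS j) <| by
    simp only [disjoint_biUnion_left, disjoint_biUnion_right]
    exact fun l _ m _ => hT.disjoint hij m l
  have hcardS (i) : (#(S i) : ℝ) = 4 * s - 1 := by
    rw [eq_sub_iff_add_eq]
    exact mod_cast hcard i
  have hι : (Fintype.card ι * 4 * s : ℝ) ≤ Fintype.card V := mod_cast hT.card_mul_le
  have hι : (Fintype.card ι : ℝ) ≤ ε * Fintype.card V := by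
    rw [div_le_iff₀ hε] at hs
    linarith [mul_le_mul_of_nonneg_left hι hε.le,
      mul_le_mul_of_nonneg_left hs (Nat.cast_nonneg (α := ℝ) (Fintype.card ι)),
      mul_nonneg hε.le (Nat.cast_nonneg (α := ℝ) (Fintype.card V))]
  refine ⟨u, v, S, hp, hdisj, hι, ?_⟩
  rw [Nat.cast_sum, sum_congr rfl fun i _ => hcardS i, sum_const, card_univ, nsmul_eq_mul]
  linarith

theorem MinDegree.exists_path_tiling {γ ε : ℝ} (hγ : 0 < γ) (hγ₁ : γ ≤ 1) (hε : 0 < ε) :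
    ∃ n₀ : ℕ, ∀ {V : Type u} [Fintype V] {G : ThreeGraph V}, G.MinDegree (7 / 16 + γ) →
      n₀ ≤ Fintype.card V → ∃ (ι : Type u) (_ : Fintype ι) (u v : ι → V) (S : ι → Finset V),
        (∀ i, G.IsLoosePath (u i) (v i) (S i)) ∧ Pairwise (Disjoint on S) ∧
        Fintype.card ι ≤ ε * Fintype.card V ∧
        (Fintype.card V - ∑ i, #(S i) : ℝ) ≤ 2 * ε * Fintype.card V := by
  obtain ⟨s, hs⟩ := exists_nat_ge (1 / ε)
  have hs₀ : 0 < s := Nat.cast_pos.1 ((one_div_pos.2 hε).trans_le hs)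
  obtain ⟨n₀, hn₀⟩ := hasAlmostTilings.{u} hγ hγ₁ hε hs₀
  refine ⟨n₀, fun hdeg hn => ?_⟩
  obtain ⟨ι, _, T, hT, hcover⟩ := hn₀ hdeg hn
  exact ⟨ι, inferInstance, hT.exists_path_tiling hε hs hcover⟩

theorem MinDegree.exists_path_tiling_compl {γ ε : ℝ} (hγ : 0 < γ) (hγ₁ : γ ≤ 1) (hε : 0 < ε) :
    ∃ n₀ : ℕ, ∀ {V : Type u} [Fintype V] {G : ThreeGraph V}, G.MinDegree (7 / 16 + γ) →
      n₀ ≤ Fintype.card V → ∀ X : Finset V, 4 * #X ≤ γ * Fintype.card V →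
      ∃ (ι : Type u) (_ : Fintype ι) (u v : ι → V) (S : ι → Finset V),
        (∀ i, G.IsLoosePath (u i) (v i) (S i)) ∧ Pairwise (Disjoint on S) ∧
        (∀ i, Disjoint (S i) X) ∧ Fintype.card ι ≤ ε * Fintype.card V ∧
        (Fintype.card V - ∑ i, #(S i) : ℝ) ≤ #X + 2 * ε * Fintype.card V := by
  obtain ⟨n₀, hn₀⟩ := MinDegree.exists_path_tiling.{u} (half_pos hγ) (by linarith) hε
  refine ⟨2 * n₀, fun {V} _ {G} hdeg hn X hX => ?_⟩
  let f := Function.Embedding.subtype (· ∉ X)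
  have hcardX : Fintype.card {w // w ∉ X} + #X = Fintype.card V := by
    rw [Fintype.card_subtype_compl, Fintype.card_coe, Nat.sub_add_cancel (card_le_univ X)]
  have hlarge : n₀ ≤ Fintype.card {w // w ∉ X} := by
    have hγV := mul_le_mul_of_nonneg_right hγ₁ (Nat.cast_nonneg (α := ℝ) (Fintype.card V))
    have : 4 * #X ≤ Fintype.card V := (Nat.cast_le (α := ℝ)).1 (by push_cast; linarith)
    lia
  have hcardX : (Fintype.card V : ℝ) = Fintype.card {w // w ∉ X} + #X := mod_cast hcardX.symm
  rw [← add_halves γ, ← add_assoc] at hdeg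
  obtain ⟨ι, _, u, v, S, hp, hdisj, hι, hcover⟩ :=
    hn₀ (hdeg.comap_subtype (by positivity) (by linarith)) hlarge
  have hεX : 0 ≤ ε * #X := by positivity
  refine ⟨ι, inferInstance, f ∘ u, f ∘ v, fun i => (S i).map f, fun i => (hp i).map,
    fun i j hij => (disjoint_map f).2 (hdisj hij), fun i => ?_, ?_, ?_⟩
  · simp only [disjoint_left, mem_map]
    rintro _ ⟨w, -, rfl⟩
    exact w.2
  · rw [hcardX]
    linarith
  · simp only [card_map, hcardX]
    linarith

end ThreeGraph

/-! ### Loose Hamilton cycles -/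

namespace ThreeGraph

variable {V : Type*} {G : ThreeGraph V} {a b p q x : V} {P R : Finset V} {B : ℝ} {M : ℕ}

theorem IsAbsorbingPath.exists_extension {ι : Type*} [Fintype ι] {u v : ι → V} {S : ι → Finset V}
    (hP : G.IsAbsorbingPath p q P B) (hR : G.RobustlyConnects R M) (hRP : Disjoint R P)
    (hS : ∀ i, G.IsLoosePath (u i) (v i) (S i)) (hdisj : Pairwise (Disjoint on S))
    (hSPR : ∀ i, Disjoint (S i) (P ∪ R)) (hM : 3 * (Fintype.card ι + 1) ≤ M) :
    ∃ C p' q', C ⊆ R ∧ #C ≤ 3 * (Fintype.card ι + 1) ∧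
      G.IsAbsorbingPath p' q' (C ∪ (P ∪ univ.biUnion S)) B := by
  simp only [disjoint_union_right] at hSPR
  rw [← Fintype.card_option, ← card_univ] at hM ⊢
  obtain ⟨C, p', q', hCR, hcard, hC⟩ :=
    hR.exists_chain (fun i => Option.elim i p u) (fun i => Option.elim i q v) univ_nonempty hM
  refine ⟨C, p', q', hCR, hcard, fun U hU hUeven hUB => ?_⟩
  simp only [disjoint_union_right, disjoint_biUnion_right] at hU
  convert hC (fun i => Option.elim i (P ∪ U) S) ?_ ?_ ?_ using 1
  · ext y
    simp only [mem_union, mem_biUnion, mem_univ, true_and, Option.exists, Option.elim]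
    tauto
  · rintro (_ | i) -
    · exact hP U hU.2.1 hUeven hUB
    · exact hS i
  · have hPU (i) : Disjoint (S i) (P ∪ U) :=
      disjoint_union_right.2 ⟨(hSPR i).1, (hU.2.2 i (mem_univ i)).symm⟩
    rintro (_ | i) - (_ | j) - hij
    · exact absurd rfl hij
    · exact (hPU j).symm
    · exact hPU i
    · exact hdisj fun h => hij (congrArg some h)
  · rintro (_ | i) -
    · exact disjoint_union_left.2 ⟨(hRP.mono_left hCR).symm, hU.1⟩
    · exact (hSPR i).2.mono_right hCR

theorem IsAbsorbingPath.hasLooseHamiltonCycle [Fintype V] (hP : G.IsAbsorbingPath p q P B)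
    (hnew : Disjoint {a, x, b} P) (hab : a ≠ b) (hqx : G.Adj q a x) (hxp : G.Adj x b p)
    (heven : Even (Fintype.card V)) (hcover : Fintype.card V ≤ #P + 3 + B) (hB : 0 ≤ B) :
    G.HasLooseHamiltonCycle := by
  have hpath : G.IsLoosePath p q P := by
    simpa using hP ∅ (disjoint_empty_left P) (by simp) (by simpa using hB)
  have hcard : #(({a, x, b} : Finset V) ∪ P) = 3 + #P := by
    rw [card_union_of_disjoint hnew, card_eq_three.2 ⟨a, x, b, hqx.ne₂₃, hab, G.ne₁₂ hxp, rfl⟩]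
  have hcompl := card_add_card_compl (({a, x, b} : Finset V) ∪ P)
  set U : Finset V := ({a, x, b} ∪ P)ᶜ with hU
  have hUcard : #U + (3 + #P) = Fintype.card V := by lia
  have hUeven : Even #U := by
    have := hpath.odd_card
    grind
  have hUB : (#U : ℝ) ≤ B := by
    rw [← hUcard] at hcover
    push_cast at hcover
    linarith
  have hPU := hP U (disjoint_compl_left.mono_right subset_union_right) hUeven hUB
  have hmem (y) : y ∈ P ∪ U ↔ y ∉ ({a, x, b} : Finset V) := by
    have (h : y ∈ ({a, x, b} : Finset V)) : y ∉ P := disjoint_left.1 hnew h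
    simp only [hU, mem_union, mem_compl]
    tauto
  have hpx : G.IsLoosePath p x (P ∪ U ∪ {q, a, x}) := hPU.trans (.of_adj hqx) fun y hy hy' => by
    grind
  refine hpx.hasLooseHamiltonCycle (m := b) ?_ ?_ hxp
  · have := (hmem q).1 hPU.right_mem
    have := hmem b
    grind [G.ne₁₂ hxp]
  · ext y
    have := hmem y
    grind

theorem IsAbsorbingPath.hasLooseHamiltonCycle_of_path_tiling [Fintype V] {ι : Type*} [Fintype ι]
    {u v : ι → V} {S : ι → Finset V} (hP : G.IsAbsorbingPath p q P B)
    (hR : G.RobustlyConnects R M) (hRP : Disjoint R P)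
    (hS : ∀ i, G.IsLoosePath (u i) (v i) (S i)) (hdisj : Pairwise (Disjoint on S))
    (hSPR : ∀ i, Disjoint (S i) (P ∪ R)) (hM : 3 * (Fintype.card ι + 1) ≤ M)
    (heven : Even (Fintype.card V)) (hcover : Fintype.card V ≤ #P + ∑ i, #(S i) + B)
    (hB : 0 ≤ B) : G.HasLooseHamiltonCycle := by
  obtain ⟨C, p', q', -, hC, hP'⟩ := hP.exists_extension hR hRP hS hdisj hSPR hM
  obtain ⟨a, x, b, hR', hC', hab, hax, hxb⟩ := hR q' p' C (hC.trans hM)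
  simp only [disjoint_union_right] at hSPR
  have hcard : #P + ∑ i, #(S i) ≤ #(C ∪ (P ∪ univ.biUnion S)) := by
    rw [← card_biUnion fun i _ j _ hij => hdisj hij, ← card_union_of_disjoint
      ((disjoint_biUnion_right P univ S).2 fun i _ => (hSPR i).1.symm)]
    exact card_le_card subset_union_right
  have hcard : (#P + ∑ i, #(S i) : ℝ) ≤ #(C ∪ (P ∪ univ.biUnion S)) := mod_cast hcard
  refine hP'.hasLooseHamiltonCycle ?_ hab hax hxb heven (by linarith) hB
  simp only [disjoint_union_right, disjoint_biUnion_right]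
  exact ⟨hC', hRP.mono_left hR', fun i _ => ((hSPR i).2.mono_right hR').symm⟩

theorem MinDegree.exists_hasLooseHamiltonCycle {γ : ℝ} (hγ : 0 < γ) (hγ₁ : γ ≤ 1) :
    ∃ n₀ : ℕ, ∀ {V : Type u} [Fintype V] {G : ThreeGraph V}, G.MinDegree (7 / 16 + γ) →
      n₀ ≤ Fintype.card V → Even (Fintype.card V) → G.HasLooseHamiltonCycle := by
  obtain ⟨α, hα, hαγ, hα₁⟩ : ∃ α : ℝ, 0 < α ∧ α ≤ γ / 8 ∧ 10 ^ 6 * α ≤ 1 :=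
    ⟨min (γ / 8) (1 / 10 ^ 6), by positivity, min_le_left _ _,
      (mul_le_mul_of_nonneg_left (min_le_right _ _) (by norm_num)).trans (by norm_num)⟩
  obtain ⟨a, ha, n₁, habsorb⟩ := MinDegree.exists_isAbsorbingPath hα
  obtain ⟨ρ, hρ, hργ, hρa⟩ : ∃ ρ : ℝ, 0 < ρ ∧ ρ ≤ γ / 8 ∧ ρ ≤ a / 2 :=
    ⟨min (γ / 8) (a / 2), by positivity, min_le_left _ _, min_le_right _ _⟩
  obtain ⟨κ, hκ, n₂, hconnect⟩ := MinDegree.exists_robustlyConnects hρ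
  obtain ⟨ε, hε, hεa, hεκ⟩ : ∃ ε : ℝ, 0 < ε ∧ ε ≤ a / 4 ∧ ε ≤ κ / 6 :=
    ⟨min (a / 4) (κ / 6), by positivity, min_le_left _ _, min_le_right _ _⟩
  obtain ⟨n₃, htile⟩ := MinDegree.exists_path_tiling_compl.{u} hγ hγ₁ hε
  obtain ⟨n₄, hn₄⟩ := exists_nat_ge (6 / κ)
  refine ⟨n₁ + n₂ + n₃ + n₄, fun {V} _ {G} hdeg hn heven => ?_⟩
  have hlarge : 6 ≤ κ * Fintype.card V := by
    have : (n₄ : ℝ) ≤ Fintype.card V := mod_cast (by lia)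
    rw [div_le_iff₀' hκ] at hn₄
    exact hn₄.trans (by gcongr)
  have hdeg' : G.MinDegree (7 / 16) := hdeg.mono (by linarith)
  obtain ⟨p, q, P, hPcard, hP⟩ := habsorb hdeg' (by lia)
  have hn₀ := Nat.cast_nonneg (α := ℝ) (Fintype.card V)
  have hPsmall : (10 ^ 6 * #P : ℝ) ≤ Fintype.card V := by
    linarith [mul_le_mul_of_nonneg_right hα₁ hn₀]
  obtain ⟨R, M, hRP, hRcard, hM, hR⟩ := hconnect hdeg' (by lia) P (mod_cast hPsmall)
  have hPR : (#(P ∪ R) : ℝ) ≤ #P + #R := mod_cast card_union_le P R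
  have hX : 4 * #(P ∪ R) ≤ γ * Fintype.card V := by
    linarith [mul_le_mul_of_nonneg_right hαγ hn₀, mul_le_mul_of_nonneg_right hργ hn₀]
  obtain ⟨ι, _, u, v, S, hS, hdisj, hSPR, hι, hcover⟩ := htile hdeg (by lia) (P ∪ R) hX
  refine hP.hasLooseHamiltonCycle_of_path_tiling hR hRP hS hdisj hSPR
    ((Nat.cast_le (α := ℝ)).1 ?_) heven ?_ (by positivity)
  · push_cast
    linarith [mul_le_mul_of_nonneg_right hεκ hn₀]
  · linarith [mul_le_mul_of_nonneg_right hεa hn₀, mul_le_mul_of_nonneg_right hρa hn₀]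

end ThreeGraph

namespace ThreeGraph

variable {V : Type*} [DecidableEq V] {H : Finset (Finset V)} {hH : ∀ e ∈ H, #e = 3}

/-- The `3`-uniform hypergraph with edge set `H`. -/
def ofEdges (H : Finset (Finset V)) (hH : ∀ e ∈ H, #e = 3) : ThreeGraph V where
  Adj a b c := {a, b, c} ∈ H
  swap_left h := by rwa [insert_comm]
  swap_right h := by rwa [pair_comm]
  ne₁₂ := by
    rintro a _ c h rfl
    have := hH _ h
    rw [insert_eq_of_mem (mem_insert_self a {c})] at this
    have := card_le_two (a := a) (b := c)
    lia

theorem two_mul_card_filter_mem_le_card_link_ofEdges [Fintype V] (v : V) :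
    2 * #{e ∈ H | v ∈ e} ≤ #((ofEdges H hH).link v) := by
  refine mul_card_image_le_card_of_maps_to (f := fun p => {v, p.1, p.2}) (fun p hp => ?_) 2
    fun e he => ?_
  · exact mem_filter.2 ⟨(mem_filter_univ p).1 hp, mem_insert_self v _⟩
  · obtain ⟨heH, hve⟩ := mem_filter.1 he
    obtain ⟨a, b, hab, hpair⟩ := card_eq_two.1 <|
      show #(e.erase v) = 2 by rw [card_erase_of_mem hve, hH e heH]
    obtain rfl : {v, a, b} = e := by rw [← hpair, insert_erase hve]
    refine one_lt_card.2 ⟨(a, b), ?_, (b, a), ?_, fun h => hab (congrArg Prod.fst h)⟩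
    · exact mem_filter.2 ⟨(mem_filter_univ _).2 heH, rfl⟩
    · exact mem_filter.2 ⟨(mem_filter_univ _).2 ((ofEdges H hH).swap_right heH),
        congrArg _ (pair_comm b a)⟩

theorem minDegree_ofEdges [Fintype V] {d η : ℝ} (hη : d ≤ η * Fintype.card V)
    (hd : ∀ v, d * (Fintype.card V).choose 2 ≤ #{e ∈ H | v ∈ e}) :
    (ofEdges H hH).MinDegree (d - η) := by
  intro v
  have hlink : (2 * #{e ∈ H | v ∈ e} : ℝ) ≤ #((ofEdges H hH).link v) :=
    mod_cast two_mul_card_filter_mem_le_card_link_ofEdges v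
  have hdv := hd v
  rw [Nat.cast_choose_two] at hdv
  linarith [mul_le_mul_of_nonneg_right hη (Nat.cast_nonneg (α := ℝ) (Fintype.card V))]

end ThreeGraph

end

theorem loose_hamilton_cycle_min_vertex_degree (γ : ℝ) (hγ : 0 < γ) :
    ∃ n₀ : ℕ, ∀ (V : Type) [Fintype V] [DecidableEq V], ∀ (H : Finset (Finset V)) (n : ℕ),
      n₀ < n → Even n → Fintype.card V = n →
      (∀ e ∈ H, e.card = 3) →
      (∀ v : V, (7 / 16 + γ) * (n.choose 2 : ℝ) <
        (((H.filter (fun e => v ∈ e)).card : ℕ) : ℝ)) →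
      HasLooseHamCycle H n := by
  obtain ⟨δ, hδ, hδγ, hδ₁⟩ : ∃ δ : ℝ, 0 < δ ∧ 2 * δ ≤ γ ∧ δ ≤ 1 :=
    ⟨min (γ / 2) 1, by positivity, by linarith [min_le_left (γ / 2) 1], min_le_right _ _⟩
  obtain ⟨n₁, hn₁⟩ := ThreeGraph.MinDegree.exists_hasLooseHamiltonCycle.{0} hδ hδ₁
  obtain ⟨n₂, hn₂⟩ := exists_nat_ge ((7 / 16 + 2 * δ) / δ)
  refine ⟨max n₁ n₂, fun V _ _ H n hn heven hV hH hdeg => ?_⟩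
  subst hV
  obtain ⟨hn₁V, hn₂V⟩ := max_lt_iff.1 hn
  have hlarge : 7 / 16 + 2 * δ ≤ δ * Fintype.card V :=
    (div_le_iff₀' hδ).1 (hn₂.trans (mod_cast hn₂V.le))
  have hG : (ThreeGraph.ofEdges H hH).MinDegree (7 / 16 + 2 * δ - δ) :=
    ThreeGraph.minDegree_ofEdges hlarge fun v => le_trans (by gcongr) (hdeg v).le
  exact hn₁ (hG.mono (by linarith)) hn₁V.le heven
end

section
/- For every even n there exists a 3-uniform hypergraph H₃ on n vertices with minimum vertex degree δ₁(H₃) ≥ C(⌊n/4⌋−1, 2) + (⌊n/4⌋−1)·(n − ⌊n/4⌋) which contains no loose Hamilton cycle. (In particular δ₁(H₃) ≥ (7/16)·C(n,2) − 2n.) -/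
open Finset

/-!
Fix a set `A` of fewer than `n / 4` vertices and take all triples meeting `A`. A vertex lies on at
most two edges of a loose cycle, so `A` meets fewer than `n / 2` of them, whereas a loose Hamilton
cycle has `n / 2` edges. A vertex outside `A` misses only the triples avoiding `A`, which leaves
`(n - 1).choose 2 - (n - 1 - #A).choose 2` edges through it.
-/

lemma add_choose_two (a b : ℕ) : (a + b).choose 2 = a.choose 2 + a * b + b.choose 2 := by
  have antidiagonal_two : antidiagonal 2 = {(0, 2), (1, 1), (2, 0)} := rfl
  rw [Nat.add_choose_eq, antidiagonal_two, sum_insert (by decide), sum_pair (by decide)]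
  simp only [Nat.choose_zero_right, Nat.choose_one_right]
  ring

section PowersetCard

variable {V : Type*} [DecidableEq V]

lemma card_filter_mem_powersetCard_succ {s : Finset V} {v : V} (hv : v ∈ s) (k : ℕ) :
    #{e ∈ powersetCard (k + 1) s | v ∈ e} = (#s - 1).choose k := by
  simpa only [singleton_subset_iff, card_singleton, Nat.add_sub_cancel] using
    card_filter_powersetCard_subset {v} s (k + 1) (singleton_subset_iff.2 hv) (by simp)

lemma card_filter_mem_powersetCard_succ_le (s : Finset V) (v : V) (k : ℕ) :
    #{e ∈ powersetCard (k + 1) s | v ∈ e} ≤ (#s - 1).choose k := by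
  by_cases hv : v ∈ s
  · exact (card_filter_mem_powersetCard_succ hv k).le
  · rw [filter_false_of_mem fun e he hve => hv ((mem_powersetCard.1 he).1 hve), card_empty]
    exact Nat.zero_le _

end PowersetCard

section LooseCycle

variable {V : Type*} [DecidableEq V] {n : ℕ}

/-- The `j`-th edge of the loose cycle that visits the vertices in the cyclic order `f`. -/
def looseEdge (f : ZMod n → V) (j : ℕ) : Finset V :=
  {f ((2 * j : ℕ) : ZMod n), f ((2 * j + 1 : ℕ) : ZMod n), f ((2 * j + 2 : ℕ) : ZMod n)}

lemma eq_half_val_of_mem_looseEdge {f : ZMod n → V} (hf : Function.Injective f) {t : ZMod n}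
    {j : ℕ} (hj : j < n / 2) (ht : f t ∈ looseEdge f j) :
    j = t.val / 2 ∨ j = (t - 1).val / 2 := by
  have val_even : ((2 * j : ℕ) : ZMod n).val = 2 * j := ZMod.val_cast_of_lt (by omega)
  have val_odd : ((2 * j + 1 : ℕ) : ZMod n).val = 2 * j + 1 := ZMod.val_cast_of_lt (by omega)
  simp only [looseEdge, mem_insert, mem_singleton, hf.eq_iff] at ht
  rcases ht with rfl | rfl | rfl
  · left; omega
  · left; omega
  · right
    -- Subtracting `1` keeps the last vertex of the final edge from wrapping around to `0`.
    have pred_eq : ((2 * j + 2 : ℕ) : ZMod n) - 1 = ((2 * j + 1 : ℕ) : ZMod n) := by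
      push_cast; ring
    rw [pred_eq]; omega

lemma card_filter_mem_looseEdge_le_two {f : ZMod n → V} (hf : Function.Injective f)
    (t : ZMod n) : #{j ∈ range (n / 2) | f t ∈ looseEdge f j} ≤ 2 := by
  refine (card_le_card (t := {t.val / 2, (t - 1).val / 2}) fun j hj => ?_).trans card_le_two
  obtain ⟨hj, ht⟩ := mem_filter.1 hj
  simpa using eq_half_val_of_mem_looseEdge hf (mem_range.1 hj) ht

end LooseCycle

lemma HasLooseHamCycle.half_le_two_mul_card {V : Type} [DecidableEq V] {H : Finset (Finset V)}
    {n : ℕ} (hH : HasLooseHamCycle H n) {A : Finset V} (hA : ∀ e ∈ H, ¬Disjoint e A) :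
    n / 2 ≤ 2 * #A := by
  obtain ⟨f, hf, edge_mem⟩ := hH
  have double_count : #(range (n / 2)) * 1 ≤ #A * 2 := by
    refine card_mul_le_card_mul (fun j x => x ∈ looseEdge f j) (fun j hj => ?_) (fun x _ => ?_)
    · obtain ⟨x, hxe, hxA⟩ := not_disjoint_iff.1 (hA _ (edge_mem j (mem_range.1 hj)))
      exact card_pos.2 ⟨x, mem_filter.2 ⟨hxA, hxe⟩⟩
    · obtain ⟨t, rfl⟩ := hf.surjective x
      exact card_filter_mem_looseEdge_le_two hf.injective t
  rw [card_range] at double_count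
  omega

section EdgesMeeting

variable {V : Type*} [DecidableEq V] [Fintype V]

/-- The `k`-uniform hypergraph of all `k`-sets of vertices that meet `A`: the extremal example,
which `A` covers although every vertex has large degree. -/
def edgesMeeting (k : ℕ) (A : Finset V) : Finset (Finset V) :=
  {e ∈ powersetCard k univ | ¬Disjoint e A}

lemma mem_edgesMeeting {k : ℕ} {A e : Finset V} :
    e ∈ edgesMeeting k A ↔ #e = k ∧ ¬Disjoint e A := by
  rw [edgesMeeting, mem_filter, mem_powersetCard_univ]

lemma edgesMeeting_eq_sdiff (k : ℕ) (A : Finset V) :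
    edgesMeeting k A = powersetCard k univ \ powersetCard k Aᶜ := by
  ext e
  rw [mem_edgesMeeting, mem_sdiff, mem_powersetCard_univ, mem_powersetCard,
    subset_compl_iff_disjoint_right]
  tauto

lemma le_degree_edgesMeeting (k : ℕ) (A : Finset V) (v : V) :
    (Fintype.card V - 1).choose k - (Fintype.card V - 1 - #A).choose k ≤
      #{e ∈ edgesMeeting (k + 1) A | v ∈ e} := by
  have through_eq := card_filter_mem_powersetCard_succ (mem_univ v) k
  have avoiding_le := card_filter_mem_powersetCard_succ_le Aᶜ v k
  rw [card_univ] at through_eq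
  rw [card_compl, Nat.sub_right_comm] at avoiding_le
  calc (Fintype.card V - 1).choose k - (Fintype.card V - 1 - #A).choose k
      ≤ #{e ∈ powersetCard (k + 1) univ | v ∈ e} - #{e ∈ powersetCard (k + 1) Aᶜ | v ∈ e} :=
        tsub_le_tsub through_eq.ge avoiding_le
    _ ≤ #({e ∈ powersetCard (k + 1) (univ : Finset V) | v ∈ e} \
          {e ∈ powersetCard (k + 1) Aᶜ | v ∈ e}) :=
        le_card_sdiff _ _
    _ = #{e ∈ edgesMeeting (k + 1) A | v ∈ e} := by
        rw [edgesMeeting_eq_sdiff]; congr 1; grind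

end EdgesMeeting

/-- When `Fintype.card V` is odd, `HasLooseHamCycle` asks for a spanning loose path: the last triple
ends at `f (n - 1)` and does not wrap around. -/
theorem lower_bound_construction_general {V : Type} [Fintype V] [DecidableEq V] {a : ℕ}
    (ha : 2 * a < Fintype.card V / 2) :
    ∃ H : Finset (Finset V),
      (∀ e ∈ H, #e = 3) ∧
      (∀ v : V, a.choose 2 + a * (Fintype.card V - 1 - a) ≤ #{e ∈ H | v ∈ e}) ∧
      ¬HasLooseHamCycle H (Fintype.card V) := by
  obtain ⟨A, -, rfl⟩ := exists_subset_card_eq (s := (univ : Finset V)) (n := a)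
    (by rw [card_univ]; omega)
  refine ⟨edgesMeeting 3 A, fun e he => (mem_edgesMeeting.1 he).1, fun v => ?_,
    fun hH => ?_⟩
  · have choose_split := add_choose_two (#A) (Fintype.card V - 1 - #A)
    rw [Nat.add_sub_of_le (by omega)] at choose_split
    calc (#A).choose 2 + #A * (Fintype.card V - 1 - #A)
        = (Fintype.card V - 1).choose 2 - (Fintype.card V - 1 - #A).choose 2 := by omega
      _ ≤ #{e ∈ edgesMeeting 3 A | v ∈ e} := le_degree_edgesMeeting 2 A v
  · have := hH.half_le_two_mul_card fun e he => (mem_edgesMeeting.1 he).2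
    omega

theorem lower_bound_construction (n : ℕ) (hn : Even n) :
    ∃ H : Finset (Finset (Fin n)),
      (∀ e ∈ H, e.card = 3) ∧
      (∀ v : Fin n,
        (n / 4 - 1).choose 2 + (n / 4 - 1) * (n - n / 4) ≤
          (H.filter (fun e => v ∈ e)).card) ∧
      ¬ HasLooseHamCycle H n := by
  rcases Nat.eq_zero_or_pos n with rfl | hpos
  · exact ⟨∅, by simp, (·.elim0), fun ⟨f, _⟩ => (f 0).elim0⟩
  have half_gt : 2 * (n / 4 - 1) < Fintype.card (Fin n) / 2 := by
    rw [Fintype.card_fin]; obtain ⟨m, rfl⟩ := hn; omega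
  have size_eq : (n / 4 - 1) * (n - 1 - (n / 4 - 1)) = (n / 4 - 1) * (n - n / 4) := by
    obtain h | h : n / 4 - 1 = 0 ∨ n - 1 - (n / 4 - 1) = n - n / 4 := by omega
    all_goals simp only [h, zero_mul]
  simpa only [Fintype.card_fin, size_eq] using lower_bound_construction_general half_gt
end

section
/- Let γ > 0 and let m ≥ 1 be an integer, and let H=(V,E) be a 3-uniform hypergraph on n vertices with δ₁(H) ≥ (1/4 + γ)·C(n,2) and m ≤ γn/12. Then for every system (a_i,b_i)_{i∈[m]} of mutually disjoint pairs of distinct vertices of H, there exists a set of triples (x_i,y_i,z_i)_{i∈[m]} connecting (a_i,b_i)_{i∈[m]}. -/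
open Finset

/-- The triples `(x i, y i, z i)` connect the mutually disjoint pairs `(a i, b i)`:
all `5m` vertices involved are distinct and `{a i, x i, y i}` and `{y i, z i, b i}`
are edges of `H` for every `i`. -/
def Connects {V : Type} [DecidableEq V] (H : Finset (Finset V)) (m : ℕ)
    (a b x y z : Fin m → V) : Prop :=
  Function.Injective (fun p : Fin m × Fin 5 => ![a p.1, b p.1, x p.1, y p.1, z p.1] p.2) ∧
  ∀ i : Fin m, ({a i, x i, y i} : Finset V) ∈ H ∧ ({y i, z i, b i} : Finset V) ∈ H

/-!
Delete a small vertex set from the link graphs of two vertices `a` and `b`. Each link still has more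
than `n² / 8 + n` edges, which forces more than half of its vertices to have degree at least two.
Hence some `y` has degree at least two in both links, and it has distinct neighbours `x` in the link
of `a` and `z` in the link of `b`. The pairs are therefore connected greedily: at most `5 m - 3`
vertices are in use at any time, and the surplus `γ` absorbs the link edges meeting them.
-/

section Graph

variable {V : Type*} [Fintype V]

lemma card_edgeFinset_le_card_edgeFinset_induce_add_sum_degree [DecidableEq V]
    (G : SimpleGraph V) [DecidableRel G.Adj] (s : Finset V) :
    #G.edgeFinset ≤ #(G.induce (s : Set V)).edgeFinset + ∑ v ∈ sᶜ, G.degree v := by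
  have hcover : G.edgeFinset ⊆
      {e ∈ G.edgeFinset | e.toFinset ⊆ s} ∪ sᶜ.biUnion fun v ↦ G.incidenceFinset v := by
    intro e he
    by_cases hes : e.toFinset ⊆ s
    · exact mem_union_left _ (mem_filter.2 ⟨he, hes⟩)
    · obtain ⟨v, hve, hvs⟩ := not_subset.1 hes
      refine mem_union_right _ (mem_biUnion.2 ⟨v, mem_compl.2 hvs, ?_⟩)
      simpa [SimpleGraph.incidenceSet] using And.intro he hve
  calc #G.edgeFinset
      ≤ #{e ∈ G.edgeFinset | e.toFinset ⊆ s} + #(sᶜ.biUnion fun v ↦ G.incidenceFinset v) :=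
        (card_le_card hcover).trans (card_union_le _ _)
    _ ≤ #(G.induce (s : Set V)).edgeFinset + ∑ v ∈ sᶜ, G.degree v := by
        rw [SimpleGraph.card_filter_edgeFinset_toFinset_subset]
        gcongr
        exact card_biUnion_le.trans_eq (sum_congr rfl fun v _ ↦ G.card_incidenceFinset_eq_degree v)

lemma card_edgeFinset_le_card_edgeFinset_induce_compl_add [DecidableEq V] (G : SimpleGraph V)
    [DecidableRel G.Adj] (U : Finset V) :
    #G.edgeFinset ≤
      #(G.induce ((Uᶜ : Finset V) : Set V)).edgeFinset + #U * (Fintype.card V - 1) := by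
  refine (card_edgeFinset_le_card_edgeFinset_induce_add_sum_degree G Uᶜ).trans ?_
  rw [compl_compl]
  gcongr
  exact sum_le_card_nsmul _ _ _ fun v _ ↦ Nat.le_sub_one_of_lt (G.degree_lt_card_verts v)

lemma card_lt_two_mul_card_filter_two_le_degree (G : SimpleGraph V) [DecidableRel G.Adj]
    (hG : Fintype.card V ^ 2 + 8 * Fintype.card V < 8 * #G.edgeFinset) :
    Fintype.card V < 2 * #{v | 2 ≤ G.degree v} := by
  classical
  set s : Finset V := {v | 2 ≤ G.degree v}
  have hinduce : 2 * #(G.induce (s : Set V)).edgeFinset ≤ #s ^ 2 := by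
    have hchoose := (G.induce (s : Set V)).card_edgeFinset_le_card_choose_two
    simp only [coe_sort_coe, Fintype.card_coe] at hchoose
    calc 2 * #(G.induce (s : Set V)).edgeFinset ≤ 2 * (#s * (#s - 1) / 2) := by
          rw [← Nat.choose_two_right]; gcongr
      _ ≤ #s * (#s - 1) := Nat.mul_div_le _ _
      _ ≤ #s ^ 2 := by rw [sq]; gcongr; exact Nat.sub_le _ _
  have hsum : ∑ v ∈ sᶜ, G.degree v ≤ Fintype.card V := by
    calc ∑ v ∈ sᶜ, G.degree v ≤ #sᶜ • 1 :=
          sum_le_card_nsmul _ _ _ fun v hv ↦ by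
            simp only [s, mem_compl, mem_filter_univ, not_le] at hv; omega
      _ ≤ Fintype.card V := by simpa using card_le_univ sᶜ
  have hedges := card_edgeFinset_le_card_edgeFinset_induce_add_sum_degree G s
  by_contra! hs
  have : (2 * #s) ^ 2 ≤ Fintype.card V ^ 2 := by gcongr
  linarith

lemma exists_adj_adj_ne_of_lt_card_edgeFinset (G₁ G₂ : SimpleGraph V)
    [DecidableRel G₁.Adj] [DecidableRel G₂.Adj]
    (h₁ : Fintype.card V ^ 2 + 8 * Fintype.card V < 8 * #G₁.edgeFinset)
    (h₂ : Fintype.card V ^ 2 + 8 * Fintype.card V < 8 * #G₂.edgeFinset) :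
    ∃ x y z, G₁.Adj x y ∧ G₂.Adj y z ∧ x ≠ z := by
  classical
  have hcard : #(univ : Finset V) < #{v | 2 ≤ G₁.degree v} + #{v | 2 ≤ G₂.degree v} := by
    have := card_lt_two_mul_card_filter_two_le_degree G₁ h₁
    have := card_lt_two_mul_card_filter_two_le_degree G₂ h₂
    rw [card_univ]
    omega
  obtain ⟨y, hy⟩ :=
    inter_nonempty_of_card_lt_card_add_card (subset_univ _) (subset_univ _) hcard
  simp only [mem_inter, mem_filter_univ] at hy
  obtain ⟨z, hz⟩ := card_pos.1 (zero_lt_two.trans_le hy.2)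
  obtain ⟨x, hx, hxz⟩ := exists_mem_ne hy.1 z
  exact ⟨x, y, z, ((G₁.mem_neighborFinset y x).1 hx).symm, (G₂.mem_neighborFinset y z).1 hz, hxz⟩

end Graph

section Link

variable {V : Type*} [DecidableEq V] {H : Finset (Finset V)}

/-- The link graph of the vertex `v` in the hypergraph with edge set `H`: two distinct vertices are
adjacent when they form an edge of `H` together with `v`. For a `3`-uniform `H` the vertex `v` is
isolated in its own link. -/
def linkGraph (H : Finset (Finset V)) (v : V) : SimpleGraph V where
  Adj x y := x ≠ y ∧ {v, x, y} ∈ H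
  symm := ⟨fun x y h ↦ ⟨h.1.symm, by rw [pair_comm]; exact h.2⟩⟩
  loopless := ⟨fun _ h ↦ h.1 rfl⟩

instance (v : V) : DecidableRel (linkGraph H v).Adj :=
  fun x y ↦ inferInstanceAs (Decidable (x ≠ y ∧ {v, x, y} ∈ H))

lemma card_filter_mem_le_card_edgeFinset_linkGraph [Fintype V]
    (hH : (H : Set (Finset V)).Sized 3) (v : V) :
    #{e ∈ H | v ∈ e} ≤ #(linkGraph H v).edgeFinset := by
  refine (card_le_card fun e he ↦ ?_).trans
    (card_image_le (s := (linkGraph H v).edgeFinset) (f := fun p ↦ insert v p.toFinset))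
  obtain ⟨heH, hve⟩ := mem_filter.1 he
  have hpair : #(e.erase v) = 2 := by rw [card_erase_of_mem hve, hH heH]
  obtain ⟨x, y, hxy, hexy⟩ := card_eq_two.1 hpair
  have he_eq : {v, x, y} = e := by rw [← hexy, insert_erase hve]
  refine mem_image.2 ⟨s(x, y), ?_, by simpa [Sym2.toFinset_mk_eq] using he_eq⟩
  exact SimpleGraph.mem_edgeFinset.2 ⟨hxy, he_eq ▸ heH⟩

/-- The triple `(x, y, z)` connects the single pair `(a, b)`. That `x`, `y`, `z` avoid `a` and `b`
is not included: in a system of triples they have to avoid all the pairs at once. -/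
structure IsConnectingTriple (H : Finset (Finset V)) (a b x y z : V) : Prop where
  ne_xy : x ≠ y
  ne_yz : y ≠ z
  ne_xz : x ≠ z
  left_mem : {a, x, y} ∈ H
  right_mem : {y, z, b} ∈ H

lemma exists_isConnectingTriple_disjoint [Fintype V] (hH : (H : Set (Finset V)).Sized 3)
    {U : Finset V} {a b : V}
    (hdeg : ∀ v ∈ ({a, b} : Finset V),
      Fintype.card V ^ 2 + 8 * Fintype.card V + 8 * (#U * (Fintype.card V - 1)) <
        8 * #{e ∈ H | v ∈ e}) :
    ∃ x y z, IsConnectingTriple H a b x y z ∧ Disjoint {x, y, z} U := by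
  have hedges : ∀ v ∈ ({a, b} : Finset V),
      Fintype.card (Uᶜ : Finset V) ^ 2 + 8 * Fintype.card (Uᶜ : Finset V) <
        8 * #((linkGraph H v).induce ((Uᶜ : Finset V) : Set V)).edgeFinset := by
    intro v hv
    have hle : Fintype.card (Uᶜ : Finset V) ≤ Fintype.card V := Fintype.card_subtype_le _
    have hsq := Nat.pow_le_pow_left hle 2
    have hlink := card_filter_mem_le_card_edgeFinset_linkGraph hH v
    have hinduce := card_edgeFinset_le_card_edgeFinset_induce_compl_add (linkGraph H v) U
    have := hdeg v hv
    omega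
  obtain ⟨⟨x, hx⟩, ⟨y, hy⟩, ⟨z, hz⟩, ⟨hxy, hleft⟩, ⟨hyz, hright⟩, hxz⟩ :=
    exists_adj_adj_ne_of_lt_card_edgeFinset _ _ (hedges a (by simp)) (hedges b (by simp))
  refine ⟨x, y, z, ⟨hxy, hyz, fun h ↦ hxz (Subtype.ext h), hleft, ?_⟩, ?_⟩
  · have hrotate : ({y, z, b} : Finset V) = {b, y, z} := by grind
    rwa [hrotate]
  · simpa only [disjoint_insert_left, disjoint_singleton_left] using
      ⟨mem_compl.1 hx, mem_compl.1 hy, mem_compl.1 hz⟩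

end Link

lemma exists_mem_pairwise_disjoint_of_card_le {ι α : Type*} [Fintype ι] {k : ℕ}
    {F : ι → Set (Finset α)} (hF : ∀ i, ∀ s ∈ F i, #s ≤ k)
    (h : ∀ i (U : Finset α), #U + k ≤ Fintype.card ι * k → ∃ s ∈ F i, Disjoint s U) :
    ∃ s : ι → Finset α, (∀ i, s i ∈ F i) ∧ Pairwise (Function.onFun Disjoint s) := by
  classical
  suffices greedy : ∀ I : Finset ι, ∃ s : ι → Finset α,
      (∀ i ∈ I, s i ∈ F i) ∧ (I : Set ι).PairwiseDisjoint s by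
    obtain ⟨s, hs, hdisj⟩ := greedy univ
    refine ⟨s, fun i ↦ hs i (mem_univ i), ?_⟩
    simpa [Set.PairwiseDisjoint, Set.pairwise_univ] using hdisj
  intro I
  induction I using Finset.induction_on with
  | empty => exact ⟨fun _ ↦ ∅, by simp⟩
  | insert j I hj ih =>
    obtain ⟨s, hs, hdisj⟩ := ih
    have hused : #(I.biUnion s) + k ≤ Fintype.card ι * k := by
      calc #(I.biUnion s) + k ≤ #I * k + k := by
            gcongr
            exact card_biUnion_le_card_mul I s k fun i hi ↦ hF i _ (hs i hi)
        _ = #(insert j I) * k := by rw [card_insert_of_notMem hj, add_one_mul]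
        _ ≤ Fintype.card ι * k := by gcongr; exact card_le_univ _
    obtain ⟨t, ht, htdisj⟩ := h j _ hused
    rw [disjoint_biUnion_right] at htdisj
    have hupdate : ∀ i ∈ I, Function.update s j t i = s i := fun i hi ↦
      Function.update_of_ne (ne_of_mem_of_not_mem hi hj) t s
    refine ⟨Function.update s j t, ?_, ?_⟩
    · simpa +contextual [forall_mem_insert, hupdate, ht] using hs
    · rw [coe_insert, Set.pairwiseDisjoint_insert_of_notMem (mod_cast hj)]
      refine ⟨fun i hi i' hi' hne ↦ ?_, fun i hi ↦ ?_⟩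
      · simpa only [Function.onFun, hupdate i hi, hupdate i' hi'] using hdisj hi hi' hne
      · simpa only [Function.update_self, hupdate i hi] using htdisj i hi

lemma injective_of_pairwise_disjoint_range {ι κ α : Type*} {f : ι → κ → α}
    (hf : ∀ i, Function.Injective (f i))
    (hdisj : Pairwise (Function.onFun Disjoint fun i ↦ Set.range (f i))) :
    Function.Injective fun p : ι × κ ↦ f p.1 p.2 := by
  rintro ⟨i, p⟩ ⟨j, q⟩ (h : f i p = f j q)
  obtain rfl : i = j := by_contra fun hij ↦
    Set.disjoint_left.1 (hdisj hij) ⟨p, rfl⟩ ⟨q, h.symm⟩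
  rw [hf i h]

lemma Connects.of_isConnectingTriple {V : Type} [DecidableEq V] {H : Finset (Finset V)} {m : ℕ}
    {a b x y z : Fin m → V}
    (hpairs : Function.Injective (fun p : Fin m × Fin 2 => ![a p.1, b p.1] p.2))
    (htriple : ∀ i, IsConnectingTriple H (a i) (b i) (x i) (y i) (z i))
    (hpair_triple : ∀ i j, Disjoint {x i, y i, z i} ({a j, b j} : Finset V))
    (hdisj : Pairwise (Function.onFun Disjoint fun i ↦ ({x i, y i, z i} : Finset V))) :
    Connects H m a b x y z := by
  refine ⟨?_, fun i ↦ ⟨(htriple i).left_mem, (htriple i).right_mem⟩⟩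
  have hpairs_disj : ∀ i j, i ≠ j → Disjoint ({a i, b i} : Finset V) {a j, b j} := by
    intro i j hij
    have := hpairs.ne (a₁ := (i, 0)) (a₂ := (j, 0)) (by simp [hij])
    have := hpairs.ne (a₁ := (i, 0)) (a₂ := (j, 1)) (by simp)
    have := hpairs.ne (a₁ := (i, 1)) (a₂ := (j, 0)) (by simp)
    have := hpairs.ne (a₁ := (i, 1)) (a₂ := (j, 1)) (by simp [hij])
    simp_all [eq_comm]
  apply injective_of_pairwise_disjoint_range (f := fun i ↦ ![a i, b i, x i, y i, z i])
  · intro i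
    have hab : a i ≠ b i := fun h ↦ by simpa using @hpairs (i, 0) (i, 1) h
    have := hpair_triple i i
    have := (htriple i).ne_xy
    have := (htriple i).ne_yz
    have := (htriple i).ne_xz
    intro p q
    fin_cases p <;> fin_cases q <;> simp_all [eq_comm]
  · intro i j hij
    have hrange : ∀ i, Set.range ![a i, b i, x i, y i, z i] =
        (({a i, b i} ∪ {x i, y i, z i} : Finset V) : Set V) := by
      intro i
      ext v
      simp only [Matrix.range_cons, Matrix.range_empty, Set.mem_union, Set.mem_singleton_iff,
        coe_union, coe_insert, coe_singleton, Set.mem_insert_iff, Set.mem_empty_iff_false]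
      tauto
    simp only [Function.onFun, hrange, disjoint_coe, disjoint_union_left, disjoint_union_right]
    exact ⟨⟨hpairs_disj i j hij, hpair_triple i j⟩, (hpair_triple j i).symm, hdisj hij⟩

lemma exists_connects_of_forall_exists_disjoint {V : Type} [DecidableEq V] {H : Finset (Finset V)}
    {m : ℕ} {a b : Fin m → V}
    (hpairs : Function.Injective (fun p : Fin m × Fin 2 => ![a p.1, b p.1] p.2))
    (h : ∀ i (U : Finset V), #U + 3 ≤ 5 * m →
      ∃ x y z, IsConnectingTriple H (a i) (b i) x y z ∧ Disjoint {x, y, z} U) :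
    ∃ x y z : Fin m → V, Connects H m a b x y z := by
  let P := univ.image a ∪ univ.image b
  have hPcard : #P ≤ m + m := (card_union_le _ _).trans <|
    add_le_add (card_image_le.trans_eq (card_fin m)) (card_image_le.trans_eq (card_fin m))
  have hpair_subset (i : Fin m) : {a i, b i} ⊆ P := by simp [insert_subset_iff, P]
  obtain ⟨s, hs, hdisj⟩ := exists_mem_pairwise_disjoint_of_card_le (k := 3)
    (F := fun i ↦ {s | ∃ x y z,
      IsConnectingTriple H (a i) (b i) x y z ∧ Disjoint {x, y, z} P ∧ {x, y, z} = s})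
    (by rintro i _ ⟨x, y, z, -, -, rfl⟩; exact card_le_three)
    (fun i U hU ↦ by
      have hcard_union := card_union_le P U
      rw [Fintype.card_fin] at hU
      obtain ⟨x, y, z, htriple, hxyz⟩ := h i (P ∪ U) (by omega)
      rw [disjoint_union_right] at hxyz
      exact ⟨_, ⟨x, y, z, htriple, hxyz.1, rfl⟩, hxyz.2⟩)
  choose x y z htriple hP hs_eq using hs
  obtain rfl : (fun i ↦ {x i, y i, z i}) = s := funext hs_eq
  exact ⟨x, y, z, .of_isConnectingTriple hpairs htriple
    (fun i j ↦ (hP i).mono_right (hpair_subset j)) hdisj⟩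

lemma sq_add_lt_eight_mul_of_le_degree {γ : ℝ} {n d u : ℕ} (hγ : 0 ≤ γ) (hn : 2 ≤ n)
    (hd : (1 / 4 + γ) * (n.choose 2 : ℝ) ≤ d) (hu : u + 3 ≤ 5 * (γ * n / 12)) :
    n ^ 2 + 8 * n + 8 * (u * (n - 1)) < 8 * d := by
  have hn' : (2 : ℝ) ≤ n := mod_cast hn
  have hused : (u : ℝ) * (n - 1) ≤ (5 * (γ * n / 12) - 3) * (n - 1) := by
    gcongr <;> linarith
  have hγn : 0 ≤ γ * n * (n - 1) := by
    have : (0 : ℝ) ≤ n - 1 := by linarith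
    positivity
  rw [Nat.cast_choose_two] at hd
  have hreal : (n : ℝ) ^ 2 + 8 * n + 8 * (u * (n - 1)) < 8 * d := by linarith
  rw [← Nat.cast_pred (by omega)] at hreal
  exact_mod_cast hreal

theorem connecting_lemma (γ : ℝ) (hγ : 0 < γ) (m : ℕ) (hm : 1 ≤ m)
    (V : Type) [Fintype V] [DecidableEq V] (H : Finset (Finset V)) (n : ℕ)
    (hcard : Fintype.card V = n) (huniform : ∀ e ∈ H, e.card = 3)
    (hdeg : ∀ v : V, (1 / 4 + γ) * (n.choose 2 : ℝ) ≤
      ((H.filter (fun e => v ∈ e)).card : ℝ))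
    (hmn : (m : ℝ) ≤ γ * n / 12)
    (a b : Fin m → V)
    (hpairs : Function.Injective (fun p : Fin m × Fin 2 => ![a p.1, b p.1] p.2)) :
    ∃ x y z : Fin m → V, Connects H m a b x y z := by
  have hn : 2 ≤ n := by
    have := Fintype.card_le_of_injective _ hpairs
    simp only [Fintype.card_prod, Fintype.card_fin] at this
    omega
  refine exists_connects_of_forall_exists_disjoint hpairs fun i U hU ↦
    exists_isConnectingTriple_disjoint huniform fun v _ ↦ ?_
  have hused : (#U : ℝ) + 3 ≤ 5 * m := mod_cast hU
  rw [hcard]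
  exact sq_add_lt_eight_mul_of_le_degree hγ.le hn (hdeg v) (by linarith)
end
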